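/- Fix R₁ > 0 and R₂ ∈ ℝ with |R₂| < R₁, and set D := {(t,x) ∈ ℝ^{1+3} : t > 0, (r−t−R₂)(r+t+R₂) > R₁² − R₂²}. Fix constants 0 < γ ≤ 1 and C₁, C₂ > 0 and γ' > 0. Suppose the continuous functions V_J^{I,α} and W_J^I (I,J = 1,…,N; α = 0,…,3) are defined on D and satisfy Σ_{I,J,α} |V_J^{I,α}(t,x)| ≤ C₁(1+t+r)^{−1} and Σ_{I,J} |Σ_α V_J^{I,α}(t,x) ω̂_α| + Σ_{I,J} |W_J^I(t,x)| ≤ C₁(1+t+r)^{−1−γ} for all (t,x) ∈ D, where ω̂ = (−1, x/r). Suppose φ = (φ^I) ∈ C²(D; ℝ^N) solves □̃φ = 0 in D, φ(t,x) = 0 whenever r − t ≥ R₁, and |φ| + |∂φ| ≤ C₂(1+t+r)^{−3/2−γ'} and |(∂_t+∂_r)φ| ≤ C₂(1+t+r)^{−5/2−γ'} on D (|∂φ| denoting the sum of absolute values of all first-order partial derivatives in t,x). Then φ ≡ 0 on D. -/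

import Mathlib

noncomputable section
open MeasureTheory Real Set Filter Topology

namespace UCP

/-- Spacetime `ℝ^{1+3}`: a point is `(t, x)` with `x ∈ ℝ³`. -/
abbrev Spc : Type := ℝ × EuclideanSpace ℝ (Fin 3)

/-- Coordinate directions `e_α`, `α = 0,1,2,3` (`e_0` is the time direction). -/
def eVec (α : Fin 4) : Spc :=
  Fin.cases ((1 : ℝ), (0 : EuclideanSpace ℝ (Fin 3)))
    (fun i => ((0 : ℝ), EuclideanSpace.single i (1 : ℝ))) α

/-- The partial derivative `∂_α u`. -/
def pd (α : Fin 4) (u : Spc → ℝ) (p : Spc) : ℝ := fderiv ℝ u p (eVec α)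

/-- `∂_t u`. -/
def dt (u : Spc → ℝ) : Spc → ℝ := pd 0 u

/-- `∂_i u`, `i = 1,2,3`. -/
def dxi (i : Fin 3) (u : Spc → ℝ) : Spc → ℝ := pd i.succ u

/-- The d'Alembertian `□u = -∂_t² u + Δ_x u`. -/
def box (u : Spc → ℝ) (p : Spc) : ℝ :=
  - dt (dt u) p + ∑ i : Fin 3, dxi i (dxi i u) p

/-- Signs of the Minkowski metric `diag(-1,1,1,1)`, so that `∂^α = eta α • ∂_α`. -/
def eta (α : Fin 4) : ℝ := if α = 0 then -1 else 1

/-- `r = |x|`. -/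
def rr (p : Spc) : ℝ := ‖p.2‖

/-- The radial derivative `∂_r u = Σ_i (x_i/r) ∂_i u`. -/
def dr (u : Spc → ℝ) (p : Spc) : ℝ := ∑ i : Fin 3, (p.2 i / rr p) * dxi i u p

/-- `ω̂ = (-1, x/r)` as a `Fin 4`-indexed family. -/
def hatom (p : Spc) (α : Fin 4) : ℝ := Fin.cases (-1 : ℝ) (fun i => p.2 i / rr p) α

/-- The operator `(□̃φ)^I = □φ^I + Σ_{J,α} V_J^{I,α} ∂_α φ^J + Σ_J W_J^I φ^J`. -/
def boxT {N : ℕ} (V : Fin N → Fin N → Fin 4 → Spc → ℝ)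
    (W : Fin N → Fin N → Spc → ℝ) (φ : Fin N → Spc → ℝ) (I : Fin N) (p : Spc) : ℝ :=
  box (φ I) p + (∑ J : Fin N, ∑ α : Fin 4, V I J α p * pd α (φ J) p)
    + ∑ J : Fin N, W I J p * φ J p

/-- The region `𝒟_{R₁,R₂} = {t > 0, (r-t-R₂)(r+t+R₂) > R₁² - R₂²}`. -/
def DD (R₁ R₂ : ℝ) : Set Spc :=
  {p | 0 < p.1 ∧ R₁ ^ 2 - R₂ ^ 2 < (rr p - p.1 - R₂) * (rr p + p.1 + R₂)}

section PartA
lemma lemA_one (α : Fin 4) (P : Spc → ℝ) (hP : ContDiff ℝ 1 P) (hc : HasCompactSupport P) :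
    Integrable (pd α P) ∧ ∫ p, pd α P p = 0 := by
  have h1 : Continuous (pd α P) := by
    unfold pd
    exact (hP.continuous_fderiv (by norm_num)).clm_apply continuous_const
  have h2 : HasCompactSupport (pd α P) := by
    have := hc.fderiv_apply (𝕜 := ℝ) (eVec α)
    exact this
  have hi : Integrable (pd α P) := h1.integrable_of_hasCompactSupport h2
  refine ⟨hi, ?_⟩
  have hi' : Integrable (fun p => (fderiv ℝ P p) (eVec α)) := hi
  haveI : (volume : Measure Spc).IsAddHaarMeasure := by
    rw [Measure.volume_eq_prod]; infer_instance
  have h3 := integral_mul_fderiv_eq_neg_fderiv_mul_of_integrable (μ := (volume : Measure Spc))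
    (f := fun _ => (1:ℝ)) (g := P) (v := eVec α) (by simp) (by simpa using hi')
    (by simpa using hP.continuous.integrable_of_hasCompactSupport hc) (fun x _ => by fun_prop)
    (fun x _ => hP.differentiable (by norm_num) x)
  simpa [pd] using h3

lemma lemA (D K : Set Spc) (hD : IsOpen D) (hK : IsCompact K) (hKD : K ⊆ D)
    (P : Fin 4 → Spc → ℝ) (hP : ∀ α, ContDiffOn ℝ 1 (P α) D)
    (hz : ∀ α, ∀ p ∈ D, p ∉ K → P α p = 0) :
    IntegrableOn (fun p => ∑ α, pd α (P α) p) D ∧ ∫ p in D, ∑ α, pd α (P α) p = 0 := by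
  have key : ∀ α, IntegrableOn (pd α (P α)) D ∧ ∫ p in D, pd α (P α) p = 0 := by
    intro α
    set Q := D.indicator (P α) with hQ
    have hQK : ∀ p ∉ K, Q p = 0 := by
      intro p hp
      by_cases h : p ∈ D
      · rw [hQ, indicator_of_mem h, hz α p h hp]
      · rw [hQ, indicator_of_notMem h]
    have hQD : ∀ p ∈ D, Q =ᶠ[𝓝 p] P α := by
      intro p hp
      filter_upwards [hD.mem_nhds hp] with x hx
      rw [hQ, indicator_of_mem hx]
    have hQ0 : ∀ p ∉ K, Q =ᶠ[𝓝 p] fun _ => 0 := by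
      intro p hp
      filter_upwards [hK.isClosed.isOpen_compl.mem_nhds hp] with x hx
      exact hQK x hx
    have hQ1 : ContDiff ℝ 1 Q := by
      rw [contDiff_iff_contDiffAt]
      intro p
      by_cases h : p ∈ D
      · exact ((hP α).contDiffAt (hD.mem_nhds h)).congr_of_eventuallyEq (hQD p h)
      · exact contDiffAt_const.congr_of_eventuallyEq (hQ0 p (fun h' => h (hKD h')))
    have hQc : HasCompactSupport Q := HasCompactSupport.intro hK hQK
    obtain ⟨h1, h2⟩ := lemA_one α Q hQ1 hQc
    have e1 : ∀ p ∈ D, pd α Q p = pd α (P α) p := by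
      intro p hp; unfold pd; rw [(hQD p hp).fderiv_eq]
    have e2 : ∀ p ∉ D, pd α Q p = 0 := by
      intro p hp; unfold pd; rw [(hQ0 p (fun h' => hp (hKD h'))).fderiv_eq]; simp
    refine ⟨(h1.integrableOn (s := D)).congr_fun e1 hD.measurableSet, ?_⟩
    rw [← setIntegral_congr_fun hD.measurableSet e1, setIntegral_eq_integral_of_forall_compl_eq_zero e2, h2]
  refine ⟨?_, ?_⟩
  · exact integrable_finsetSum _ (fun α _ => (key α).1)
  · rw [integral_finsetSum _ (fun α _ => (key α).1)]
    exact Finset.sum_eq_zero (fun α _ => (key α).2)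
end PartA

section PartB
def HP (α : Fin 4) (u : Spc → ℝ) (p : Spc) (c : ℝ) : Prop :=
  DifferentiableAt ℝ u p ∧ pd α u p = c

namespace HP
variable {α : Fin 4} {u v : Spc → ℝ} {p : Spc} {a b : ℝ}

lemma of_diff (h : DifferentiableAt ℝ u p) : HP α u p (pd α u p) := ⟨h, rfl⟩

lemma const (k : ℝ) : HP α (fun _ => k) p 0 := ⟨by fun_prop, by simp [pd]⟩

lemma add (hu : HP α u p a) (hv : HP α v p b) : HP α (fun p => u p + v p) p (a + b) := by
  refine ⟨hu.1.fun_add hv.1, ?_⟩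
  rw [← hu.2, ← hv.2]; unfold pd; rw [fderiv_fun_add hu.1 hv.1]; rfl

lemma sub (hu : HP α u p a) (hv : HP α v p b) : HP α (fun p => u p - v p) p (a - b) := by
  refine ⟨hu.1.fun_sub hv.1, ?_⟩
  rw [← hu.2, ← hv.2]; unfold pd; rw [fderiv_fun_sub hu.1 hv.1]; rfl

lemma neg (hu : HP α u p a) : HP α (fun p => - u p) p (- a) := by
  refine ⟨hu.1.fun_neg, ?_⟩
  rw [← hu.2]; unfold pd; rw [fderiv_fun_neg]; rfl

lemma mul (hu : HP α u p a) (hv : HP α v p b) :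
    HP α (fun p => u p * v p) p (a * v p + u p * b) := by
  refine ⟨hu.1.fun_mul hv.1, ?_⟩
  rw [← hu.2, ← hv.2]; unfold pd; rw [fderiv_fun_mul hu.1 hv.1]
  simp; ring

lemma comp {g : ℝ → ℝ} {g' : ℝ} (hg : HasDerivAt g g' (u p)) (hu : HP α u p a) :
    HP α (fun p => g (u p)) p (g' * a) := by
  have h := hg.comp_hasFDerivAt p hu.1.hasFDerivAt
  refine ⟨h.differentiableAt, ?_⟩
  rw [← hu.2]; unfold pd
  have := h.fderiv
  simp only [Function.comp_def] at this
  rw [this]; simp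

lemma sum {u : Fin 3 → Spc → ℝ} {c : Fin 3 → ℝ} (h : ∀ i, HP α (u i) p (c i)) :
    HP α (fun p => ∑ i, u i p) p (∑ i, c i) := by
  simp only [Fin.sum_univ_three]
  exact ((h 0).add (h 1)).add (h 2)

lemma congr (hu : HP α u p a) (h : a = b) : HP α u p b := h ▸ hu

lemma pow2 (hu : HP α u p a) : HP α (fun p => u p ^ 2) p (2 * u p * a) := by
  have := hu.mul hu
  simp only [← sq] at this
  exact this.congr (by ring)
end HP

lemma pd_contDiffAt {α : Fin 4} {w : Spc → ℝ} {p : Spc} (hw : ContDiffAt ℝ 2 w p) :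
    ContDiffAt ℝ 1 (pd α w) p := by
  have h := hw.fderiv_right (m := 1) (by norm_num)
  exact h.clm_apply contDiffAt_const

lemma pd_HP {α β : Fin 4} {w : Spc → ℝ} {p : Spc} (hw : ContDiffAt ℝ 2 w p) :
    HP β (pd α w) p (pd β (pd α w) p) :=
  HP.of_diff ((pd_contDiffAt hw).differentiableAt (by norm_num))

lemma pd_pd_eq {α : Fin 4} (β : Fin 4) {w : Spc → ℝ} {p : Spc} (hw : ContDiffAt ℝ 2 w p) :
    pd β (pd α w) p = fderiv ℝ (fderiv ℝ w) p (eVec β) (eVec α) := by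
  have h : DifferentiableAt ℝ (fderiv ℝ w) p :=
    (hw.fderiv_right (m := 1) (by norm_num)).differentiableAt (by norm_num)
  have : pd α w = fun p => fderiv ℝ w p (eVec α) := rfl
  rw [this]; unfold pd
  rw [fderiv_clm_apply h (by fun_prop)]
  simp

lemma pd_comm (α β : Fin 4) {w : Spc → ℝ} {p : Spc} (hw : ContDiffAt ℝ 2 w p) :
    pd β (pd α w) p = pd α (pd β w) p := by
  rw [pd_pd_eq _ hw, pd_pd_eq _ hw]
  have := hw.isSymmSndFDerivAt (by simp)
  exact this _ _

/-- `X = F_i p_i - f q`. -/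
def Xop (A : Fin 3 → Spc → ℝ) (f : Spc → ℝ) (w : Spc → ℝ) (p : Spc) : ℝ :=
  (∑ i, A i p * pd i.succ w p) - f p * pd 0 w p

def Lag (w : Spc → ℝ) (p : Spc) : ℝ := (∑ i : Fin 3, pd i.succ w p ^ 2) - pd 0 w p ^ 2

def Jc (A : Fin 3 → Spc → ℝ) (f h B w : Spc → ℝ) (α : Fin 4) : Spc → ℝ :=
  Fin.cases
    (fun p => pd 0 w p * Xop A f w p - (1/2) * (f p * Lag w p) - h p * (w p * pd 0 w p)
      + (1/2) * (B p * (f p * w p ^ 2)))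
    (fun i p => - (pd i.succ w p * Xop A f w p) + (1/2) * (A i p * Lag w p)
      + h p * (w p * pd i.succ w p) - (1/2) * (B p * (A i p * w p ^ 2))) α

lemma div_id {A : Fin 3 → Spc → ℝ} {f h B w : Spc → ℝ} {p : Spc} (hw : ContDiffAt ℝ 2 w p)
    {dA : Fin 3 → Fin 4 → ℝ} {df dh dB : Fin 4 → ℝ}
    (hA : ∀ i α, HP α (A i) p (dA i α)) (hf : ∀ α, HP α f p (df α))
    (hh : ∀ α, HP α h p (dh α)) (hB : ∀ α, HP α B p (dB α))
    (hdA : ∀ i j : Fin 3, dA i j.succ = dA j i.succ) (hdf : ∀ i : Fin 3, dA i 0 = df i.succ) :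
    ∑ α, pd α (Jc A f h B w α) p =
      (- Xop A f w p + h p * w p) * box w p
      - ((∑ i : Fin 3, ∑ j : Fin 3, dA i j.succ * pd i.succ w p * pd j.succ w p)
        - 2 * (∑ i : Fin 3, df i.succ * pd i.succ w p) * pd 0 w p + df 0 * pd 0 w p ^ 2)
      + (1/2) * ((∑ i : Fin 3, dA i i.succ) - df 0) * Lag w p
      + w p * ((∑ i : Fin 3, dh i.succ * pd i.succ w p) - dh 0 * pd 0 w p) + h p * Lag w p
      - (1/2) * ((∑ i : Fin 3, dB i.succ * A i p) - dB 0 * f p) * w p ^ 2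
      - (1/2) * B p * ((∑ i : Fin 3, dA i i.succ) - df 0) * w p ^ 2
      - B p * w p * Xop A f w p := by
  have hw1 : ∀ α, HP α w p (pd α w p) := fun α => HP.of_diff (hw.differentiableAt (by norm_num))
  have hX : ∀ α, HP α (Xop A f w) p _ := fun α =>
    (HP.sum (fun i => (hA i α).mul (pd_HP (α := i.succ) hw))).sub ((hf α).mul (pd_HP (α := 0) hw))
  have hL : ∀ α, HP α (Lag w) p _ := fun α =>
    (HP.sum (fun i => (pd_HP (α := i.succ) hw).pow2)).sub ((pd_HP (α := 0) hw).pow2)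
  have h0 : HP 0 (Jc A f h B w 0) p _ :=
    ((((pd_HP (α := 0) hw).mul (hX 0)).sub ((HP.const (1/2)).mul ((hf 0).mul (hL 0)))).sub
      ((hh 0).mul ((hw1 0).mul (pd_HP (α := 0) hw)))).add
      ((HP.const (1/2)).mul ((hB 0).mul ((hf 0).mul (hw1 0).pow2)))
  have hi : ∀ i : Fin 3, HP i.succ (Jc A f h B w i.succ) p _ := fun i =>
    ((((pd_HP (α := i.succ) hw).mul (hX i.succ)).neg.add
      ((HP.const (1/2)).mul ((hA i i.succ).mul (hL i.succ)))).add
      ((hh i.succ).mul ((hw1 i.succ).mul (pd_HP (α := i.succ) hw)))).sub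
      ((HP.const (1/2)).mul ((hB i.succ).mul ((hA i i.succ).mul (hw1 i.succ).pow2)))
  rw [Fin.sum_univ_succ, h0.2, Finset.sum_congr rfl (fun i _ => (hi i).2)]
  simp only [Xop, Lag, box, dt, dxi, Fin.sum_univ_three, hdf]
  rw [hdA 1 0, hdA 2 0, hdA 2 1, pd_comm 0 (Fin.succ 0) hw, pd_comm 0 (Fin.succ 1) hw,
    pd_comm 0 (Fin.succ 2) hw, pd_comm (Fin.succ 0) (Fin.succ 1) hw,
    pd_comm (Fin.succ 0) (Fin.succ 2) hw, pd_comm (Fin.succ 1) (Fin.succ 2) hw]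
  ring
end PartB

section PartC
structure Par where
  σ : ℝ
  d : ℝ
  ε : ℝ
  γ : ℝ
  c : ℝ
  μ : ℝ
  k1 : ℝ
  k2 : ℝ

def rho (p : Spc) : ℝ := ∑ i : Fin 3, p.2 i ^ 2

namespace Par
variable (P : Par)
def T (p : Spc) : ℝ := p.1 + P.σ
def a (p : Spc) : ℝ := (rho p - P.T p ^ 2 - P.d) * (2 * P.T p)⁻¹
def y (p : Spc) : ℝ := P.ε * P.T p ^ (-1 - P.γ)
def F (p : Spc) : ℝ := P.a p - P.ε / P.γ * P.T p ^ (-P.γ)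
def A (i : Fin 3) (p : Spc) : ℝ := p.2 i * (P.T p)⁻¹
def f (p : Spc) : ℝ := -1 - P.a p * (P.T p)⁻¹ + P.y p
def n (p : Spc) : ℝ := rho p * ((P.T p)⁻¹) ^ 2 - P.f p ^ 2
def h (p : Spc) : ℝ := (P.a p - P.c) * ((P.T p)⁻¹) ^ 2 - P.y p * (P.T p)⁻¹
def e (p : Spc) : ℝ := exp (P.μ * P.F p)
def yt (p : Spc) : ℝ := -(1 + P.γ) * P.y p / P.T p
def ft (p : Spc) : ℝ := 1 / P.T p + 2 * P.a p / P.T p ^ 2 + P.yt p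
def Db (p : Spc) : ℝ := 3 / P.T p - P.ft p
def Xn (p : Spc) : ℝ := 2 * rho p * (1 + P.f p) / P.T p ^ 3 + 2 * P.f p * rho p / P.T p ^ 3
  + 2 * P.f p ^ 2 * P.ft p
def ρ₁ (p : Spc) : ℝ := 2 * (P.a p - P.c) / P.T p ^ 3 - (1 + P.γ) * P.y p / P.T p ^ 2
def B (l : ℝ) (p : Spc) : ℝ := l ^ 2 * (P.e p ^ 2 * P.n p)
def X (w : Spc → ℝ) (p : Spc) : ℝ := Xop P.A P.f w p
def K (w : Spc → ℝ) (p : Spc) : ℝ := - P.X w p + P.h p * w p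
def Err (l : ℝ) (w : Spc → ℝ) (p : Spc) : ℝ :=
  box w p + 2 / P.T p * pd 0 w p - 2 * l * P.e p * P.X w p + l ^ 2 * P.e p ^ 2 * P.n p * w p
def J (l : ℝ) (w : Spc → ℝ) : Fin 4 → Spc → ℝ := Jc P.A P.f P.h (P.B l) w
def Bulk (l : ℝ) (w : Spc → ℝ) (p : Spc) : ℝ :=
  (1/2) * (1 - P.γ) * (P.y p / P.T p) * ((∑ i : Fin 3, pd i.succ w p ^ 2) + pd 0 w p ^ 2)
  + P.c / P.T p ^ 2 * ((∑ i : Fin 3, pd i.succ w p ^ 2) - pd 0 w p ^ 2)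
  - w p * (P.X w p / P.T p ^ 2 + P.ρ₁ p * pd 0 w p) + 2 / P.T p * pd 0 w p * P.h p * w p
  + 2 * l * P.e p * P.X w p ^ 2 - 2 * l * P.e p * P.h p * w p * P.X w p
  + (1/2) * l ^ 2 * P.e p ^ 2 * (P.n p * P.Db p + P.Xn p + 2 * P.μ * P.n p ^ 2
    + 2 * P.n p * P.h p) * w p ^ 2

def dF (α : Fin 4) (p : Spc) : ℝ := Fin.cases (P.f p) (fun i => P.A i p) α
def dA (i : Fin 3) (α : Fin 4) (p : Spc) : ℝ :=
  Fin.cases (- p.2 i / P.T p ^ 2) (fun j => if i = j then 1 / P.T p else 0) α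
def df (α : Fin 4) (p : Spc) : ℝ := Fin.cases (P.ft p) (fun i => - p.2 i / P.T p ^ 2) α
end Par

lemma eVec_zero_fst : (eVec 0).1 = 1 := rfl
lemma eVec_succ_fst (i : Fin 3) : (eVec i.succ).1 = 0 := rfl
lemma eVec_zero_snd (i : Fin 3) : (eVec 0).2 i = 0 := rfl
lemma eVec_succ_snd (i j : Fin 3) : (eVec i.succ).2 j = if j = i then 1 else 0 := by
  show (EuclideanSpace.single i (1:ℝ)) j = _
  simp

lemma HP_t (α : Fin 4) (p : Spc) : HP α (fun p => p.1) p (eVec α).1 := by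
  refine ⟨differentiableAt_fst, ?_⟩
  unfold pd
  rw [fderiv_fst]; rfl

lemma HP_x (α : Fin 4) (i : Fin 3) (p : Spc) : HP α (fun p => p.2 i) p ((eVec α).2 i) := by
  have h : HasFDerivAt (fun p : Spc => p.2 i)
    ((EuclideanSpace.proj i : EuclideanSpace ℝ (Fin 3) →L[ℝ] ℝ).comp
      (ContinuousLinearMap.snd ℝ ℝ (EuclideanSpace ℝ (Fin 3)))) p :=
    ((EuclideanSpace.proj i : EuclideanSpace ℝ (Fin 3) →L[ℝ] ℝ).comp
      (ContinuousLinearMap.snd ℝ ℝ (EuclideanSpace ℝ (Fin 3)))).hasFDerivAt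
  refine ⟨h.differentiableAt, ?_⟩
  unfold pd
  rw [h.fderiv]; rfl

lemma HP_rho (α : Fin 4) (p : Spc) : HP α rho p (∑ i : Fin 3, 2 * p.2 i * (eVec α).2 i) :=
  HP.sum (fun i => (HP_x α i p).pow2)

lemma rho_eq (p : Spc) : rho p = rr p ^ 2 := by
  unfold rho rr
  rw [EuclideanSpace.norm_sq_eq]; simp

namespace Par
variable (P : Par) {p : Spc}

lemma HP_T (α : Fin 4) : HP α P.T p (eVec α).1 :=
  ((HP_t α p).add (HP.const P.σ)).congr (by ring)

lemma HP_inv {α : Fin 4} {u : Spc → ℝ} {c : ℝ} (hu : HP α u p c) (h0 : u p ≠ 0) :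
    HP α (fun p => (u p)⁻¹) p (- c / u p ^ 2) :=
  (hu.comp (hasDerivAt_inv h0)).congr (by ring)

lemma HP_a (α : Fin 4) (hT : 0 < P.T p) : HP α P.a p
    (Fin.cases (P.f p - P.y p) (fun i => P.A i p) α) := by
  have h0 : 2 * P.T p ≠ 0 := by positivity
  have := (((HP_rho α p).sub (P.HP_T (p := p) α).pow2).sub (HP.const P.d)).mul
    (HP_inv ((HP.const 2).mul (P.HP_T (p := p) α)) h0)
  refine HP.congr this ?_
  refine Fin.cases ?_ (fun i => ?_) α
  · simp only [Fin.cases_zero, eVec_zero_snd, eVec_zero_fst, f, a]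
    simp; field_simp; ring
  · simp only [Fin.cases_succ, eVec_succ_fst, eVec_succ_snd, A]
    simp; field_simp

lemma HP_Tpow (α : Fin 4) (s : ℝ) (hT : 0 < P.T p) :
    HP α (fun p => P.T p ^ s) p (s * P.T p ^ (s - 1) * (eVec α).1) :=
  (P.HP_T (p := p) α).comp (Real.hasDerivAt_rpow_const (Or.inl hT.ne'))

lemma HP_y (α : Fin 4) (hT : 0 < P.T p) : HP α P.y p (P.yt p * (eVec α).1) := by
  have := (HP.const P.ε).mul (P.HP_Tpow α (-1 - P.γ) hT)
  refine HP.congr this ?_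
  rw [Real.rpow_sub_one hT.ne']; unfold yt y; field_simp; ring

lemma HP_F (α : Fin 4) (hγ : P.γ ≠ 0) (hT : 0 < P.T p) : HP α P.F p (P.dF α p) := by
  have := (P.HP_a α hT).sub ((HP.const (P.ε / P.γ)).mul (P.HP_Tpow α (-P.γ) hT))
  refine HP.congr this ?_
  refine Fin.cases ?_ (fun i => ?_) α
  · simp only [Fin.cases_zero, eVec_zero_fst, dF]
    have : P.y p = P.ε * P.T p ^ (-P.γ - 1) := by
      unfold y; congr 2; ring
    rw [this]; field_simp; ring
  · simp only [Fin.cases_succ, eVec_succ_fst, dF]; ring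

lemma HP_A (i : Fin 3) (α : Fin 4) (hT : 0 < P.T p) : HP α (P.A i) p (P.dA i α p) := by
  refine HP.congr ((HP_x α i p).mul (HP_inv (P.HP_T α) hT.ne')) ?_
  refine Fin.cases ?_ (fun j => ?_) α
  · simp only [eVec_zero_snd, eVec_zero_fst, dA, Fin.cases_zero]; ring
  · simp only [eVec_succ_fst, eVec_succ_snd, dA, Fin.cases_succ]; split_ifs <;> ring

lemma HP_f (α : Fin 4) (hT : 0 < P.T p) : HP α P.f p (P.df α p) := by
  refine HP.congr (((HP.const (-1)).sub ((P.HP_a α hT).mul (HP_inv (P.HP_T α) hT.ne'))).add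
    (P.HP_y α hT)) ?_
  refine Fin.cases ?_ (fun j => ?_) α
  · simp only [eVec_zero_fst, df, Fin.cases_zero, ft, f]; field_simp; ring
  · simp only [eVec_succ_fst, df, Fin.cases_succ, A]; field_simp; ring

lemma HP_n (α : Fin 4) (hT : 0 < P.T p) : HP α P.n p
    (Fin.cases (-2 * rho p / P.T p ^ 3 - 2 * P.f p * P.ft p)
      (fun i => 2 * p.2 i / P.T p ^ 2 * (1 + P.f p)) α) := by
  refine HP.congr (((HP_rho α p).mul (HP_inv (P.HP_T α) hT.ne').pow2).sub (P.HP_f α hT).pow2) ?_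
  refine Fin.cases ?_ (fun j => ?_) α
  · simp only [eVec_zero_fst, df, Fin.cases_zero, eVec_zero_snd]; simp; field_simp
  · simp only [eVec_succ_fst, df, Fin.cases_succ, eVec_succ_snd]; simp; field_simp; ring

lemma HP_h (α : Fin 4) (hT : 0 < P.T p) : HP α P.h p
    (Fin.cases (P.f p / P.T p ^ 2 - P.ρ₁ p) (fun i => p.2 i / P.T p ^ 3) α) := by
  refine HP.congr ((((P.HP_a α hT).sub (HP.const P.c)).mul (HP_inv (P.HP_T α) hT.ne').pow2).sub
    ((P.HP_y α hT).mul (HP_inv (P.HP_T α) hT.ne'))) ?_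
  refine Fin.cases ?_ (fun j => ?_) α
  · simp only [eVec_zero_fst, Fin.cases_zero, ρ₁, yt]; field_simp; ring
  · simp only [eVec_succ_fst, Fin.cases_succ, A]; field_simp; ring

lemma HP_e (α : Fin 4) (hγ : P.γ ≠ 0) (hT : 0 < P.T p) :
    HP α P.e p (P.μ * P.e p * P.dF α p) := by
  refine HP.congr (((HP.const P.μ).mul (P.HP_F α hγ hT)).comp (Real.hasDerivAt_exp _)) ?_
  unfold e; ring

lemma HP_B (l : ℝ) (α : Fin 4) (hγ : P.γ ≠ 0) (hT : 0 < P.T p) : HP α (P.B l) p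
    (l ^ 2 * P.e p ^ 2 * (2 * P.μ * P.dF α p * P.n p +
    (Fin.cases (-2 * rho p / P.T p ^ 3 - 2 * P.f p * P.ft p)
      (fun i => 2 * p.2 i / P.T p ^ 2 * (1 + P.f p)) α))) := by
  refine HP.congr ((HP.const (l^2)).mul ((P.HP_e α hγ hT).pow2.mul (P.HP_n α hT))) ?_
  ring

lemma rho_eq' (hT : 0 < P.T p) : rho p = P.T p ^ 2 + 2 * P.T p * P.a p + P.d := by
  unfold a; field_simp; ring

lemma divJ (l : ℝ) {w : Spc → ℝ} (hγ : P.γ ≠ 0) (hT : 0 < P.T p) (hw : ContDiffAt ℝ 2 w p) :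
    ∑ α, pd α (P.J l w α) p = P.Err l w p * P.K w p - P.Bulk l w p := by
  have h := div_id hw (fun i α => P.HP_A i α hT) (fun α => P.HP_f α hT) (fun α => P.HP_h α hT)
    (fun α => P.HP_B l α hγ hT)
    (by intro i j; simp [dA, eq_comm])
    (by intro i; simp [dA, df])
  unfold J
  rw [h]
  have hX : P.X w p = (∑ i, p.2 i * pd i.succ w p) / P.T p - P.f p * pd 0 w p := by
    unfold X Xop A; rw [Finset.sum_div]; congr 1
    exact Finset.sum_congr rfl (fun i _ => by ring)
  have hX' : (∑ i, p.2 i * pd i.succ w p) * (P.T p)⁻¹ = (P.X w p + P.f p * pd 0 w p) := by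
    rw [hX]; field_simp; ring
  have hr : rho p = p.2 0 ^ 2 + p.2 1 ^ 2 + p.2 2 ^ 2 := by simp [rho, Fin.sum_univ_three]
  have hr' := P.rho_eq' hT
  simp only [Bulk, K, Err, B, Lag]
  have hXd : Xop P.A P.f w p = P.X w p := rfl
  rw [hXd]
  simp only [dF, df, dA, Fin.cases_zero, Fin.cases_succ, Fin.sum_univ_three] at hX' ⊢
  have e1 : (0:Fin 3) ≠ 1 := by decide
  have e2 : (0:Fin 3) ≠ 2 := by decide
  have e3 : (1:Fin 3) ≠ 2 := by decide
  simp only [if_true, e1, e2, e3, e1.symm, e2.symm, e3.symm, if_false]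
  simp only [Xn, A, Db]
  have hn : P.n p = rho p * ((P.T p)⁻¹) ^ 2 - P.f p ^ 2 := rfl
  have hft : P.ft p = 1 / P.T p + 2 * P.a p / P.T p ^ 2 - (1 + P.γ) * P.y p / P.T p := by
    unfold ft yt; ring
  have hh : P.h p = (P.a p - P.c) * ((P.T p)⁻¹) ^ 2 - P.y p * (P.T p)⁻¹ := rfl
  have hff : P.f p = -1 - P.a p * (P.T p)⁻¹ + P.y p := rfl
  generalize P.X w p = X at *
  generalize P.e p = ee at *
  generalize P.ρ₁ p = r1 at *
  generalize box w p = bw at *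
  generalize pd (Fin.succ 0) w p = p1 at *
  generalize pd (Fin.succ 1) w p = p2 at *
  generalize pd (Fin.succ 2) w p = p3 at *
  generalize pd 0 w p = q at *
  generalize w p = w at *
  generalize p.2 0 = x0 at *
  generalize p.2 1 = x1 at *
  generalize p.2 2 = x2 at *
  have hTne := hT.ne'
  generalize P.T p = T at *
  generalize P.n p = n at *
  generalize P.f p = f at *
  generalize P.h p = h at *
  generalize P.ft p = ft at *
  generalize rho p = ρ at *
  linear_combination (exp := 1) (-2 * q / T + w / T ^ 2) * hX'
    + (1/2) * l ^ 2 * ee ^ 2 * w ^ 2 * (2 * P.μ * n / T ^ 2 + 2 * (1 + f) / T ^ 3) * hr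
    + (1/2) * l ^ 2 * ee ^ 2 * w ^ 2 * 2 * P.μ * n * hn
    + (p1 ^ 2 + p2 ^ 2 + p3 ^ 2 - q ^ 2) * hh - (1/2) * (p1 ^ 2 + p2 ^ 2 + p3 ^ 2 + q ^ 2) * hft
    - 2 * q ^ 2 / T * hff
end Par
end PartC

section PartD
lemma HP.of_eventuallyEq {α : Fin 4} {u v : Spc → ℝ} {p : Spc} {a : ℝ} (h : HP α u p a)
    (e : v =ᶠ[𝓝 p] u) : HP α v p a :=
  ⟨e.differentiableAt_iff.2 h.1, by rw [← h.2]; unfold pd; rw [e.fderiv_eq]⟩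

namespace Par
variable (P : Par) {p : Spc}

def wgt (m : ℝ → ℝ) (φ : Spc → ℝ) (p : Spc) : ℝ := P.T p * (m (P.F p) * φ p)

lemma HP_wgt {m m1 : ℝ → ℝ} {φ : Spc → ℝ} (hγ : P.γ ≠ 0) (hT : 0 < P.T p)
    (hm : ∀ s, HasDerivAt m (m1 s) s) (hφ : DifferentiableAt ℝ φ p) (α : Fin 4) :
    HP α (P.wgt m φ) p (P.T p * (m (P.F p) * pd α φ p) + (eVec α).1 * (m (P.F p) * φ p)
      + P.T p * (m1 (P.F p) * (P.dF α p * φ p))) := by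
  refine HP.congr ((P.HP_T α).mul (((P.HP_F α hγ hT).comp (hm _)).mul (HP.of_diff hφ))) ?_
  ring

lemma T_pos_nhds (hT : 0 < P.T p) : ∀ᶠ q in 𝓝 p, 0 < P.T q := by
  have : Continuous P.T := by unfold T; fun_prop
  exact this.continuousAt.eventually (lt_mem_nhds hT)

lemma HP2_wgt {m m1 m2 : ℝ → ℝ} {φ : Spc → ℝ} (hγ : P.γ ≠ 0) (hT : 0 < P.T p)
    (hm : ∀ s, HasDerivAt m (m1 s) s) (hm1 : ∀ s, HasDerivAt m1 (m2 s) s)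
    (hφ : ContDiffAt ℝ 2 φ p) (α : Fin 4) {ddF : ℝ} (hdd : HP α (P.dF α) p ddF) :
    pd α (pd α (P.wgt m φ)) p = P.T p * (m (P.F p) * pd α (pd α φ) p)
      + 2 * (eVec α).1 * (m (P.F p) * pd α φ p) + 2 * P.T p * (m1 (P.F p) * (P.dF α p * pd α φ p))
      + 2 * (eVec α).1 * (m1 (P.F p) * (P.dF α p * φ p))
      + P.T p * (m2 (P.F p) * (P.dF α p ^ 2 * φ p)) + P.T p * (m1 (P.F p) * (ddF * φ p)) := by
  have ev : pd α (P.wgt m φ) =ᶠ[𝓝 p] fun p => (P.T p * (m (P.F p) * pd α φ p)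
      + (eVec α).1 * (m (P.F p) * φ p)
      + P.T p * (m1 (P.F p) * (P.dF α p * φ p))) := by
    have h2 := hφ.eventually (by simp)
    filter_upwards [P.T_pos_nhds hT, h2] with q hq1 hq2
    exact (P.HP_wgt hγ hq1 hm (hq2.differentiableAt (by norm_num)) α).2
  have hF := P.HP_F α hγ hT
  have h1 := HP.of_diff (α := α) (hφ.differentiableAt (n := 2) (by norm_num))
  have H := ((((P.HP_T α).mul ((hF.comp (hm _)).mul (pd_HP (α := α) (β := α) hφ))).add
    ((HP.const (eVec α).1).mul ((hF.comp (hm _)).mul h1))).add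
    ((P.HP_T α).mul ((hF.comp (hm1 _)).mul (hdd.mul h1))))
  rw [(H.of_eventuallyEq ev).2]
  ring

lemma box_wgt {m m1 m2 : ℝ → ℝ} {φ : Spc → ℝ} (hγ : P.γ ≠ 0) (hT : 0 < P.T p)
    (hm : ∀ s, HasDerivAt m (m1 s) s) (hm1 : ∀ s, HasDerivAt m1 (m2 s) s)
    (hφ : ContDiffAt ℝ 2 φ p) :
    box (P.wgt m φ) p + 2 / P.T p * pd 0 (P.wgt m φ) p =
      m (P.F p) * (P.T p * box φ p + 2 * φ p / P.T p) + 2 * P.T p * m1 (P.F p) * P.X φ p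
      + P.T p * φ p * (m2 (P.F p) * P.n p + m1 (P.F p) * P.Db p) := by
  have h0 : HP 0 (P.dF 0) p (P.ft p) := P.HP_f 0 hT
  have hi : ∀ i : Fin 3, HP i.succ (P.dF i.succ) p (1 / P.T p) := fun i => by
    have := P.HP_A i i.succ hT
    simp only [dA, Fin.cases_succ, if_true] at this
    exact this
  unfold box dt dxi
  rw [P.HP2_wgt hγ hT hm hm1 hφ 0 h0, (P.HP_wgt hγ hT hm (hφ.differentiableAt (by norm_num)) 0).2]
  rw [Finset.sum_congr rfl (fun i _ => P.HP2_wgt hγ hT hm hm1 hφ i.succ (hi i))]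
  have hr : rho p = p.2 0 ^ 2 + p.2 1 ^ 2 + p.2 2 ^ 2 := by simp [rho, Fin.sum_univ_three]
  simp only [Fin.sum_univ_three, eVec_zero_fst, eVec_succ_fst, X, Xop, dF, Fin.cases_zero,
    Fin.cases_succ, Db, n, A, hr]
  field_simp
  ring

lemma X_wgt {m m1 : ℝ → ℝ} {φ : Spc → ℝ} (hγ : P.γ ≠ 0) (hT : 0 < P.T p)
    (hm : ∀ s, HasDerivAt m (m1 s) s) (hφ : DifferentiableAt ℝ φ p) :
    P.X (P.wgt m φ) p = P.T p * m (P.F p) * P.X φ p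
      + φ p * (P.T p * m1 (P.F p) * P.n p - m (P.F p) * P.f p) := by
  have hr : rho p = p.2 0 ^ 2 + p.2 1 ^ 2 + p.2 2 ^ 2 := by simp [rho, Fin.sum_univ_three]
  unfold X Xop
  rw [(P.HP_wgt hγ hT hm hφ 0).2, Finset.sum_congr rfl
    (fun i _ => by rw [(P.HP_wgt hγ hT hm hφ i.succ).2])]
  simp only [Fin.sum_univ_three, eVec_zero_fst, eVec_succ_fst, dF, Fin.cases_zero,
    Fin.cases_succ, n, A, hr]
  ring

/-- the cutoff profile -/
def et (s : ℝ) : ℝ := Real.smoothTransition ((s - P.k1) / (P.k2 - P.k1))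
def G (l : ℝ) (s : ℝ) : ℝ := exp (l * (exp (P.μ * s) / P.μ))
def m (l : ℝ) (s : ℝ) : ℝ := P.G l s * P.et s
def m1 (l : ℝ) (s : ℝ) : ℝ := P.G l s * (l * exp (P.μ * s) * P.et s + deriv P.et s)
def m2 (l : ℝ) (s : ℝ) : ℝ := P.G l s * (l ^ 2 * exp (P.μ * s) ^ 2 * P.et s
  + l * P.μ * exp (P.μ * s) * P.et s
  + 2 * l * exp (P.μ * s) * deriv P.et s + deriv (deriv P.et) s)

lemma et_contDiff : ContDiff ℝ 2 P.et := by
  unfold et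
  exact Real.smoothTransition.contDiff.comp (by fun_prop)

lemma hasDeriv_G (l s : ℝ) (hμ : P.μ ≠ 0) : HasDerivAt (P.G l) (P.G l s * (l * exp (P.μ * s))) s := by
  have h1 : HasDerivAt (fun s => exp (P.μ * s)) (exp (P.μ * s) * P.μ) s := by
    have := ((hasDerivAt_id s).const_mul P.μ).exp
    simpa using this
  have := ((h1.div_const P.μ).const_mul l).exp
  refine this.congr_deriv ?_
  unfold G; field_simp

lemma hasDeriv_m (l s : ℝ) (hμ : P.μ ≠ 0) : HasDerivAt (P.m l) (P.m1 l s) s := by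
  have h2 : HasDerivAt P.et (deriv P.et s) s :=
    (P.et_contDiff.differentiable (by norm_num) s).hasDerivAt
  refine ((P.hasDeriv_G l s hμ).mul h2).congr_deriv ?_
  unfold m1; ring

lemma hasDeriv_m1 (l s : ℝ) (hμ : P.μ ≠ 0) : HasDerivAt (P.m1 l) (P.m2 l s) s := by
  have h2 : HasDerivAt P.et (deriv P.et s) s :=
    (P.et_contDiff.differentiable (by norm_num) s).hasDerivAt
  have h3 : HasDerivAt (deriv P.et) (deriv (deriv P.et) s) s := by
    have : ContDiff ℝ 1 (deriv P.et) := by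
      have := P.et_contDiff
      rw [show (2 : WithTop ℕ∞) = 1 + 1 by norm_num, contDiff_succ_iff_deriv] at this
      exact this.2.2
    exact (this.differentiable (by norm_num) s).hasDerivAt
  have h1 : HasDerivAt (fun s => exp (P.μ * s)) (exp (P.μ * s) * P.μ) s := by
    have := ((hasDerivAt_id s).const_mul P.μ).exp
    simpa using this
  refine ((P.hasDeriv_G l s hμ).mul (((h1.const_mul l).mul h2).add h3)).congr_deriv ?_
  simp only [Pi.mul_apply, Pi.add_apply]
  unfold m2; ring

def Em (l : ℝ) (φ : Spc → ℝ) (p : Spc) : ℝ :=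
  P.G l (P.F p) * (P.et (P.F p) * (P.T p * box φ p + 2 * φ p / P.T p)
    + 2 * P.T p * deriv P.et (P.F p) * P.X φ p
    + P.T p * φ p * (deriv (deriv P.et) (P.F p) * P.n p + deriv P.et (P.F p) * P.Db p))

def w (l : ℝ) (φ : Spc → ℝ) : Spc → ℝ := P.wgt (P.m l) φ

lemma Err_eq (l : ℝ) {φ : Spc → ℝ} (hγ : P.γ ≠ 0) (hμ : P.μ ≠ 0) (hT : 0 < P.T p)
    (hφ : ContDiffAt ℝ 2 φ p) :
    P.Err l (P.w l φ) p = P.Em l φ p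
      + l * P.e p * (P.Db p + 2 * P.f p / P.T p + P.μ * P.n p) * P.w l φ p := by
  have h1 := P.box_wgt hγ hT (P.hasDeriv_m l · hμ) (P.hasDeriv_m1 l · hμ) hφ
  have h2 := P.X_wgt hγ hT (P.hasDeriv_m l · hμ) (hφ.differentiableAt (by norm_num))
  unfold Err w
  rw [h1, h2]
  unfold Em wgt m1 m2 m e
  field_simp
  ring
end Par
end PartD

section PartE
lemma rho_cd {p : Spc} : ContDiffAt ℝ 2 rho p := by
  unfold rho; fun_prop
namespace Par
variable (P : Par) {p : Spc}
lemma T_cd : ContDiffAt ℝ 2 P.T p := by unfold T; fun_prop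
lemma Ti_cd (hT : 0 < P.T p) : ContDiffAt ℝ 2 (fun p => (P.T p)⁻¹) p := P.T_cd.inv hT.ne'
lemma a_cd (hT : 0 < P.T p) : ContDiffAt ℝ 2 P.a p := by
  unfold a
  exact ((rho_cd.sub (P.T_cd.pow 2)).sub contDiffAt_const).mul
    ((contDiffAt_const.mul P.T_cd).inv (by positivity))
lemma y_cd (hT : 0 < P.T p) : ContDiffAt ℝ 2 P.y p := by
  unfold y
  exact contDiffAt_const.mul (P.T_cd.rpow_const_of_ne hT.ne')
lemma F_cd (hT : 0 < P.T p) : ContDiffAt ℝ 2 P.F p := by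
  unfold F
  exact (P.a_cd hT).sub (contDiffAt_const.mul (P.T_cd.rpow_const_of_ne hT.ne'))
lemma A_cd (i : Fin 3) (hT : 0 < P.T p) : ContDiffAt ℝ 2 (P.A i) p := by
  unfold A
  exact ContDiffAt.mul (by fun_prop) (P.Ti_cd hT)
lemma f_cd (hT : 0 < P.T p) : ContDiffAt ℝ 2 P.f p := by
  unfold f
  exact (contDiffAt_const.sub ((P.a_cd hT).mul (P.Ti_cd hT))).add (P.y_cd hT)
lemma n_cd (hT : 0 < P.T p) : ContDiffAt ℝ 2 P.n p := by
  unfold n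
  exact (rho_cd.mul ((P.Ti_cd hT).pow 2)).sub ((P.f_cd hT).pow 2)
lemma h_cd (hT : 0 < P.T p) : ContDiffAt ℝ 2 P.h p := by
  unfold h
  exact (((P.a_cd hT).sub contDiffAt_const).mul ((P.Ti_cd hT).pow 2)).sub
    ((P.y_cd hT).mul (P.Ti_cd hT))
lemma e_cd (hT : 0 < P.T p) : ContDiffAt ℝ 2 P.e p := by
  unfold e
  exact (contDiffAt_const.mul (P.F_cd hT)).exp
lemma B_cd (l : ℝ) (hT : 0 < P.T p) : ContDiffAt ℝ 2 (P.B l) p := by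
  unfold B
  exact contDiffAt_const.mul (((P.e_cd hT).pow 2).mul (P.n_cd hT))
lemma m_cd (l : ℝ) : ContDiff ℝ 2 (P.m l) := by
  have h := P.et_contDiff
  unfold m G
  fun_prop
lemma w_cd (l : ℝ) {φ : Spc → ℝ} (hT : 0 < P.T p) (hφ : ContDiffAt ℝ 2 φ p) :
    ContDiffAt ℝ 2 (P.w l φ) p := by
  unfold w wgt
  exact P.T_cd.mul (((P.m_cd l).contDiffAt.comp p (P.F_cd hT)).mul hφ)
lemma J_cd (l : ℝ) {w : Spc → ℝ} (hT : 0 < P.T p) (hw : ContDiffAt ℝ 2 w p) (α : Fin 4) :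
    ContDiffAt ℝ 1 (P.J l w α) p := by
  have h1 : ∀ α, ContDiffAt ℝ 1 (pd α w) p := fun α => pd_contDiffAt hw
  have hw1 : ContDiffAt ℝ 1 w p := hw.of_le (by norm_num)
  have hf : ContDiffAt ℝ 1 P.f p := (P.f_cd hT).of_le (by norm_num)
  have hh : ContDiffAt ℝ 1 P.h p := (P.h_cd hT).of_le (by norm_num)
  have hB : ContDiffAt ℝ 1 (P.B l) p := (P.B_cd l hT).of_le (by norm_num)
  have hA : ∀ i, ContDiffAt ℝ 1 (P.A i) p := fun i => (P.A_cd i hT).of_le (by norm_num)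
  have hX : ContDiffAt ℝ 1 (Xop P.A P.f w) p := by
    unfold Xop
    exact (ContDiffAt.sum fun i _ => (hA i).mul (h1 i.succ)).sub (hf.mul (h1 0))
  have hL : ContDiffAt ℝ 1 (Lag w) p := by
    unfold Lag
    exact (ContDiffAt.sum fun i _ => (h1 i.succ).pow 2).sub ((h1 0).pow 2)
  unfold J Jc
  refine Fin.cases ?_ (fun i => ?_) α
  · exact ((((h1 0).mul hX).sub (contDiffAt_const.mul (hf.mul hL))).sub
      (hh.mul (hw1.mul (h1 0)))).add (contDiffAt_const.mul (hB.mul (hf.mul (hw1.pow 2))))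
  · exact (((((h1 i.succ).mul hX).neg).add (contDiffAt_const.mul ((hA i).mul hL))).add
      (hh.mul (hw1.mul (h1 i.succ)))).sub (contDiffAt_const.mul (hB.mul ((hA i).mul (hw1.pow 2))))
end Par
end PartE

section PartF
structure Geo (M : ℝ) (τ y f n h Db Xn ρ₁ rT : ℝ) : Prop where
  M1 : 1 ≤ M
  τ0 : 0 < τ
  τM : τ ≤ M
  y0 : 0 < y
  y1 : y ≤ 1
  yτ : y ≤ M * τ
  τy : τ ^ 2 ≤ M * y
  τ5 : τ ^ 5 ≤ M * y ^ 3
  fM : |f| ≤ M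
  rM : rT ≤ M
  rm : 1 ≤ M * rT
  fr : |rT + f| ≤ M * y
  ny : y ≤ n
  nM : n ≤ M * y
  nr : n = rT ^ 2 - f ^ 2
  hM : |h| ≤ M * τ ^ 2
  ρM : |ρ₁| ≤ M * τ ^ 3
  Q : |Db + 2 * f * τ| ≤ M * y
  DbM : |Db| ≤ M * τ
  br : - (M * y ^ 2) ≤ n * Db + Xn + 2 * n * h

/-- bounded polynomials on a box -/
lemma box_bdd (g : ℝ × ℝ × ℝ × ℝ → ℝ) (hg : Continuous g) (b : ℝ) :
    ∃ C, 0 ≤ C ∧ ∀ x y z c : ℝ, |x| ≤ b → |y| ≤ b → |z| ≤ b → |c| ≤ b → |g (x, y, z, c)| ≤ C := by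
  have hc : IsCompact ((Icc (-b) b) ×ˢ (Icc (-b) b) ×ˢ (Icc (-b) b) ×ˢ (Icc (-b) b)) :=
    isCompact_Icc.prod (isCompact_Icc.prod (isCompact_Icc.prod isCompact_Icc))
  obtain ⟨C, hC⟩ := hc.exists_bound_of_continuousOn hg.continuousOn
  refine ⟨max C 0, le_max_right _ _, fun x y z c hx hy hz hc => ?_⟩
  exact (hC (x, y, z, c) ⟨abs_le.1 hx, abs_le.1 hy, abs_le.1 hz, abs_le.1 hc⟩).trans (le_max_left _ _)

/-- real-variable description of the points -/
structure Pt (σ d ε γ R₁ R₂ T r a y c : ℝ) : Prop where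
  σT : σ ≤ T
  a1 : R₂ ≤ a
  a2 : a ≤ R₁ - σ
  r0 : 0 ≤ r
  rq : r ^ 2 = T ^ 2 + 2 * T * a + d
  rT : |r - T| ≤ R₁
  yv : y = ε * T ^ (-1 - γ)
  c0 : 0 < c
  c1 : c ≤ 1

structure ParOK (σ d ε γ R₁ R₂ : ℝ) : Prop where
  σ0 : 0 < σ
  σ1 : σ ≤ 1
  dv : d = R₁ ^ 2 - σ ^ 2 - 2 * σ * R₂
  R0 : 0 < R₁
  R2 : -R₁ < R₂
  Rσ : σ < R₁ - R₂
  γ0 : 0 < γ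
  γ1 : γ ≤ 1 / 2
  ε0 : 0 < ε
  ε1 : ε ≤ σ ^ (1 + γ)
  ε2 : 2 * R₁ * (ε * σ ^ (-γ)) ≤ min (2 * σ * (R₁ - σ - R₂)) (R₁ ^ 2 - (σ + R₂) ^ 2)

lemma ParOK.δ0 {σ d ε γ R₁ R₂ : ℝ} (H : ParOK σ d ε γ R₁ R₂) :
    0 < min (2 * σ * (R₁ - σ - R₂)) (R₁ ^ 2 - (σ + R₂) ^ 2) := by
  have h1 := H.σ0
  have h2 := H.Rσ
  have h3 := H.R2
  refine lt_min ?_ ?_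
  · have : 0 < R₁ - σ - R₂ := by linarith
    positivity
  · nlinarith

lemma ev_bd {ι : Type*} {S : ι → Prop} {u v : ι → ℝ} (hv : ∀ i, S i → 0 ≤ v i)
    (h : ∃ C, ∀ i, S i → u i ≤ C * v i) : ∀ᶠ M : ℝ in atTop, ∀ i, S i → u i ≤ M * v i := by
  obtain ⟨C, hC⟩ := h
  filter_upwards [eventually_ge_atTop C] with M hM i hi
  exact (hC i hi).trans (mul_le_mul_of_nonneg_right hM (hv i hi))

section basic
variable {σ d ε γ R₁ R₂ : ℝ} (H : ParOK σ d ε γ R₁ R₂)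
include H

lemma rp_le {s T : ℝ} (hs : s ≤ 0) (hT : σ ≤ T) : T ^ s ≤ σ ^ s :=
  Real.rpow_le_rpow_of_nonpos H.σ0 hT hs

lemma Pt.Tpos {T r a y c : ℝ} (h : Pt σ d ε γ R₁ R₂ T r a y c) : 0 < T := H.σ0.trans_le h.σT
lemma Pt.y0 {T r a y c : ℝ} (h : Pt σ d ε γ R₁ R₂ T r a y c) : 0 < y := by
  rw [h.yv]; exact mul_pos H.ε0 (Real.rpow_pos_of_pos (h.Tpos H) _)
lemma Pt.y1 {T r a y c : ℝ} (h : Pt σ d ε γ R₁ R₂ T r a y c) : y ≤ 1 := by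
  have h1 : T ^ (-1 - γ) ≤ σ ^ (-1 - γ) := rp_le H (by linarith [H.γ0]) h.σT
  rw [h.yv]
  have h2 : σ ^ (1 + γ) * σ ^ (-1 - γ) = 1 := by
    rw [← Real.rpow_add H.σ0]; simp
  have h3 := Real.rpow_pos_of_pos (h.Tpos H) (-1 - γ)
  have h4 := Real.rpow_pos_of_pos H.σ0 (1 + γ)
  nlinarith [H.ε0, H.ε1]
lemma Pt.yτ {T r a y c : ℝ} (h : Pt σ d ε γ R₁ R₂ T r a y c) : y ≤ ε * σ ^ (-γ) * T⁻¹ := by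
  have h0 := h.Tpos H
  rw [h.yv, show (-1 - γ) = -γ + -1 by ring, Real.rpow_add h0, Real.rpow_neg_one, ← mul_assoc]
  have h1 : T ^ (-γ) ≤ σ ^ (-γ) := rp_le H (by linarith [H.γ0]) h.σT
  have := H.ε0
  gcongr
lemma Pt.τy {T r a y c : ℝ} (h : Pt σ d ε γ R₁ R₂ T r a y c) :
    T⁻¹ ^ 2 ≤ σ ^ (γ - 1) / ε * y := by
  have h0 := h.Tpos H
  have h1 : T ^ (γ - 1) ≤ σ ^ (γ - 1) := rp_le H (by linarith [H.γ1]) h.σT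
  have h2 : T⁻¹ ^ 2 = T ^ (γ - 1) * T ^ (-1 - γ) := by
    rw [← Real.rpow_add h0, show γ - 1 + (-1 - γ) = ((-2 : ℤ) : ℝ) by push_cast; ring,
      Real.rpow_intCast]
    rw [zpow_neg, inv_pow]; rfl
  rw [h2, h.yv]
  have h3 := Real.rpow_pos_of_pos h0 (-1 - γ)
  have := H.ε0
  calc _ ≤ σ ^ (γ - 1) * T ^ (-1 - γ) := by gcongr
    _ = _ := by field_simp
lemma Pt.τ5 {T r a y c : ℝ} (h : Pt σ d ε γ R₁ R₂ T r a y c) :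
    T⁻¹ ^ 5 ≤ σ ^ (3 * γ - 2) / ε ^ 3 * y ^ 3 := by
  have h0 := h.Tpos H
  have h1 : T ^ (3 * γ - 2) ≤ σ ^ (3 * γ - 2) := rp_le H (by linarith [H.γ1]) h.σT
  have h2 : T⁻¹ ^ 5 = T ^ (3 * γ - 2) * (T ^ (-1 - γ)) ^ 3 := by
    rw [← Real.rpow_natCast (T ^ (-1 - γ)) 3, ← Real.rpow_mul h0.le, ← Real.rpow_add h0,
      show 3 * γ - 2 + (-1 - γ) * ((3:ℕ):ℝ) = ((-5 : ℤ) : ℝ) by push_cast; ring,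
      Real.rpow_intCast]
    rw [zpow_neg, inv_pow]; rfl
  rw [h2, h.yv]
  have h3 := Real.rpow_pos_of_pos h0 (-1 - γ)
  have := H.ε0
  calc _ ≤ σ ^ (3 * γ - 2) * (T ^ (-1 - γ)) ^ 3 := by gcongr
    _ = _ := by field_simp
lemma Pt.da {T r a y c : ℝ} (h : Pt σ d ε γ R₁ R₂ T r a y c) :
    min (2 * σ * (R₁ - σ - R₂)) (R₁ ^ 2 - (σ + R₂) ^ 2) ≤ d - a ^ 2 := by
  have h1 := H.σ0
  have h2 := H.Rσ
  have h3 := H.R2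
  have h4 := h.a1
  have h5 := h.a2
  rw [H.dv]
  rcases le_total (R₁ - σ) (-R₂) with hh | hh
  · -- |a| ≤ -R₂
    refine (min_le_right _ _).trans ?_
    nlinarith [mul_nonneg (sub_nonneg.2 h4) (by linarith : 0 ≤ -R₂ - a)]
  · refine (min_le_left _ _).trans ?_
    nlinarith [mul_nonneg (sub_nonneg.2 h5) (by linarith : 0 ≤ (R₁ - σ) + a)]
lemma Pt.aR {T r a y c : ℝ} (h : Pt σ d ε γ R₁ R₂ T r a y c) : |a| ≤ R₁ := by
  rw [abs_le]; constructor <;> linarith [h.a1, h.a2, H.R2, H.σ0]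
lemma Pt.τσ {T r a y c : ℝ} (h : Pt σ d ε γ R₁ R₂ T r a y c) : T⁻¹ ≤ σ⁻¹ :=
  inv_anti₀ H.σ0 h.σT
end basic
end PartF

section PartG
set_option maxHeartbeats 2000000 in
lemma exists_geo {σ d ε γ R₁ R₂ : ℝ} (H : ParOK σ d ε γ R₁ R₂) :
    ∃ M, ∀ T r a y c, Pt σ d ε γ R₁ R₂ T r a y c →
      Geo M T⁻¹ y (-1 - a * T⁻¹ + y) ((r * T⁻¹) ^ 2 - (-1 - a * T⁻¹ + y) ^ 2)
        ((a - c) * T⁻¹ ^ 2 - y * T⁻¹)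
        (3 * T⁻¹ - (T⁻¹ + 2 * a * T⁻¹ ^ 2 - (1 + γ) * y * T⁻¹))
        (2 * (r * T⁻¹) ^ 2 * T⁻¹ * (1 + (-1 - a * T⁻¹ + y))
          + 2 * (-1 - a * T⁻¹ + y) * (r * T⁻¹) ^ 2 * T⁻¹
          + 2 * (-1 - a * T⁻¹ + y) ^ 2 * (T⁻¹ + 2 * a * T⁻¹ ^ 2 - (1 + γ) * y * T⁻¹))
        (2 * (a - c) * T⁻¹ ^ 3 - (1 + γ) * y * T⁻¹ ^ 2)
        (r * T⁻¹) := by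
  set b := σ⁻¹ + R₁ + 1 with hb
  have hσ0 := H.σ0
  have hR0 := H.R0
  have hγ0 := H.γ0
  have hγ1 := H.γ1
  have hsi : 0 < σ⁻¹ := by positivity
  obtain ⟨Cf, hCf0, hCf⟩ := box_bdd (fun v => -1 - v.2.1 * v.1 + v.2.2.1) (by fun_prop) b
  obtain ⟨CD, hCD0, hCD⟩ := box_bdd (fun v => 2 - 2 * v.2.1 * v.1 + (1 + γ) * v.2.2.1)
    (by fun_prop) b
  obtain ⟨Cg, hCg0, hCg⟩ := box_bdd (fun v => -4 * v.2.1 + 4 * d * v.1 - 12 * v.2.1 ^ 2 * v.1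
    - 2 * (1 + γ) * (2 * v.2.1 + v.2.1 ^ 2 * v.1) + (d - v.2.1 ^ 2) * v.1 * (1 + γ)) (by fun_prop) b
  obtain ⟨CE, hCE0, hCE⟩ := box_bdd (fun v => v.1 * (2 * (1 + 2 * (v.2.1 * v.1))
    + 6 * (1 + v.2.1 * v.1) * (1 + γ) - 2 + 2 * (v.2.1 * v.1) - 3 * (1 + γ) * v.2.2.1))
    (by fun_prop) b
  obtain ⟨C4, hC40, hC4⟩ := box_bdd (fun v => 6 * v.2.1 * (d - v.2.1 ^ 2)) (by fun_prop) b
  set K1 := ε * σ ^ (-γ) with hK1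
  have hε0 := H.ε0
  have hK10 : 0 < K1 := mul_pos hε0 (Real.rpow_pos_of_pos hσ0 _)
  set K2 := σ ^ (γ - 1) / ε with hK2
  have hK20 : 0 < K2 := div_pos (Real.rpow_pos_of_pos hσ0 _) hε0
  set K5 := σ ^ (3 * γ - 2) / ε ^ 3 with hK5
  set δ := min (2 * σ * (R₁ - σ - R₂)) (R₁ ^ 2 - (σ + R₂) ^ 2) with hδ
  have hδ0 : 0 < δ := H.δ0
  set Kr := 1 + R₁ * σ⁻¹ with hKr
  have hKr0 : 0 < Kr := by positivity
  set Kn := d * K2 + 2 * Kr with hKn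
  set Kh := R₁ + 1 + K1 with hKh
  have hKh0 : 0 < Kh := by positivity
  have ev : ∀ C : ℝ, ∀ᶠ M : ℝ in atTop, C ≤ M := fun C => eventually_ge_atTop C
  obtain ⟨M, ⟨⟨⟨⟨⟨⟨⟨⟨⟨⟨⟨⟨M1, M2⟩, M3⟩, M4⟩, M5⟩, M6⟩, M7⟩, M8⟩, M9⟩, M10⟩, M11⟩, M12⟩, M13⟩⟩ :=
    ((((((((((((((ev 1).and (ev σ⁻¹)).and (ev K1)).and (ev K2)).and (ev K5)).and (ev Cf)).and (ev Kr)).and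
    (ev (d * Kr / δ))).and (ev ((d + R₁ ^ 2) / 2 * K2 + 1))).and (ev Kn)).and (ev (2 * Kh))).and
    (ev (4 * R₁ * K2 + 4 * σ⁻¹))).and
    (ev (max CD (C4 * K2 ^ 2 + Cg * K2 + CE + 2 * Kn * Kh * K2)))).exists)
  refine ⟨M, fun T r a y c h => ?_⟩
  have hT := h.Tpos H
  have hτ0 : 0 < T⁻¹ := by positivity
  have hτσ := h.τσ H
  have hy0 := h.y0 H
  have hy1 := h.y1 H
  have hyτ : y ≤ K1 * T⁻¹ := h.yτ H
  have hτy : T⁻¹ ^ 2 ≤ K2 * y := h.τy H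
  have hτ5 : T⁻¹ ^ 5 ≤ K5 * y ^ 3 := h.τ5 H
  have hda : δ ≤ d - a ^ 2 := h.da H
  have haR := h.aR H
  have hrT := h.rT
  have hr0 := h.r0
  have hc0 := h.c0
  have hc1 := h.c1
  have hrq : (r * T⁻¹) ^ 2 = 1 + 2 * a * T⁻¹ + d * T⁻¹ ^ 2 := by
    rw [mul_pow, h.rq]; field_simp
  have hrr : r * T⁻¹ = 1 + (r - T) * T⁻¹ := by field_simp; ring
  have hd0 : 0 < d := by linarith [sq_nonneg a]
  have hKn0 : 0 < Kn := by positivity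
  have bτ : |T⁻¹| ≤ b := by rw [abs_of_pos hτ0]; linarith
  have ba : |a| ≤ b := by linarith
  have by' : |y| ≤ b := by rw [abs_of_pos hy0]; linarith
  have bc : |c| ≤ b := by rw [abs_of_pos hc0]; linarith
  have hεy : 2 * R₁ * y ≤ δ * T⁻¹ := by
    have h1 : 2 * R₁ * y ≤ 2 * R₁ * (K1 * T⁻¹) := by gcongr
    have h2 : 2 * R₁ * K1 * T⁻¹ ≤ δ * T⁻¹ := by
      have := H.ε2
      gcongr
    linarith
  have hf := hCf T⁻¹ a y c bτ ba by' bc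
  have hD := hCD T⁻¹ a y c bτ ba by' bc
  have hg := hCg T⁻¹ a y c bτ ba by' bc
  have hE := hCE T⁻¹ a y c bτ ba by' bc
  have h4 := hC4 T⁻¹ a y c bτ ba by' bc
  simp only at hf hD hg hE h4
  have hrK : r * T⁻¹ ≤ Kr := by
    rw [hrr, hKr]
    have : (r - T) * T⁻¹ ≤ R₁ * σ⁻¹ :=
      (mul_le_mul_of_nonneg_right (abs_le.1 hrT).2 hτ0.le).trans (by gcongr)
    linarith
  have hM0 : 0 < M := by linarith
  have haτ : |a * T⁻¹| ≤ R₁ * σ⁻¹ := by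
    rw [abs_mul, abs_of_pos hτ0]; gcongr
  clear hCf hCD hCg hCE hC4 ev
  have hTne : T * T⁻¹ = 1 := mul_inv_cancel₀ hT.ne'
  clear_value b K1 K2 K5 δ Kr Kn Kh
  generalize T⁻¹ = τ at *
  have hnid : (r * τ) ^ 2 - (-1 - a * τ + y) ^ 2
      = (d - a ^ 2) * τ ^ 2 + 2 * (1 + a * τ) * y - y ^ 2 := by rw [hrq]; ring
  have hn1 : y ≤ (r * τ) ^ 2 - (-1 - a * τ + y) ^ 2 := by
    rw [hnid]
    have e1 : δ * τ ^ 2 ≤ (d - a ^ 2) * τ ^ 2 := by gcongr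
    have e2 : 2 * R₁ * y * τ ≤ δ * τ * τ := by gcongr
    have e3 : -(R₁ * τ * y) ≤ a * τ * y := by
      have := (abs_le.1 haR).1
      have : -R₁ * (τ * y) ≤ a * (τ * y) := by gcongr
      linarith
    have e4 : y ^ 2 ≤ y := by rw [sq]; exact mul_le_of_le_one_left hy0.le hy1
    linarith
  have hn2 : (r * τ) ^ 2 - (-1 - a * τ + y) ^ 2 ≤ Kn * y := by
    rw [hnid, hKn, hKr]
    have e1 : (d - a ^ 2) * τ ^ 2 ≤ d * (K2 * y) := by
      calc (d - a ^ 2) * τ ^ 2 ≤ d * τ ^ 2 := by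
            gcongr; linarith [sq_nonneg a]
        _ ≤ _ := by gcongr
    have e3 : a * τ * y ≤ R₁ * σ⁻¹ * y := by
      have := (abs_le.1 haτ).2
      gcongr
    linarith [sq_nonneg y]
  have hh : |(a - c) * τ ^ 2 - y * τ| ≤ Kh * τ ^ 2 := by
    have e1 : |(a - c) * τ ^ 2| ≤ (R₁ + 1) * τ ^ 2 := by
      rw [abs_mul, abs_of_pos (by positivity : 0 < τ ^ 2)]
      gcongr
      refine (abs_sub _ _).trans ?_
      rw [abs_of_pos hc0]; linarith
    have e2 : |y * τ| ≤ K1 * τ ^ 2 := by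
      rw [abs_of_pos (by positivity)]
      linarith [mul_le_mul_of_nonneg_right hyτ hτ0.le]
    refine (abs_sub _ _).trans ?_
    rw [hKh]; linarith
  have hD' : 3 * τ - (τ + 2 * a * τ ^ 2 - (1 + γ) * y * τ) = τ * (2 - 2 * a * τ + (1 + γ) * y) := by ring
  refine ⟨M1, hτ0, hτσ.trans M2, hy0, hy1, hyτ.trans (by gcongr), hτy.trans (by gcongr),
    hτ5.trans (by gcongr), hf.trans M6, hrK.trans M7, ?_, ?_, hn1, hn2.trans (by gcongr), rfl,
    ?_, ?_, ?_, ?_, ?_⟩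
  · have e1 : δ ≤ d * (r * τ) ^ 2 := by rw [hrq]; linarith [sq_nonneg (d * τ + a)]
    have e0 : 0 ≤ r * τ := by positivity
    have e2 : d * (r * τ) ^ 2 ≤ d * Kr * (r * τ) := by
      linarith [mul_le_mul_of_nonneg_right hrK (by positivity : 0 ≤ d * (r * τ))]
    have e3 : d * Kr / δ * (r * τ) ≤ M * (r * τ) := by gcongr
    refine le_trans ?_ e3
    rw [div_mul_eq_mul_div, le_div_iff₀ hδ0]; linarith
  · have e1 : r * τ + (-1 - a * τ + y) = (d - (r * τ - 1) ^ 2 / τ ^ 2) / 2 * τ ^ 2 + y := by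
      field_simp
      linear_combination hrq
    have e2 : (r * τ - 1) ^ 2 / τ ^ 2 = (r - T) ^ 2 := by
      have : r * τ - 1 = (r - T) * τ := by linear_combination hTne
      rw [this]; field_simp
    rw [e1, e2]
    have e3 : |(d - (r - T) ^ 2) / 2| ≤ (d + R₁ ^ 2) / 2 := by
      have := sq_le_sq' (abs_le.1 hrT).1 (abs_le.1 hrT).2
      rw [abs_le]; constructor <;> linarith [sq_nonneg (r - T), sq_nonneg R₁]
    have e4 : |(d - (r - T) ^ 2) / 2 * τ ^ 2| ≤ (d + R₁ ^ 2) / 2 * (K2 * y) := by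
      rw [abs_mul, abs_of_pos (by positivity : 0 < τ ^ 2)]; gcongr
    have e5 : ((d + R₁ ^ 2) / 2 * K2 + 1) * y ≤ M * y := by gcongr
    refine (abs_add_le _ _).trans ?_
    rw [abs_of_pos hy0]; linarith
  · refine hh.trans ?_
    gcongr; linarith
  · have e1 : |2 * (a - c) * τ ^ 3| ≤ 2 * (R₁ + 1) * τ ^ 3 := by
      rw [abs_mul, abs_of_pos (by positivity : 0 < τ ^ 3), abs_mul, abs_two]
      gcongr
      refine (abs_sub _ _).trans ?_
      rw [abs_of_pos hc0]; linarith
    have e2 : |(1 + γ) * y * τ ^ 2| ≤ 2 * K1 * τ ^ 3 := by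
      rw [abs_of_pos (by positivity)]
      calc (1 + γ) * y * τ ^ 2 ≤ 2 * (K1 * τ) * τ ^ 2 := by gcongr; linarith
        _ = _ := by ring
    refine (abs_sub _ _).trans ?_
    calc _ ≤ 2 * Kh * τ ^ 3 := by rw [hKh]; linarith
      _ ≤ _ := by gcongr
  · have e0 : 3 * τ - (τ + 2 * a * τ ^ 2 - (1 + γ) * y * τ) + 2 * (-1 - a * τ + y) * τ
        = -(4 * a * τ ^ 2) + (3 + γ) * y * τ := by ring
    rw [e0]
    have e1 : |4 * a * τ ^ 2| ≤ 4 * R₁ * (K2 * y) := by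
      rw [abs_mul, abs_of_pos (by positivity : 0 < τ ^ 2), abs_mul, abs_of_pos (by norm_num : (0:ℝ) < 4)]
      gcongr
    have e2 : |(3 + γ) * y * τ| ≤ 4 * y * σ⁻¹ := by
      rw [abs_of_pos (by positivity)]; gcongr; linarith
    refine (abs_add_le _ _).trans ?_
    rw [abs_neg]
    calc _ ≤ (4 * R₁ * K2 + 4 * σ⁻¹) * y := by linarith
      _ ≤ _ := by gcongr
  · rw [hD', abs_mul, abs_of_pos hτ0, mul_comm]
    gcongr
    exact hD.trans ((le_max_left _ _).trans M13)
  · have M13' := (le_max_right _ _).trans M13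
    have e0 : ((r * τ) ^ 2 - (-1 - a * τ + y) ^ 2) *
        (3 * τ - (τ + 2 * a * τ ^ 2 - (1 + γ) * y * τ))
        + (2 * (r * τ) ^ 2 * τ * (1 + (-1 - a * τ + y))
          + 2 * (-1 - a * τ + y) * (r * τ) ^ 2 * τ
          + 2 * (-1 - a * τ + y) ^ 2 * (τ + 2 * a * τ ^ 2 - (1 + γ) * y * τ))
        = - (6 * a * (d - a ^ 2)) * τ ^ 4 + 2 * (1 - γ) * y * τ
          + (-4 * a + 4 * d * τ - 12 * a ^ 2 * τ
            - 2 * (1 + γ) * (2 * a + a ^ 2 * τ) + (d - a ^ 2) * τ * (1 + γ)) * (y * τ ^ 2)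
          + (τ * (2 * (1 + 2 * (a * τ))
            + 6 * (1 + a * τ) * (1 + γ) - 2 + 2 * (a * τ) - 3 * (1 + γ) * y)) * y ^ 2 := by
      rw [hrq]; ring
    rw [e0]
    have f1 : -(C4 * K2 ^ 2 * y ^ 2) ≤ - (6 * a * (d - a ^ 2)) * τ ^ 4 := by
      have : τ ^ 4 ≤ (K2 * y) ^ 2 := by
        calc τ ^ 4 = (τ ^ 2) ^ 2 := by ring
          _ ≤ _ := by gcongr
      have : 6 * a * (d - a ^ 2) * τ ^ 4 ≤ C4 * (K2 * y) ^ 2 := by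
        calc _ ≤ C4 * τ ^ 4 := by gcongr; exact (abs_le.1 h4).2
          _ ≤ _ := by gcongr
      linarith
    have f2 : 0 ≤ 2 * (1 - γ) * y * τ := by
      have : 0 ≤ 1 - γ := by linarith
      positivity
    have f3 : -(Cg * K2 * y ^ 2) ≤ (-4 * a + 4 * d * τ - 12 * a ^ 2 * τ
            - 2 * (1 + γ) * (2 * a + a ^ 2 * τ) + (d - a ^ 2) * τ * (1 + γ)) * (y * τ ^ 2) := by
      have := (abs_le.1 hg).1
      calc -(Cg * K2 * y ^ 2) = -(Cg * (y * (K2 * y))) := by ring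
        _ ≤ -(Cg * (y * τ ^ 2)) := by gcongr
        _ = -Cg * (y * τ ^ 2) := by ring
        _ ≤ _ := by gcongr
    have f4 : -(CE * y ^ 2) ≤ (τ * (2 * (1 + 2 * (a * τ))
            + 6 * (1 + a * τ) * (1 + γ) - 2 + 2 * (a * τ) - 3 * (1 + γ) * y)) * y ^ 2 := by
      have := (abs_le.1 hE).1
      calc -(CE * y ^ 2) = -CE * y ^ 2 := by ring
        _ ≤ _ := by gcongr
    have f5 : -(2 * Kn * Kh * K2 * y ^ 2) ≤ 2 * ((r * τ) ^ 2 - (-1 - a * τ + y) ^ 2)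
        * ((a - c) * τ ^ 2 - y * τ) := by
      have g1 : |2 * ((r * τ) ^ 2 - (-1 - a * τ + y) ^ 2) * ((a - c) * τ ^ 2 - y * τ)|
          ≤ 2 * (Kn * y) * (Kh * (K2 * y)) := by
        rw [abs_mul, abs_of_nonneg (by linarith : 0 ≤ 2 * ((r * τ) ^ 2 - (-1 - a * τ + y) ^ 2))]
        gcongr
        exact hh.trans (by gcongr)
      have := (abs_le.1 g1).1
      linarith
    have f6 : (C4 * K2 ^ 2 + Cg * K2 + CE + 2 * Kn * Kh * K2) * y ^ 2 ≤ M * y ^ 2 := by gcongr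
    linarith
end PartG

section PartH
set_option maxHeartbeats 1000000 in
lemma lemB {M c μ Λ τ y f n h Db Xn ρ₁ rT γ w q wr s2 X Em Err : ℝ}
    (g : Geo M τ y f n h Db Xn ρ₁ rT) (hγ : γ ≤ 1 / 2) (hc0 : 0 < c) (hc1 : c * (16 * M ^ 4) ≤ 1)
    (hμ : M ≤ μ) (hΛ : 200 * M ^ 4 * (1 + μ) ^ 2 ≤ Λ) (hs : 0 ≤ s2)
    (hX : X = rT * wr - f * q) (hErr : Err = Em + Λ * (Db + 2 * f * τ + μ * n) * w) :
    Err * (-X + h * w) - ((1 / 2) * (1 - γ) * (y * τ) * (wr ^ 2 + s2 + q ^ 2)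
      + c * τ ^ 2 * (wr ^ 2 + s2 - q ^ 2) - w * (X * τ ^ 2 + ρ₁ * q) + 2 * τ * q * h * w
      + 2 * Λ * X ^ 2 - 2 * Λ * h * w * X
      + (1 / 2) * Λ ^ 2 * (n * Db + Xn + 2 * μ * n ^ 2 + 2 * n * h) * w ^ 2)
    ≤ -((1 / 2) * Λ * X ^ 2 + (1 / 16) * (y * τ) * (wr ^ 2 + s2 + q ^ 2) + c * τ ^ 2 * s2
      + (1 / 4) * Λ ^ 2 * y ^ 2 * w ^ 2) + 2 * Em ^ 2 / Λ := by
  obtain ⟨M1, τ0, τM, y0, y1, yτ, τy, τ5, fM, rM, rm, fr, ny, nM, nr, hM, ρM, hQ, DbM, br⟩ := g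
  have M0 : 0 < M := by linarith
  have hμ1 : 1 ≤ μ := by linarith
  have hyτ0 : 0 < y * τ := by positivity
  have hM4 : 1 ≤ M ^ 4 := one_le_pow₀ M1
  have hμ2 : 1 ≤ (1 + μ) ^ 2 := one_le_pow₀ (by linarith)
  have hΛ1 : 200 * M ^ 4 ≤ Λ := by
    refine le_trans ?_ hΛ
    exact le_mul_of_one_le_right (by positivity) hμ2
  have hΛ4 : 200 ≤ Λ := by linarith
  have Λ0 : 0 < Λ := by linarith
  have hrT0 : 0 < rT := by
    by_contra hh
    have : M * rT ≤ 0 := mul_nonpos_of_nonneg_of_nonpos M0.le (not_lt.1 hh)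
    linarith
  -- wr² - q²
  have A1 : -(M ^ 2 * (2 * M * (|X| * |q|) + M * y * q ^ 2)) ≤ wr ^ 2 - q ^ 2 := by
    have e1 : rT ^ 2 * (wr ^ 2 - q ^ 2) = X ^ 2 + 2 * f * X * q - n * q ^ 2 := by
      rw [hX, nr]; ring
    have e2 : |f * X * q| ≤ M * (|X| * |q|) := by
      rw [abs_mul, abs_mul, mul_assoc]; gcongr
    have e3 : n * q ^ 2 ≤ M * y * q ^ 2 := by gcongr
    have e4 : -(2 * M * (|X| * |q|) + M * y * q ^ 2) ≤ rT ^ 2 * (wr ^ 2 - q ^ 2) := by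
      rw [e1]; linarith [(abs_le.1 e2).1, sq_nonneg X]
    set Z := 2 * M * (|X| * |q|) + M * y * q ^ 2 with hZ
    have hZ0 : 0 ≤ Z := by positivity
    by_contra hh
    push Not at hh
    have e5 : rT ^ 2 * (wr ^ 2 - q ^ 2) < rT ^ 2 * (-(M ^ 2 * Z)) := by gcongr
    have e6 : 1 ≤ (M * rT) ^ 2 := one_le_pow₀ rm
    have e7 : Z ≤ (M * rT) ^ 2 * Z := le_mul_of_one_le_left hZ0 e6
    linarith
  have hcM : c * M ^ 4 ≤ 1 / 16 := by linarith
  have A2 : c * τ ^ 2 * (M ^ 2 * (M * y * q ^ 2)) ≤ 1 / 16 * (y * τ) * q ^ 2 := by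
    calc c * τ ^ 2 * (M ^ 2 * (M * y * q ^ 2)) = (c * M ^ 3) * τ * (y * τ * q ^ 2) := by ring
      _ ≤ (c * M ^ 3) * M * (y * τ * q ^ 2) := by gcongr
      _ = (c * M ^ 4) * (y * τ * q ^ 2) := by ring
      _ ≤ 1 / 16 * (y * τ * q ^ 2) := by gcongr
      _ = _ := by ring
  have hτ3 : τ ^ 3 ≤ M ^ 2 * y := by
    calc τ ^ 3 = τ ^ 2 * τ := by ring
      _ ≤ (M * y) * M := by gcongr
      _ = _ := by ring
  have A3 : c * τ ^ 2 * (M ^ 2 * (2 * M * (|X| * |q|))) ≤ 1 / 16 * (y * τ) * q ^ 2 + X ^ 2 := by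
    -- multiply by y
    have e1 : 2 * (c * M ^ 3 * τ ^ 2) * (|X| * |q|) * y
        ≤ (1 / 16 * (y * τ) * q ^ 2) * y + 16 * (c * M ^ 3) ^ 2 * τ ^ 3 * X ^ 2 := by
      have h1 := mul_nonneg (mul_nonneg τ0.le (by norm_num : (0:ℝ) ≤ 1/16))
        (sq_nonneg (y * |q| - 16 * c * M ^ 3 * τ * |X|))
      have h2 := sq_abs X
      have h3 := sq_abs q
      rw [← h2, ← h3]
      linarith
    have e2 : 16 * (c * M ^ 3) ^ 2 * τ ^ 3 * X ^ 2 ≤ X ^ 2 * y := by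
      calc 16 * (c * M ^ 3) ^ 2 * τ ^ 3 * X ^ 2 ≤ 16 * (c * M ^ 3) ^ 2 * (M ^ 2 * y) * X ^ 2 := by gcongr
        _ = 16 * (c * M ^ 4) ^ 2 * (X ^ 2 * y) := by ring
        _ ≤ 16 * (1 / 16) ^ 2 * (X ^ 2 * y) := by gcongr
        _ ≤ 1 * (X ^ 2 * y) := by gcongr; norm_num
        _ = _ := by ring
    refine le_of_mul_le_mul_right (a := y) ?_ y0
    linarith
  have A4 : w * (X * τ ^ 2) ≤ X ^ 2 + M ^ 2 * (y ^ 2 * w ^ 2) := by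
    have e1 : τ ^ 4 * w ^ 2 ≤ M ^ 2 * (y ^ 2 * w ^ 2) := by
      calc τ ^ 4 * w ^ 2 = (τ ^ 2) ^ 2 * w ^ 2 := by ring
        _ ≤ (M * y) ^ 2 * w ^ 2 := by gcongr
        _ = _ := by ring
    linarith [sq_nonneg (X - w * τ ^ 2 / 2), sq_nonneg (τ ^ 2 * w)]
  have key : ∀ κ : ℝ, 0 < κ → τ ^ 3 * (|w| * |q|) * κ ≤ 1 / 32 * (y * τ) * q ^ 2
      + 8 * κ ^ 2 * M * (y ^ 2 * w ^ 2) := by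
    intro κ hκ
    have e1 : 8 * κ ^ 2 * τ ^ 5 * w ^ 2 ≤ 8 * κ ^ 2 * (M * y ^ 3) * w ^ 2 := by gcongr
    have h1 := mul_nonneg (mul_nonneg τ0.le (by norm_num : (0:ℝ) ≤ 1/32))
        (sq_nonneg (y * |q| - 16 * κ * τ ^ 2 * |w|))
    have h2 := sq_abs w
    have h3 := sq_abs q
    refine le_of_mul_le_mul_right (a := y) ?_ y0
    rw [← h2] at e1 ⊢; rw [← h3]
    linarith
  have A5 : w * (ρ₁ * q) ≤ 1 / 32 * (y * τ) * q ^ 2 + 8 * M ^ 3 * (y ^ 2 * w ^ 2) := by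
    have e1 : w * (ρ₁ * q) ≤ τ ^ 3 * (|w| * |q|) * M := by
      refine (le_abs_self _).trans ?_
      rw [abs_mul, abs_mul]
      calc |w| * (|ρ₁| * |q|) ≤ |w| * (M * τ ^ 3 * |q|) := by gcongr
        _ = _ := by ring
    linarith [key M M0]
  have A6 : -(2 * τ * q * h * w) ≤ 1 / 32 * (y * τ) * q ^ 2 + 32 * M ^ 3 * (y ^ 2 * w ^ 2) := by
    have e1 : -(2 * τ * q * h * w) ≤ τ ^ 3 * (|w| * |q|) * (2 * M) := by
      refine (neg_le_abs _).trans ?_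
      rw [abs_mul, abs_mul, abs_mul, abs_mul, abs_two, abs_of_pos τ0]
      calc 2 * τ * |q| * |h| * |w| ≤ 2 * τ * |q| * (M * τ ^ 2) * |w| := by gcongr
        _ = _ := by ring
    linarith [key (2 * M) (by positivity)]
  have hh2 : |h| ≤ M ^ 2 * y := by
    calc |h| ≤ M * τ ^ 2 := hM
      _ ≤ M * (M * y) := by gcongr
      _ = _ := by ring
  have A7 : 2 * Λ * h * w * X ≤ 1 / 2 * Λ * X ^ 2 + 2 * Λ * M ^ 4 * (y ^ 2 * w ^ 2) := by
    have e1 : h ^ 2 * w ^ 2 ≤ (M ^ 2 * y) ^ 2 * w ^ 2 := by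
      rw [← sq_abs h]; gcongr
    have e2 : h * w * X ≤ 1 / 4 * X ^ 2 + h ^ 2 * w ^ 2 := by linarith [sq_nonneg (X / 2 - h * w)]
    have e3 : 2 * Λ * (h * w * X) ≤ 2 * Λ * (1 / 4 * X ^ 2 + (M ^ 2 * y) ^ 2 * w ^ 2) := by
      gcongr; linarith
    linarith
  have A8 : y ^ 2 ≤ n * Db + Xn + 2 * μ * n ^ 2 + 2 * n * h := by
    have e1 : y ^ 2 ≤ n ^ 2 := by gcongr
    have e2 : M * y ^ 2 ≤ μ * n ^ 2 := by gcongr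
    have e3 : y ^ 2 ≤ M * y ^ 2 := le_mul_of_one_le_left (by positivity) M1
    linarith
  have A9 : (1 / 2) * Λ ^ 2 * (y ^ 2 * w ^ 2) ≤ (1 / 2) * Λ ^ 2 *
      (n * Db + Xn + 2 * μ * n ^ 2 + 2 * n * h) * w ^ 2 := by
    rw [← mul_assoc]; gcongr
  have A10 : Err * (-X + h * w) ≤ 2 * Em ^ 2 / Λ + 2 * Λ * (M * (1 + μ)) ^ 2 * (y ^ 2 * w ^ 2)
      + 1 / 2 * Λ * X ^ 2 + 1 / 2 * Λ * M ^ 4 * (y ^ 2 * w ^ 2) := by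
    have e1 : h ^ 2 * w ^ 2 ≤ (M ^ 2 * y) ^ 2 * w ^ 2 := by
      rw [← sq_abs h]; gcongr
    have e2 : (-X + h * w) ^ 2 ≤ 2 * X ^ 2 + 2 * M ^ 4 * (y ^ 2 * w ^ 2) := by
      linarith [sq_nonneg (X + h * w)]
    have e3 : Err ^ 2 ≤ 2 * Em ^ 2 + 2 * Λ ^ 2 * ((M * (1 + μ)) ^ 2 * (y ^ 2 * w ^ 2)) := by
      have g1 : |Db + 2 * f * τ + μ * n| ≤ M * (1 + μ) * y := by
        have hn0 : 0 < n := by linarith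
        refine (abs_add_le _ _).trans ?_
        rw [abs_of_pos (by positivity : 0 < μ * n)]
        have : μ * n ≤ μ * (M * y) := by gcongr
        linarith
      have g2 : (Db + 2 * f * τ + μ * n) ^ 2 ≤ (M * (1 + μ) * y) ^ 2 := by
        rw [← sq_abs]; gcongr
      have g3 : Λ ^ 2 * (Db + 2 * f * τ + μ * n) ^ 2 * w ^ 2 ≤ Λ ^ 2 * (M * (1 + μ) * y) ^ 2 * w ^ 2 := by
        gcongr
      rw [hErr]
      linarith [sq_nonneg (Em - Λ * (Db + 2 * f * τ + μ * n) * w)]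
    have e4 : Err * (-X + h * w) ≤ Err ^ 2 / Λ + Λ / 4 * (-X + h * w) ^ 2 := by
      have : Err ^ 2 / Λ + Λ / 4 * (-X + h * w) ^ 2 - Err * (-X + h * w)
          = (Err - Λ / 2 * (-X + h * w)) ^ 2 / Λ := by field_simp; ring
      have : 0 ≤ (Err - Λ / 2 * (-X + h * w)) ^ 2 / Λ := by positivity
      linarith
    have e5 : Err ^ 2 / Λ ≤ 2 * Em ^ 2 / Λ + 2 * Λ * ((M * (1 + μ)) ^ 2 * (y ^ 2 * w ^ 2)) := by
      have : 2 * Em ^ 2 / Λ + 2 * Λ * ((M * (1 + μ)) ^ 2 * (y ^ 2 * w ^ 2))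
        = (2 * Em ^ 2 + 2 * Λ ^ 2 * ((M * (1 + μ)) ^ 2 * (y ^ 2 * w ^ 2))) / Λ := by
        field_simp
      rw [this]; gcongr
    have e6 : Λ / 4 * (-X + h * w) ^ 2 ≤ Λ / 4 * (2 * X ^ 2 + 2 * M ^ 4 * (y ^ 2 * w ^ 2)) := by gcongr
    linarith
  have A11 : 1 / 4 * (y * τ) * (wr ^ 2 + s2 + q ^ 2) ≤
      (1 / 2) * (1 - γ) * (y * τ) * (wr ^ 2 + s2 + q ^ 2) := by
    gcongr; linarith
  have A12 : -(c * τ ^ 2 * (M ^ 2 * (2 * M * (|X| * |q|)))) - c * τ ^ 2 * (M ^ 2 * (M * y * q ^ 2))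
      ≤ c * τ ^ 2 * (wr ^ 2 - q ^ 2) := by
    have := mul_le_mul_of_nonneg_left A1 (by positivity : 0 ≤ c * τ ^ 2)
    linarith
  have A13 : (M ^ 2 + 8 * M ^ 3 + 32 * M ^ 3 + 2 * Λ * M ^ 4 + 1 / 2 * Λ * M ^ 4
      + 2 * Λ * (M * (1 + μ)) ^ 2) * (y ^ 2 * w ^ 2) ≤ 1 / 4 * Λ ^ 2 * (y ^ 2 * w ^ 2) := by
    gcongr
    have e1 : M ^ 2 ≤ M ^ 4 := pow_le_pow_right₀ M1 (by norm_num)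
    have e2 : M ^ 3 ≤ M ^ 4 := pow_le_pow_right₀ M1 (by norm_num)
    have e3 : Λ * (200 * M ^ 4 * (1 + μ) ^ 2) ≤ Λ * Λ := by gcongr
    have e4 : Λ * M ^ 2 * (1 + μ) ^ 2 ≤ Λ * M ^ 4 * (1 + μ) ^ 2 := by gcongr
    have e5 : Λ * M ^ 4 * 1 ≤ Λ * M ^ 4 * (1 + μ) ^ 2 := by gcongr
    have e6 : 1 * M ^ 4 ≤ Λ * M ^ 4 := by gcongr; linarith
    linarith
  have A14 : 0 ≤ (y * τ) * wr ^ 2 := by positivity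
  have A15 : 0 ≤ (y * τ) * s2 := by positivity
  have A16 : 0 ≤ (Λ - 200) * X ^ 2 := by
    have : 0 ≤ Λ - 200 := by linarith
    positivity
  have A17 := sq_nonneg X
  clear hc1 hμ hΛ hX hErr τ5 fM rM rm fr nr hM ρM hQ DbM br hh2 key A1
  linarith
end PartH

section PartI
lemma sq_sum6 (a b c d e f : ℝ) : (a + b + c + d + e + f) ^ 2 ≤
    6 * (a ^ 2 + b ^ 2 + c ^ 2 + d ^ 2 + e ^ 2 + f ^ 2) := by
  linarith [sq_nonneg (a - b), sq_nonneg (a - c), sq_nonneg (a - d), sq_nonneg (a - e), sq_nonneg (a - f),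
    sq_nonneg (b - c), sq_nonneg (b - d), sq_nonneg (b - e), sq_nonneg (b - f),
    sq_nonneg (c - d), sq_nonneg (c - e), sq_nonneg (c - f), sq_nonneg (d - e), sq_nonneg (d - f),
    sq_nonneg (e - f)]

set_option maxHeartbeats 1000000 in
lemma lemC {M Λ τ y f n h Db Xn ρ₁ rT w q wr X Kc W g φ φ0 V0 : ℝ} {V ω s φi : Fin 3 → ℝ}
    (G : Geo M τ y f n h Db Xn ρ₁ rT) (hΛ : 1 ≤ Λ) (hKc : 0 ≤ Kc)
    (hω : ∀ i, |ω i| ≤ 1) (hV : ∀ i, |V i| ≤ Kc * τ)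
    (hVh : |-V0 + ∑ i, V i * ω i| ≤ Kc * y) (hW : |W| ≤ Kc * y)
    (hw : w = g * φ) (hq : q = g * φ0 + (Λ * f + τ) * w)
    (hp : ∀ i, ω i * wr + s i = g * φi i + Λ * (rT * ω i) * w)
    (hX : X = rT * wr - f * q) :
    (g * (V0 * φ0 + ∑ i, V i * φi i + W * φ)) ^ 2 ≤
      500 * Kc ^ 2 * M ^ 6 * (X ^ 2 + y * τ * q ^ 2 + τ ^ 2 * (∑ i, s i ^ 2) + Λ ^ 2 * y ^ 2 * w ^ 2) := by
  obtain ⟨M1, τ0, τM, y0, y1, yτ, τy, τ5, fM, rM, rm, fr, ny, nM, nr, hM, ρM, hQ, DbM, br⟩ := G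
  have M0 : 0 < M := by linarith
  simp only [Fin.sum_univ_three] at *
  set v := V 0 * ω 0 + V 1 * ω 1 + V 2 * ω 2 with hv
  set vh := -V0 + v with hvh
  set S := s 0 ^ 2 + s 1 ^ 2 + s 2 ^ 2 with hS
  have hid : g * (V0 * φ0 + (V 0 * φi 0 + V 1 * φi 1 + V 2 * φi 2) + W * φ)
      = v * (q + wr) + - (vh * q) + - (v * ((Λ * (f + rT) + τ) * w)) + vh * ((Λ * f + τ) * w)
        + (V 0 * s 0 + V 1 * s 1 + V 2 * s 2) + W * w := by
    have h0 := hp 0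
    have h1 := hp 1
    have h2 := hp 2
    rw [hvh]
    linear_combination (-V 0) * h0 - V 1 * h1 - V 2 * h2 - V0 * hq - W * hw - (wr - Λ * rT * w) * hv
  rw [hid]
  have hv1 : |v| ≤ 3 * (Kc * τ) := by
    have e : ∀ i, |V i * ω i| ≤ Kc * τ := fun i => by
      rw [abs_mul]
      calc |V i| * |ω i| ≤ (Kc * τ) * 1 := by
            gcongr
            exacts [hV i, hω i]
        _ = _ := by ring
    rw [hv]
    refine (abs_add_three _ _ _).trans ?_
    linarith [e 0, e 1, e 2]
  have hv2 : v ^ 2 ≤ 9 * Kc ^ 2 * τ ^ 2 := by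
    rw [← sq_abs]
    calc |v| ^ 2 ≤ (3 * (Kc * τ)) ^ 2 := by gcongr
      _ = _ := by ring
  have hvh2 : vh ^ 2 ≤ Kc ^ 2 * y ^ 2 := by
    rw [← sq_abs, ← mul_pow]; gcongr
  have hW2 : W ^ 2 ≤ Kc ^ 2 * y ^ 2 := by
    rw [← sq_abs, ← mul_pow]; gcongr
  have hΛ2 : 1 ≤ Λ ^ 2 := one_le_pow₀ hΛ
  have hf2 : f ^ 2 ≤ M ^ 2 := by rw [← sq_abs]; gcongr
  have hfr2 : (f + rT) ^ 2 ≤ M ^ 2 * y ^ 2 := by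
    rw [← sq_abs, ← mul_pow, add_comm f rT]; gcongr
  have hτ2 : τ ^ 2 ≤ M ^ 2 := by gcongr
  have hτ4 : τ ^ 4 ≤ M ^ 2 * y ^ 2 := by
    calc τ ^ 4 = (τ ^ 2) ^ 2 := by ring
      _ ≤ (M * y) ^ 2 := by gcongr
      _ = _ := by ring
  have hM6 : ∀ k, k ≤ 6 → M ^ k ≤ M ^ 6 := fun k hk => pow_le_pow_right₀ M1 hk
  have hS0 : 0 ≤ S := by positivity
  have hM61 : 1 ≤ M ^ 6 := one_le_pow₀ M1
  -- 1
  have qw : (q + wr) ^ 2 ≤ M ^ 2 * (2 * X ^ 2 + 2 * (M ^ 2 * y ^ 2 * q ^ 2)) := by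
    have e1 : rT * (q + wr) = X + (f + rT) * q := by rw [hX]; ring
    have e2 : (rT * (q + wr)) ^ 2 ≤ 2 * X ^ 2 + 2 * (M ^ 2 * y ^ 2 * q ^ 2) := by
      rw [e1]
      have : (f + rT) ^ 2 * q ^ 2 ≤ M ^ 2 * y ^ 2 * q ^ 2 := by gcongr
      linarith [sq_nonneg (X - (f + rT) * q)]
    have e3 : 1 ≤ (M * rT) ^ 2 := one_le_pow₀ rm
    calc (q + wr) ^ 2 ≤ (M * rT) ^ 2 * (q + wr) ^ 2 := le_mul_of_one_le_left (by positivity) e3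
      _ = M ^ 2 * (rT * (q + wr)) ^ 2 := by ring
      _ ≤ _ := by gcongr
  have t1 : (v * (q + wr)) ^ 2 ≤ 18 * Kc ^ 2 * M ^ 6 * (X ^ 2 + y * τ * q ^ 2) := by
    have a1 : τ ^ 2 * y ^ 2 * q ^ 2 ≤ M * (y * τ * q ^ 2) := by
      calc τ ^ 2 * y ^ 2 * q ^ 2 = (τ * y) * (y * τ * q ^ 2) := by ring
        _ ≤ (M * 1) * (y * τ * q ^ 2) := by gcongr
        _ = _ := by ring
    calc (v * (q + wr)) ^ 2 = v ^ 2 * (q + wr) ^ 2 := by ring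
      _ ≤ (9 * Kc ^ 2 * τ ^ 2) * (M ^ 2 * (2 * X ^ 2 + 2 * (M ^ 2 * y ^ 2 * q ^ 2))) := by gcongr
      _ = 18 * Kc ^ 2 * (M ^ 2 * (τ ^ 2 * X ^ 2)) + 18 * Kc ^ 2 * (M ^ 4 * (τ ^ 2 * y ^ 2 * q ^ 2)) := by ring
      _ ≤ 18 * Kc ^ 2 * (M ^ 2 * (M ^ 2 * X ^ 2)) + 18 * Kc ^ 2 * (M ^ 4 * (M * (y * τ * q ^ 2))) := by gcongr
      _ = 18 * Kc ^ 2 * (M ^ 4 * X ^ 2) + 18 * Kc ^ 2 * (M ^ 5 * (y * τ * q ^ 2)) := by ring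
      _ ≤ 18 * Kc ^ 2 * (M ^ 6 * X ^ 2) + 18 * Kc ^ 2 * (M ^ 6 * (y * τ * q ^ 2)) := by
          have := hM6 4 (by norm_num)
          have := hM6 5 (by norm_num)
          gcongr
      _ = _ := by ring
  have t2 : (-(vh * q)) ^ 2 ≤ Kc ^ 2 * M ^ 6 * (y * τ * q ^ 2) := by
    calc (-(vh * q)) ^ 2 = vh ^ 2 * q ^ 2 := by ring
      _ ≤ (Kc ^ 2 * y ^ 2) * q ^ 2 := by gcongr
      _ = Kc ^ 2 * (y * y * q ^ 2) := by ring
      _ ≤ Kc ^ 2 * (y * (M * τ) * q ^ 2) := by gcongr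
      _ = Kc ^ 2 * M ^ 1 * (y * τ * q ^ 2) := by ring
      _ ≤ _ := by
          have := hM6 1 (by norm_num)
          gcongr
  have t3 : (-(v * ((Λ * (f + rT) + τ) * w))) ^ 2 ≤ 36 * Kc ^ 2 * M ^ 6 * (Λ ^ 2 * y ^ 2 * w ^ 2) := by
    have a1 : (Λ * (f + rT) + τ) ^ 2 ≤ 2 * (Λ ^ 2 * (M ^ 2 * y ^ 2)) + 2 * τ ^ 2 := by
      have : Λ ^ 2 * (f + rT) ^ 2 ≤ Λ ^ 2 * (M ^ 2 * y ^ 2) := by gcongr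
      linarith [sq_nonneg (Λ * (f + rT) - τ)]
    have a2 : M ^ 2 * y ^ 2 * w ^ 2 ≤ Λ ^ 2 * (M ^ 2 * y ^ 2 * w ^ 2) :=
      le_mul_of_one_le_left (by positivity) hΛ2
    calc (-(v * ((Λ * (f + rT) + τ) * w))) ^ 2 = v ^ 2 * ((Λ * (f + rT) + τ) ^ 2 * w ^ 2) := by ring
      _ ≤ (9 * Kc ^ 2 * τ ^ 2) * ((2 * (Λ ^ 2 * (M ^ 2 * y ^ 2)) + 2 * τ ^ 2) * w ^ 2) := by gcongr
      _ = 18 * Kc ^ 2 * (τ ^ 2 * (Λ ^ 2 * (M ^ 2 * y ^ 2)) * w ^ 2 + τ ^ 4 * w ^ 2) := by ring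
      _ ≤ 18 * Kc ^ 2 * (M ^ 2 * (Λ ^ 2 * (M ^ 2 * y ^ 2)) * w ^ 2 + M ^ 2 * y ^ 2 * w ^ 2) := by gcongr
      _ ≤ 18 * Kc ^ 2 * (M ^ 2 * (Λ ^ 2 * (M ^ 2 * y ^ 2)) * w ^ 2 + Λ ^ 2 * (M ^ 2 * y ^ 2 * w ^ 2)) := by gcongr
      _ = 18 * Kc ^ 2 * (M ^ 4 + M ^ 2) * (Λ ^ 2 * y ^ 2 * w ^ 2) := by ring
      _ ≤ 18 * Kc ^ 2 * (M ^ 6 + M ^ 6) * (Λ ^ 2 * y ^ 2 * w ^ 2) := by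
          have := hM6 4 (by norm_num)
          have := hM6 2 (by norm_num)
          gcongr
      _ = _ := by ring
  have t4 : (vh * ((Λ * f + τ) * w)) ^ 2 ≤ 4 * Kc ^ 2 * M ^ 6 * (Λ ^ 2 * y ^ 2 * w ^ 2) := by
    have a1 : (Λ * f + τ) ^ 2 ≤ 4 * (Λ ^ 2 * M ^ 2) := by
      have b1 : Λ ^ 2 * f ^ 2 ≤ Λ ^ 2 * M ^ 2 := by gcongr
      have b2 : M ^ 2 ≤ Λ ^ 2 * M ^ 2 := le_mul_of_one_le_left (by positivity) hΛ2
      linarith [sq_nonneg (Λ * f - τ)]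
    calc (vh * ((Λ * f + τ) * w)) ^ 2 = vh ^ 2 * ((Λ * f + τ) ^ 2 * w ^ 2) := by ring
      _ ≤ (Kc ^ 2 * y ^ 2) * ((4 * (Λ ^ 2 * M ^ 2)) * w ^ 2) := by gcongr
      _ = 4 * Kc ^ 2 * M ^ 2 * (Λ ^ 2 * y ^ 2 * w ^ 2) := by ring
      _ ≤ _ := by
          have := hM6 2 (by norm_num)
          gcongr
  have t5 : (V 0 * s 0 + V 1 * s 1 + V 2 * s 2) ^ 2 ≤ 3 * Kc ^ 2 * M ^ 6 * (τ ^ 2 * S) := by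
    have e : ∀ i, V i ^ 2 * s i ^ 2 ≤ (Kc * τ) ^ 2 * s i ^ 2 := fun i => by
      have : V i ^ 2 ≤ (Kc * τ) ^ 2 := by
        rw [← sq_abs]
        have := hV i
        gcongr
      gcongr
    calc (V 0 * s 0 + V 1 * s 1 + V 2 * s 2) ^ 2 ≤ 3 * Kc ^ 2 * (τ ^ 2 * S) := by
          have := e 0
          have := e 1
          have := e 2
          rw [hS]
          linarith [sq_nonneg (V 0 * s 0 - V 1 * s 1), sq_nonneg (V 0 * s 0 - V 2 * s 2),
            sq_nonneg (V 1 * s 1 - V 2 * s 2)]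
      _ = 3 * Kc ^ 2 * 1 * (τ ^ 2 * S) := by ring
      _ ≤ _ := by gcongr
  have t6 : (W * w) ^ 2 ≤ Kc ^ 2 * M ^ 6 * (Λ ^ 2 * y ^ 2 * w ^ 2) := by
    calc (W * w) ^ 2 = W ^ 2 * w ^ 2 := by ring
      _ ≤ Kc ^ 2 * y ^ 2 * w ^ 2 := by gcongr
      _ = Kc ^ 2 * 1 * (1 * y ^ 2 * w ^ 2) := by ring
      _ ≤ _ := by gcongr
  have t7 := sq_sum6 (v * (q + wr)) (-(vh * q)) (-(v * ((Λ * (f + rT) + τ) * w))) (vh * ((Λ * f + τ) * w))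
        (V 0 * s 0 + V 1 * s 1 + V 2 * s 2) (W * w)
  refine t7.trans ?_
  have p0 : 0 ≤ Kc ^ 2 * M ^ 6 := by positivity
  have p1 : 0 ≤ Kc ^ 2 * M ^ 6 * X ^ 2 := by positivity
  have p2 : 0 ≤ Kc ^ 2 * M ^ 6 * (y * τ * q ^ 2) := by positivity
  have p3 : 0 ≤ Kc ^ 2 * M ^ 6 * (τ ^ 2 * S) := by positivity
  have p4 : 0 ≤ Kc ^ 2 * M ^ 6 * (Λ ^ 2 * y ^ 2 * w ^ 2) := by positivity
  clear t7 qw hid hq hp hX hw hv hvh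
  linarith
end PartI

section PartJ
def ang (u : Spc → ℝ) (i : Fin 3) (p : Spc) : ℝ := pd i.succ u p - p.2 i / rr p * dr u p
def s2 (u : Spc → ℝ) (p : Spc) : ℝ := ∑ i, ang u i p ^ 2

lemma s2_nonneg (u : Spc → ℝ) (p : Spc) : 0 ≤ s2 u p := Finset.sum_nonneg fun _ _ => sq_nonneg _

lemma om_sum {p : Spc} (hr : rr p ≠ 0) : (p.2 0 / rr p) ^ 2 + (p.2 1 / rr p) ^ 2 + (p.2 2 / rr p) ^ 2 = 1 := by
  have h := rho_eq p
  simp only [rho, Fin.sum_univ_three] at h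
  field_simp
  linarith

lemma om_abs (p : Spc) (i : Fin 3) : |p.2 i / rr p| ≤ 1 := by
  have h1 : |p.2 i| ≤ rr p := by
    have := EuclideanSpace.norm_sq_eq p.2
    unfold rr
    refine abs_le_of_sq_le_sq ?_ (norm_nonneg _)
    rw [this]
    have := Finset.single_le_sum (f := fun i => ‖p.2 i‖ ^ 2) (fun i _ => by positivity) (Finset.mem_univ i)
    simpa using this
  have h0 : 0 ≤ rr p := norm_nonneg _
  rw [abs_div, abs_of_nonneg h0]
  exact div_le_one_of_le₀ h1 h0

lemma sum_pd_sq (u : Spc → ℝ) {p : Spc} (hr : rr p ≠ 0) :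
    ∑ i : Fin 3, pd i.succ u p ^ 2 = dr u p ^ 2 + s2 u p := by
  have h := om_sum hr
  simp only [s2, ang, dr, dxi, Fin.sum_univ_three]
  generalize p.2 0 / rr p = a at *
  generalize p.2 1 / rr p = b at *
  generalize p.2 2 / rr p = c at *
  linear_combination (-(a * pd (Fin.succ 0) u p + b * pd (Fin.succ 1) u p + c * pd (Fin.succ 2) u p) ^ 2) * h

namespace Par
variable (P : Par) {p : Spc}

lemma X_eq (u : Spc → ℝ) (hr : rr p ≠ 0) :
    P.X u p = rr p * (P.T p)⁻¹ * dr u p - P.f p * pd 0 u p := by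
  simp only [X, Xop, A, dr, dxi, Fin.sum_univ_three]
  field_simp

def GeoP (M : ℝ) (p : Spc) : Prop :=
  Geo M (P.T p)⁻¹ (P.y p) (P.f p) (P.n p) (P.h p) (P.Db p) (P.Xn p) (P.ρ₁ p) (rr p * (P.T p)⁻¹)

lemma GeoP.M0 {P : Par} {M : ℝ} (g : P.GeoP M p) : 0 < M := by
  have := g.M1
  linarith

lemma GeoP.Tp {P : Par} {M : ℝ} (g : P.GeoP M p) : 0 < P.T p := inv_pos.1 g.τ0

lemma GeoP.r0 {P : Par} {M : ℝ} (g : P.GeoP M p) : rr p ≠ 0 := by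
  intro h
  have := g.rm
  rw [h] at this
  norm_num at this

lemma geoP_of {M R₁ R₂ : ℝ} (hM : ∀ T r a y c, Pt P.σ P.d P.ε P.γ R₁ R₂ T r a y c →
      Geo M T⁻¹ y (-1 - a * T⁻¹ + y) ((r * T⁻¹) ^ 2 - (-1 - a * T⁻¹ + y) ^ 2)
        ((a - c) * T⁻¹ ^ 2 - y * T⁻¹)
        (3 * T⁻¹ - (T⁻¹ + 2 * a * T⁻¹ ^ 2 - (1 + P.γ) * y * T⁻¹))
        (2 * (r * T⁻¹) ^ 2 * T⁻¹ * (1 + (-1 - a * T⁻¹ + y))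
          + 2 * (-1 - a * T⁻¹ + y) * (r * T⁻¹) ^ 2 * T⁻¹
          + 2 * (-1 - a * T⁻¹ + y) ^ 2 * (T⁻¹ + 2 * a * T⁻¹ ^ 2 - (1 + P.γ) * y * T⁻¹))
        (2 * (a - c) * T⁻¹ ^ 3 - (1 + P.γ) * y * T⁻¹ ^ 2)
        (r * T⁻¹)) (h : Pt P.σ P.d P.ε P.γ R₁ R₂ (P.T p) (rr p) (P.a p) (P.y p) P.c) : P.GeoP M p := by
  have g := hM _ _ _ _ _ h
  unfold GeoP
  convert g using 1
  · rfl
  · unfold n f; rw [rho_eq]; ring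
  · rfl
  · unfold Db ft yt; ring
  · unfold Xn ft yt f; rw [rho_eq]; ring
  · unfold ρ₁; ring

lemma lemBp {M l : ℝ} {φ : Spc → ℝ} (g : P.GeoP M p) (hγ0 : P.γ ≠ 0) (hγ : P.γ ≤ 1 / 2)
    (hc0 : 0 < P.c) (hc1 : P.c * (16 * M ^ 4) ≤ 1) (hμ : M ≤ P.μ)
    (hΛ : 200 * M ^ 4 * (1 + P.μ) ^ 2 ≤ l * P.e p) (hφ : ContDiffAt ℝ 2 φ p) :
    P.Err l (P.w l φ) p * P.K (P.w l φ) p - P.Bulk l (P.w l φ) p ≤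
      -((1 / 2) * (l * P.e p) * P.X (P.w l φ) p ^ 2
        + (1 / 16) * (P.y p * (P.T p)⁻¹) * pd 0 (P.w l φ) p ^ 2
        + P.c * (P.T p)⁻¹ ^ 2 * s2 (P.w l φ) p
        + (1 / 4) * (l * P.e p) ^ 2 * P.y p ^ 2 * P.w l φ p ^ 2) + 2 * P.Em l φ p ^ 2 / (l * P.e p) := by
  have hμ0 : P.μ ≠ 0 := by linarith [g.M1]
  have hE := P.Err_eq l hγ0 hμ0 g.Tp hφ
  set u := P.w l φ with hu
  have h1 := lemB (w := u p) (q := pd 0 u p) (wr := dr u p) (s2 := s2 u p) (X := P.X u p)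
    (Em := P.Em l φ p) (Err := P.Err l u p) g hγ hc0 hc1 hμ hΛ (s2_nonneg _ _) (P.X_eq u g.r0)
    (by rw [hE]; ring)
  have h2 : P.Bulk l u p = ((1 / 2) * (1 - P.γ) * (P.y p * (P.T p)⁻¹) * (dr u p ^ 2 + s2 u p + pd 0 u p ^ 2)
      + P.c * (P.T p)⁻¹ ^ 2 * (dr u p ^ 2 + s2 u p - pd 0 u p ^ 2)
      - u p * (P.X u p * (P.T p)⁻¹ ^ 2 + P.ρ₁ p * pd 0 u p) + 2 * (P.T p)⁻¹ * pd 0 u p * P.h p * u p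
      + 2 * (l * P.e p) * P.X u p ^ 2 - 2 * (l * P.e p) * P.h p * u p * P.X u p
      + (1 / 2) * (l * P.e p) ^ 2 * (P.n p * P.Db p + P.Xn p + 2 * P.μ * P.n p ^ 2 + 2 * P.n p * P.h p) * u p ^ 2) := by
    unfold Bulk
    rw [sum_pd_sq u g.r0]; ring
  rw [← h2] at h1
  refine le_trans (le_of_eq ?_) (h1.trans ?_)
  · unfold K; rfl
  · have a1 := g.y0
    have a2 := g.τ0
    have : 0 ≤ (1 / 16) * (P.y p * (P.T p)⁻¹) * (dr u p ^ 2 + s2 u p) := by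
      have := s2_nonneg u p
      positivity
    linarith
end Par
end PartJ

section PartK
namespace Par
variable (P : Par) {p : Spc}

lemma et_one {s : ℝ} (hk : P.k1 < P.k2) (hs : P.k2 ≤ s) : P.et s = 1 := by
  unfold et
  apply Real.smoothTransition.one_of_one_le
  rw [le_div_iff₀ (by linarith)]; linarith

lemma et_zero {s : ℝ} (hk : P.k1 < P.k2) (hs : s ≤ P.k1) : P.et s = 0 := by
  unfold et
  apply Real.smoothTransition.zero_of_nonpos
  exact div_nonpos_of_nonpos_of_nonneg (by linarith) (by linarith)

lemma et_nonneg (s : ℝ) : 0 ≤ P.et s := Real.smoothTransition.nonneg _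
lemma et_le_one (s : ℝ) : P.et s ≤ 1 := Real.smoothTransition.le_one _

lemma et_der {s : ℝ} (hk : P.k1 < P.k2) (hs : P.k2 < s) : deriv P.et s = 0 ∧ deriv (deriv P.et) s = 0 := by
  have h1 : P.et =ᶠ[𝓝 s] fun _ => (1 : ℝ) := by
    filter_upwards [lt_mem_nhds hs] with t ht using P.et_one hk (le_of_lt ht)
  have h2 : deriv P.et =ᶠ[𝓝 s] fun _ => (0 : ℝ) := by
    have := h1.deriv
    simpa using this
  exact ⟨h2.self_of_nhds, by rw [h2.deriv_eq]; simp⟩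

lemma sum_sq_le {N : ℕ} (z : Fin N → ℝ) : (∑ J, z J) ^ 2 ≤ N * ∑ J, z J ^ 2 := by
  have := sq_sum_le_card_mul_sum_sq (s := (Finset.univ : Finset (Fin N))) (f := z)
  simpa using this

/-- the good quantity -/
def YY (l : ℝ) (u : Spc → ℝ) (p : Spc) : ℝ := P.X u p ^ 2 + P.y p * (P.T p)⁻¹ * pd 0 u p ^ 2
  + (P.T p)⁻¹ ^ 2 * s2 u p + (l * P.e p) ^ 2 * P.y p ^ 2 * u p ^ 2

lemma lemZ {M l Kc : ℝ} {φ : Spc → ℝ} {V : Fin 4 → ℝ} {W : ℝ} (g : P.GeoP M p)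
    (hγ0 : P.γ ≠ 0) (hμ : P.μ ≠ 0) (hk : P.k1 < P.k2) (hF : P.k2 < P.F p)
    (hΛ : 1 ≤ l * P.e p) (hφ : ContDiffAt ℝ 2 φ p) (hKc : 0 ≤ Kc)
    (hV : ∀ α, |V α| ≤ Kc * (P.T p)⁻¹) (hVh : |∑ α, V α * hatom p α| ≤ Kc * P.y p)
    (hW : |W| ≤ Kc * P.y p) :
    (P.T p * P.G l (P.F p) * (∑ α, V α * pd α φ p + W * φ p)) ^ 2 ≤ 500 * Kc ^ 2 * M ^ 6 * P.YY l (P.w l φ) p := by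
  have hw := fun α => (P.HP_wgt hγ0 g.Tp (P.hasDeriv_m l · hμ) (hφ.differentiableAt (by norm_num)) α).2
  have e1 := P.et_one hk hF.le
  have e2 := (P.et_der hk hF).1
  have hT := g.Tp
  have hr := g.r0
  have hwv : P.w l φ p = P.T p * P.G l (P.F p) * φ p := by
    unfold w wgt m; rw [e1]; ring
  have hVh' : |-V 0 + ∑ i : Fin 3, V i.succ * (p.2 i / rr p)| ≤ Kc * P.y p := by
    rw [Fin.sum_univ_succ] at hVh
    simp only [hatom, Fin.cases_zero, Fin.cases_succ] at hVh
    convert hVh using 3; ring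
  have := lemC (w := P.w l φ p) (q := pd 0 (P.w l φ) p) (wr := dr (P.w l φ) p) (X := P.X (P.w l φ) p)
    (g := P.T p * P.G l (P.F p)) (φ := φ p) (φ0 := pd 0 φ p) (φi := fun i => pd i.succ φ p)
    (V0 := V 0) (V := fun i => V i.succ) (ω := fun i => p.2 i / rr p) (s := fun i => ang (P.w l φ) i p)
    (W := W) (Kc := Kc) g hΛ hKc (om_abs p) (fun i => hV i.succ) hVh' hW hwv ?_ ?_ (P.X_eq _ hr)
  · rw [Fin.sum_univ_succ]; exact this
  · have := hw 0
    change pd 0 (P.w l φ) p = _ at this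
    rw [this, hwv, eVec_zero_fst]
    unfold m1 m e
    rw [e1, e2]
    simp only [dF, Fin.cases_zero]
    field_simp
    ring
  · intro i
    have := hw i.succ
    change pd i.succ (P.w l φ) p = _ at this
    simp only [ang, add_sub_cancel]
    rw [this, hwv, eVec_succ_fst]
    unfold m1 m e
    rw [e1, e2]
    simp only [dF, Fin.cases_succ, A]
    field_simp
    ring

lemma YY_nonneg {M l : ℝ} {u : Spc → ℝ} (g : P.GeoP M p) : 0 ≤ P.YY l u p := by
  have := g.y0
  have := g.τ0
  have := s2_nonneg u p
  unfold YY; positivity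

set_option maxHeartbeats 1000000 in
lemma lemTop {N : ℕ} {M l Kc : ℝ} {φ : Fin N → Spc → ℝ} {V : Fin N → Fin N → Fin 4 → Spc → ℝ}
    {W : Fin N → Fin N → Spc → ℝ} (g : P.GeoP M p) (hγ0 : P.γ ≠ 0) (hγ : P.γ ≤ 1 / 2)
    (hc0 : 0 < P.c) (hc1 : P.c * (16 * M ^ 4) ≤ 1) (hμ : M ≤ P.μ)
    (hΛ : 200 * M ^ 4 * (1 + P.μ) ^ 2 ≤ l * P.e p) (hk : P.k1 < P.k2) (hF : P.k2 < P.F p)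
    (hφ : ∀ I, ContDiffAt ℝ 2 (φ I) p) (heq : ∀ I, boxT V W φ I p = 0) (hKc : 0 ≤ Kc)
    (hV : ∀ I J α, |V I J α p| ≤ Kc * (P.T p)⁻¹)
    (hVh : ∀ I J, |∑ α, V I J α p * hatom p α| ≤ Kc * P.y p)
    (hW : ∀ I J, |W I J p| ≤ Kc * P.y p)
    (hΛ1 : 32 * (2 * N ^ 2 * (500 * Kc ^ 2 * M ^ 6) + 8 * M ^ 2) ≤ l * P.e p)
    (hΛ2 : 2 * (2 * N ^ 2 * (500 * Kc ^ 2 * M ^ 6) + 8 * M ^ 2) ≤ P.c * (l * P.e p)) :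
    ∑ I, (P.Err l (P.w l (φ I)) p * P.K (P.w l (φ I)) p - P.Bulk l (P.w l (φ I)) p) ≤
      - ((1 / 8) * (l * P.e p) ^ 2 * P.y p ^ 2 * ∑ I, P.w l (φ I) p ^ 2) := by
  have hM1 := g.M1
  have hM0 := g.M0
  have hτ0 := g.τ0
  have hT := g.Tp
  have hy0 := g.y0
  have hμ0 : P.μ ≠ 0 := by linarith
  set C5 := 2 * N ^ 2 * (500 * Kc ^ 2 * M ^ 6) + 8 * M ^ 2 with hC5
  have hC51 : 1 ≤ C5 := by
    have : 1 ≤ M ^ 2 := one_le_pow₀ hM1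
    have : 0 ≤ 2 * (N:ℝ) ^ 2 * (500 * Kc ^ 2 * M ^ 6) := by positivity
    linarith
  set Λ := l * P.e p with hΛd
  have hΛ1' : 1 ≤ Λ := by linarith
  have hΛ0 : 0 < Λ := by linarith
  have e1 := P.et_one hk hF.le
  obtain ⟨e2, e3⟩ := P.et_der hk hF
  have hEm : ∀ I, P.Em l (φ I) p ^ 2 ≤ 2 * N * ∑ J, 500 * Kc ^ 2 * M ^ 6 * P.YY l (P.w l (φ J)) p
      + 8 * M ^ 2 * P.YY l (P.w l (φ I)) p := by
    intro I
    have h1 : P.Em l (φ I) p = - (∑ J, P.T p * P.G l (P.F p) *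
        (∑ α, V I J α p * pd α (φ J) p + W I J p * φ J p)) + 2 * ((P.T p)⁻¹ ^ 2 * P.w l (φ I) p) := by
      have hb := heq I
      unfold boxT at hb
      rw [← Finset.mul_sum, Finset.sum_add_distrib]
      unfold Em w wgt m
      rw [e1, e2, e3]
      have : box (φ I) p = -(∑ J, ∑ α, V I J α p * pd α (φ J) p + ∑ J, W I J p * φ J p) := by linarith
      rw [this]
      field_simp
      ring
    have h2 := sum_sq_le (fun J => P.T p * P.G l (P.F p) *
        (∑ α, V I J α p * pd α (φ J) p + W I J p * φ J p))
    have h3 : ∑ J, (P.T p * P.G l (P.F p) *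
        (∑ α, V I J α p * pd α (φ J) p + W I J p * φ J p)) ^ 2 ≤
        ∑ J, 500 * Kc ^ 2 * M ^ 6 * P.YY l (P.w l (φ J)) p :=
      Finset.sum_le_sum fun J _ => P.lemZ g hγ0 hμ0 hk hF hΛ1' (hφ J) hKc (hV I J) (hVh I J) (hW I J)
    have h4 : ((P.T p)⁻¹ ^ 2 * P.w l (φ I) p) ^ 2 ≤ M ^ 2 * P.YY l (P.w l (φ I)) p := by
      have hs := s2_nonneg (P.w l (φ I)) p
      have a1 : P.y p ^ 2 * P.w l (φ I) p ^ 2 ≤ P.YY l (P.w l (φ I)) p := by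
        have : 1 * P.y p ^ 2 * P.w l (φ I) p ^ 2 ≤ Λ ^ 2 * P.y p ^ 2 * P.w l (φ I) p ^ 2 := by
          have : 1 ≤ Λ ^ 2 := one_le_pow₀ hΛ1'
          gcongr
        have : 0 ≤ P.X (P.w l (φ I)) p ^ 2 + P.y p * (P.T p)⁻¹ * pd 0 (P.w l (φ I)) p ^ 2
            + (P.T p)⁻¹ ^ 2 * s2 (P.w l (φ I)) p := by positivity
        unfold YY
        linarith
      calc ((P.T p)⁻¹ ^ 2 * P.w l (φ I) p) ^ 2 ≤ ((M * P.y p) * |P.w l (φ I) p|) ^ 2 := by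
            rw [← sq_abs, abs_mul, abs_of_pos (by positivity : 0 < (P.T p)⁻¹ ^ 2)]
            have := g.τy
            gcongr
        _ = M ^ 2 * (P.y p ^ 2 * P.w l (φ I) p ^ 2) := by rw [mul_pow, sq_abs]; ring
        _ ≤ _ := by gcongr
    have h5 : (N:ℝ) * ∑ J, (P.T p * P.G l (P.F p) *
        (∑ α, V I J α p * pd α (φ J) p + W I J p * φ J p)) ^ 2
        ≤ N * ∑ J, 500 * Kc ^ 2 * M ^ 6 * P.YY l (P.w l (φ J)) p := by gcongr
    rw [h1]
    set S := ∑ J, P.T p * P.G l (P.F p) * (∑ α, V I J α p * pd α (φ J) p + W I J p * φ J p)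
    linarith [sq_nonneg (S + 2 * ((P.T p)⁻¹ ^ 2 * P.w l (φ I) p))]
  have hsum : ∑ I, P.Em l (φ I) p ^ 2 ≤ C5 * ∑ I, P.YY l (P.w l (φ I)) p := by
    refine (Finset.sum_le_sum fun I _ => hEm I).trans (le_of_eq ?_)
    rw [Finset.sum_add_distrib, Finset.sum_const, Finset.card_univ, Fintype.card_fin, nsmul_eq_mul,
      ← Finset.mul_sum, ← Finset.mul_sum]
    rw [hC5]; ring
  have hmain : ∑ I, (P.Err l (P.w l (φ I)) p * P.K (P.w l (φ I)) p - P.Bulk l (P.w l (φ I)) p) ≤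
      ∑ I, (-((1 / 2) * Λ * P.X (P.w l (φ I)) p ^ 2
        + (1 / 16) * (P.y p * (P.T p)⁻¹) * pd 0 (P.w l (φ I)) p ^ 2
        + P.c * (P.T p)⁻¹ ^ 2 * s2 (P.w l (φ I)) p
        + (1 / 4) * Λ ^ 2 * P.y p ^ 2 * P.w l (φ I) p ^ 2) + 2 * P.Em l (φ I) p ^ 2 / Λ) :=
    Finset.sum_le_sum fun I _ => P.lemBp g hγ0 hγ hc0 hc1 hμ hΛ (hφ I)
  have hd : ∀ I, 2 * C5 / Λ * P.YY l (P.w l (φ I)) p ≤ ((1 / 2) * Λ * P.X (P.w l (φ I)) p ^ 2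
        + (1 / 16) * (P.y p * (P.T p)⁻¹) * pd 0 (P.w l (φ I)) p ^ 2
        + P.c * (P.T p)⁻¹ ^ 2 * s2 (P.w l (φ I)) p
        + (1 / 4) * Λ ^ 2 * P.y p ^ 2 * P.w l (φ I) p ^ 2)
        - (1 / 8) * Λ ^ 2 * P.y p ^ 2 * P.w l (φ I) p ^ 2 := by
    intro I
    have k1 : 2 * C5 / Λ ≤ 1 / 16 := by rw [div_le_iff₀ hΛ0]; linarith
    have k2 : 2 * C5 / Λ ≤ P.c := by rw [div_le_iff₀ hΛ0]; linarith
    have k0 : 2 * C5 / Λ ≤ 1 / 2 * Λ := by linarith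
    have k3 : 2 * C5 / Λ ≤ 1 / 8 := by linarith
    have hs := s2_nonneg (P.w l (φ I)) p
    unfold YY
    have a1 : 2 * C5 / Λ * P.X (P.w l (φ I)) p ^ 2 ≤ 1 / 2 * Λ * P.X (P.w l (φ I)) p ^ 2 := by gcongr
    have a2 : 2 * C5 / Λ * (P.y p * (P.T p)⁻¹ * pd 0 (P.w l (φ I)) p ^ 2) ≤
      (1 / 16) * (P.y p * (P.T p)⁻¹ * pd 0 (P.w l (φ I)) p ^ 2) := by gcongr
    have a3 : 2 * C5 / Λ * ((P.T p)⁻¹ ^ 2 * s2 (P.w l (φ I)) p) ≤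
      P.c * ((P.T p)⁻¹ ^ 2 * s2 (P.w l (φ I)) p) := by gcongr
    have a4 : 2 * C5 / Λ * (Λ ^ 2 * P.y p ^ 2 * P.w l (φ I) p ^ 2) ≤
      (1 / 8) * (Λ ^ 2 * P.y p ^ 2 * P.w l (φ I) p ^ 2) := by gcongr
    linarith
  have hd2 := Finset.sum_le_sum fun I (_ : I ∈ Finset.univ) => hd I
  rw [← Finset.mul_sum, Finset.sum_sub_distrib, ← Finset.mul_sum] at hd2
  refine hmain.trans ?_
  rw [Finset.sum_add_distrib, Finset.sum_neg_distrib]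
  have h6 : ∑ I, 2 * P.Em l (φ I) p ^ 2 / Λ ≤ 2 * C5 / Λ * ∑ I, P.YY l (P.w l (φ I)) p := by
    have : ∑ I, 2 * P.Em l (φ I) p ^ 2 / Λ = 2 / Λ * ∑ I, P.Em l (φ I) p ^ 2 := by
      rw [Finset.mul_sum]; exact Finset.sum_congr rfl fun I _ => by ring
    rw [this]
    calc 2 / Λ * ∑ I, P.Em l (φ I) p ^ 2 ≤ 2 / Λ * (C5 * ∑ I, P.YY l (P.w l (φ I)) p) := by gcongr
      _ = _ := by ring
  linarith
end Par
end PartK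

section PartL
namespace Par
variable (P : Par) {p : Spc}

lemma G_pos (l s : ℝ) : 0 < P.G l s := exp_pos _

lemma G_mono {l s s' : ℝ} (hl : 0 ≤ l) (hμ : 0 < P.μ) (h : s ≤ s') : P.G l s ≤ P.G l s' := by
  unfold G; gcongr

lemma dr_le {u : Spc → ℝ} {S : ℝ} (h : ∀ α, |pd α u p| ≤ S) : |dr u p| ≤ 3 * S := by
  have e : ∀ i : Fin 3, |p.2 i / rr p * dxi i u p| ≤ S := fun i => by
    rw [abs_mul]
    calc _ ≤ 1 * S := by
          gcongr
          exacts [om_abs p i, h i.succ]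
      _ = S := one_mul _
  unfold dr
  refine (Finset.abs_sum_le_sum_abs _ _).trans ((Finset.sum_le_sum fun i _ => e i).trans ?_)
  simp

lemma Ty_le {M : ℝ} (g : P.GeoP M p) : P.T p * P.y p ≤ M := by
  have := g.yτ
  have hT := g.Tp
  calc P.T p * P.y p ≤ P.T p * (M * (P.T p)⁻¹) := by gcongr
    _ = M := by field_simp

lemma X_bd {M S : ℝ} {φ : Spc → ℝ} (g : P.GeoP M p) (hd : ∀ α, |pd α φ p| ≤ S)
    (hL : |dt φ p + dr φ p| ≤ (P.T p)⁻¹ * S) : P.T p * |P.X φ p| ≤ (M + 3 * M ^ 2) * S := by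
  have hM := g.M0
  have hT := g.Tp
  have hS : 0 ≤ S := (abs_nonneg _).trans (hd 0)
  have hdr := dr_le hd
  have h1 : P.X φ p = -(P.f p) * (dt φ p + dr φ p) + (rr p * (P.T p)⁻¹ + P.f p) * dr φ p := by
    rw [P.X_eq φ g.r0]; unfold dt; ring
  have h2 : |P.X φ p| ≤ M * ((P.T p)⁻¹ * S) + (M * P.y p) * (3 * S) := by
    rw [h1]
    refine (abs_add_le _ _).trans ?_
    rw [abs_mul, abs_mul, abs_neg]
    have := g.fM
    have := g.fr
    have := g.y0
    gcongr
  calc P.T p * |P.X φ p| ≤ P.T p * (M * ((P.T p)⁻¹ * S) + (M * P.y p) * (3 * S)) := by gcongr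
    _ = M * S + 3 * M * (P.T p * P.y p) * S := by field_simp
    _ ≤ M * S + 3 * M * M * S := by
        have := P.Ty_le g
        gcongr
    _ = _ := by ring

lemma box_bd {N : ℕ} {M Kc S : ℝ} {φ : Fin N → Spc → ℝ} {V : Fin N → Fin N → Fin 4 → Spc → ℝ}
    {W : Fin N → Fin N → Spc → ℝ} (g : P.GeoP M p) (I : Fin N) (heq : boxT V W φ I p = 0) (hKc : 0 ≤ Kc)
    (hV : ∀ I J α, |V I J α p| ≤ Kc * (P.T p)⁻¹) (hW : ∀ I J, |W I J p| ≤ Kc * P.y p)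
    (h0 : ∀ J, |φ J p| ≤ S) (hd : ∀ J α, |pd α (φ J) p| ≤ S) :
    P.T p * |box (φ I) p| ≤ N * Kc * (4 + M) * S := by
  have hT := g.Tp
  have hM := g.M0
  have hy := g.y0
  have hS : 0 ≤ S := (abs_nonneg _).trans (h0 I)
  have h1 : box (φ I) p = -(∑ J, (∑ α, V I J α p * pd α (φ J) p + W I J p * φ J p)) := by
    unfold boxT at heq
    rw [Finset.sum_add_distrib]; linarith
  have h2 : ∀ J, |∑ α, V I J α p * pd α (φ J) p + W I J p * φ J p| ≤
      4 * (Kc * (P.T p)⁻¹ * S) + Kc * P.y p * S := by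
    intro J
    refine (abs_add_le _ _).trans ?_
    have a1 : |∑ α, V I J α p * pd α (φ J) p| ≤ 4 * (Kc * (P.T p)⁻¹ * S) := by
      refine (Finset.abs_sum_le_sum_abs _ _).trans ?_
      refine (Finset.sum_le_sum (g := fun _ => Kc * (P.T p)⁻¹ * S) fun α _ => ?_).trans (by simp)
      rw [abs_mul]
      gcongr
      exacts [hV I J α, hd J α]
    have a2 : |W I J p * φ J p| ≤ Kc * P.y p * S := by
      rw [abs_mul]
      gcongr
      exacts [hW I J, h0 J]
    linarith
  have h3 : |box (φ I) p| ≤ N * (4 * (Kc * (P.T p)⁻¹ * S) + Kc * P.y p * S) := by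
    rw [h1, abs_neg]
    refine (Finset.abs_sum_le_sum_abs _ _).trans ((Finset.sum_le_sum fun J _ => h2 J).trans ?_)
    simp [mul_add]
  calc P.T p * |box (φ I) p| ≤ P.T p * (N * (4 * (Kc * (P.T p)⁻¹ * S) + Kc * P.y p * S)) := by gcongr
    _ = N * (4 * Kc * S + Kc * (P.T p * P.y p) * S) := by field_simp
    _ ≤ N * (4 * Kc * S + Kc * M * S) := by
        have := P.Ty_le g
        gcongr
    _ = _ := by ring

lemma Em_bd {N : ℕ} {M Kc S E1 l : ℝ} {φ : Fin N → Spc → ℝ} {V : Fin N → Fin N → Fin 4 → Spc → ℝ}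
    {W : Fin N → Fin N → Spc → ℝ} (g : P.GeoP M p) (I : Fin N) (heq : boxT V W φ I p = 0) (hKc : 0 ≤ Kc)
    (hV : ∀ I J α, |V I J α p| ≤ Kc * (P.T p)⁻¹) (hW : ∀ I J, |W I J p| ≤ Kc * P.y p)
    (h0 : ∀ J, |φ J p| ≤ S) (hd : ∀ J α, |pd α (φ J) p| ≤ S)
    (hL : |dt (φ I) p + dr (φ I) p| ≤ (P.T p)⁻¹ * S) (hl : 0 ≤ l) (hμ : 0 < P.μ)
    (hF : P.F p ≤ P.k2) (hE1 : |deriv P.et (P.F p)| ≤ E1) (hE2 : |deriv (deriv P.et) (P.F p)| ≤ E1) :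
    |P.Em l (φ I) p| ≤ P.G l P.k2 * ((N * Kc * (4 + M) + 2 * M + 2 * E1 * (M + 3 * M ^ 2)
      + E1 * (M ^ 2 + M)) * S) := by
  have hT := g.Tp
  have hM := g.M0
  have hy := g.y0
  have hS : 0 ≤ S := (abs_nonneg _).trans (h0 I)
  have hE0 : 0 ≤ E1 := (abs_nonneg _).trans hE1
  have b1 := P.box_bd g I heq hKc hV hW h0 hd
  have b2 := P.X_bd g (hd I) hL
  have e0 := P.et_nonneg (P.F p)
  have e1 := P.et_le_one (P.F p)
  have hn0 : 0 ≤ P.n p := g.y0.le.trans g.ny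
  have t1 : |P.et (P.F p) * (P.T p * box (φ I) p + 2 * φ I p / P.T p)| ≤ (N * Kc * (4 + M) + 2 * M) * S := by
    rw [abs_mul, abs_of_nonneg e0]
    have : |P.T p * box (φ I) p + 2 * φ I p / P.T p| ≤ (N * Kc * (4 + M) + 2 * M) * S := by
      refine (abs_add_le _ _).trans ?_
      rw [abs_mul, abs_of_pos hT, abs_div, abs_mul, abs_two, abs_of_pos hT, div_eq_mul_inv]
      have : 2 * |φ I p| * (P.T p)⁻¹ ≤ 2 * S * M := by
        have := h0 I
        have := g.τM
        have := g.τ0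
        gcongr
      linarith
    calc _ ≤ 1 * ((N * Kc * (4 + M) + 2 * M) * S) := by gcongr
      _ = _ := one_mul _
  have t2 : |2 * P.T p * deriv P.et (P.F p) * P.X (φ I) p| ≤ 2 * E1 * ((M + 3 * M ^ 2) * S) := by
    rw [abs_mul, abs_mul, abs_mul, abs_two, abs_of_pos hT]
    calc 2 * P.T p * |deriv P.et (P.F p)| * |P.X (φ I) p|
        = 2 * |deriv P.et (P.F p)| * (P.T p * |P.X (φ I) p|) := by ring
      _ ≤ _ := by gcongr
  have t3 : |P.T p * φ I p * (deriv (deriv P.et) (P.F p) * P.n p + deriv P.et (P.F p) * P.Db p)|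
      ≤ E1 * (M ^ 2 + M) * S := by
    have u1 : |deriv (deriv P.et) (P.F p) * P.n p + deriv P.et (P.F p) * P.Db p| ≤
        E1 * (M * P.y p) + E1 * (M * (P.T p)⁻¹) := by
      refine (abs_add_le _ _).trans ?_
      rw [abs_mul, abs_mul, abs_of_nonneg hn0]
      have := g.nM
      have := g.DbM
      gcongr
    rw [abs_mul, abs_mul, abs_of_pos hT]
    have := h0 I
    calc _ ≤ P.T p * S * (E1 * (M * P.y p) + E1 * (M * (P.T p)⁻¹)) := by gcongr
      _ = S * E1 * M * (P.T p * P.y p) + S * E1 * M := by field_simp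
      _ ≤ S * E1 * M * M + S * E1 * M := by
          have := P.Ty_le g
          gcongr
      _ = _ := by ring
  unfold Em
  rw [abs_mul, abs_of_pos (P.G_pos _ _)]
  have hG := P.G_mono hl hμ hF
  have hG0 := P.G_pos l (P.F p)
  refine mul_le_mul hG ?_ (abs_nonneg _) (P.G_pos _ _).le
  refine (abs_add_three _ _ _).trans ?_
  linarith

lemma w_bd {M S Cm l : ℝ} {φ : Spc → ℝ} (g : P.GeoP M p) (hγ0 : P.γ ≠ 0) (hμ : P.μ ≠ 0)
    (hφ : DifferentiableAt ℝ φ p) (h0 : |φ p| ≤ S) (hd : ∀ α, |pd α φ p| ≤ S)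
    (hm : |P.m l (P.F p)| ≤ Cm) (hm1 : |P.m1 l (P.F p)| ≤ Cm) :
    |P.w l φ p| ≤ Cm * (1 + 2 * M) * (P.T p * S) ∧
    ∀ α, |pd α (P.w l φ) p| ≤ Cm * (1 + 2 * M) * (P.T p * S) := by
  have hT := g.Tp
  have hM := g.M0
  have hM1 := g.M1
  have hS : 0 ≤ S := (abs_nonneg _).trans h0
  have hC : 0 ≤ Cm := (abs_nonneg _).trans hm
  have hMT : 1 ≤ M * P.T p := by
    have h := mul_le_mul_of_nonneg_right g.τM hT.le
    rwa [inv_mul_cancel₀ hT.ne'] at h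
  have hTS : 0 ≤ P.T p * S := by positivity
  constructor
  · unfold w wgt
    rw [abs_mul, abs_mul, abs_of_pos hT]
    calc P.T p * (|P.m l (P.F p)| * |φ p|) ≤ P.T p * (Cm * S) := by gcongr
      _ = Cm * 1 * (P.T p * S) := by ring
      _ ≤ _ := by gcongr; linarith
  · intro α
    have := (P.HP_wgt hγ0 hT (P.hasDeriv_m l · hμ) hφ α).2
    change pd α (P.w l φ) p = _ at this
    rw [this]
    have hdF : |P.dF α p| ≤ M := by
      refine Fin.cases ?_ (fun i => ?_) α
      · exact g.fM
      · simp only [dF, Fin.cases_succ, A]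
        have h1 : |p.2 i| ≤ rr p := by
          have := om_abs p i
          have hr : 0 < rr p := lt_of_le_of_ne (norm_nonneg _) (Ne.symm g.r0)
          rw [abs_div, abs_of_pos hr, div_le_one hr] at this
          exact this
        rw [abs_mul, abs_of_pos g.τ0]
        refine le_trans ?_ g.rM
        have := g.τ0
        gcongr
    have hev : |(eVec α).1| ≤ 1 := by
      refine Fin.cases ?_ (fun i => ?_) α
      · simp [eVec_zero_fst]
      · simp [eVec_succ_fst]
    refine (abs_add_three _ _ _).trans ?_
    simp only [abs_mul, abs_of_pos hT]
    have := hd α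
    calc _ ≤ P.T p * (Cm * S) + 1 * (Cm * S) + P.T p * (Cm * (M * S)) := by gcongr
      _ ≤ P.T p * (Cm * S) + (M * P.T p) * (Cm * S) + P.T p * (Cm * (M * S)) := by gcongr
      _ = _ := by ring

lemma J0_bd {M U E l : ℝ} {u : Spc → ℝ} (g : P.GeoP M p)
    (h0 : |u p| ≤ U) (hd : ∀ α, |pd α u p| ≤ U) (hE : P.e p ≤ E) :
    -((2 * M + M ^ 2 + 1 / 2 * l ^ 2 * E ^ 2 * M ^ 2) * P.y p * U ^ 2) ≤ P.J l u 0 p := by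
  have hT := g.Tp
  have hM := g.M0
  have hy := g.y0
  have hU : 0 ≤ U := (abs_nonneg _).trans h0
  have he0 : 0 < P.e p := exp_pos _
  have hsq := sum_pd_sq u g.r0
  have hX := P.X_eq u g.r0
  have hrT : 0 ≤ rr p * (P.T p)⁻¹ := mul_nonneg (norm_nonneg _) (inv_pos.2 hT).le
  have hs := s2_nonneg u p
  have hn0 : 0 ≤ P.n p := g.y0.le.trans g.ny
  have hJ : P.J l u 0 p = 1 / 2 * (rr p * (P.T p)⁻¹) * ((dr u p + pd 0 u p) ^ 2 + s2 u p)
      - 1 / 2 * (rr p * (P.T p)⁻¹ + P.f p) * (∑ i : Fin 3, pd i.succ u p ^ 2 + pd 0 u p ^ 2)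
      - P.h p * u p * pd 0 u p + 1 / 2 * (P.B l p * P.f p) * u p ^ 2 := by
    show pd 0 u p * P.X u p - (1/2) * (P.f p * Lag u p) - P.h p * (u p * pd 0 u p)
      + (1/2) * (P.B l p * (P.f p * u p ^ 2)) = _
    unfold Lag
    rw [hsq, hX]; ring
  have sq4 : ∀ α, pd α u p ^ 2 ≤ U ^ 2 := fun α => by
    rw [← sq_abs]
    have := hd α
    gcongr
  have a1 : (rr p * (P.T p)⁻¹ + P.f p) * (∑ i : Fin 3, pd i.succ u p ^ 2 + pd 0 u p ^ 2) ≤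
      M * P.y p * (4 * U ^ 2) := by
    have k1 : ∑ i : Fin 3, pd i.succ u p ^ 2 + pd 0 u p ^ 2 ≤ 4 * U ^ 2 := by
      simp only [Fin.sum_univ_three]
      linarith [sq4 0, sq4 (Fin.succ 0), sq4 (Fin.succ 1), sq4 (Fin.succ 2)]
    have k0 : 0 ≤ ∑ i : Fin 3, pd i.succ u p ^ 2 + pd 0 u p ^ 2 := by positivity
    have := (abs_le.1 g.fr).2
    gcongr
  have a2 : |P.h p * u p * pd 0 u p| ≤ M ^ 2 * P.y p * U ^ 2 := by
    rw [abs_mul, abs_mul]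
    have := g.τy
    calc |P.h p| * |u p| * |pd 0 u p| ≤ (M * (P.T p)⁻¹ ^ 2) * U * U := by
          gcongr
          exacts [g.hM, hd 0]
      _ ≤ (M * (M * P.y p)) * U * U := by gcongr
      _ = _ := by ring
  have a3 : |P.B l p * P.f p * u p ^ 2| ≤ l ^ 2 * E ^ 2 * M ^ 2 * P.y p * U ^ 2 := by
    unfold B
    rw [abs_mul, abs_mul, abs_of_nonneg (by positivity : 0 ≤ l ^ 2 * (P.e p ^ 2 * P.n p)),
      abs_of_nonneg (sq_nonneg (u p))]
    have k1 : u p ^ 2 ≤ U ^ 2 := by rw [← sq_abs]; gcongr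
    have := g.nM
    have := g.fM
    calc _ ≤ l ^ 2 * (E ^ 2 * (M * P.y p)) * M * U ^ 2 := by gcongr
      _ = _ := by ring
  have a4 : 0 ≤ 1 / 2 * (rr p * (P.T p)⁻¹) * ((dr u p + pd 0 u p) ^ 2 + s2 u p) := by positivity
  rw [hJ]
  linarith [(abs_le.1 a2).2, (abs_le.1 a3).1]
end Par
end PartL

section PartM
lemma DD_iff {R₁ R₂ : ℝ} {p : Spc} : p ∈ DD R₁ R₂ ↔
    0 < p.1 ∧ 0 < rr p ^ 2 - p.1 ^ 2 - 2 * p.1 * R₂ - R₁ ^ 2 := by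
  unfold DD
  simp only [mem_ofPred_eq]
  refine and_congr_right fun _ => ?_
  rw [← sub_pos]
  ring_nf

lemma rr_cont : Continuous rr := by unfold rr; fun_prop

lemma DD_open (R₁ R₂ : ℝ) : IsOpen (DD R₁ R₂) := by
  have := rr_cont
  unfold DD
  have h1 : IsOpen {p : Spc | 0 < p.1} := isOpen_lt (by fun_prop) (by fun_prop)
  have h2 : IsOpen {p : Spc | R₁ ^ 2 - R₂ ^ 2 < (rr p - p.1 - R₂) * (rr p + p.1 + R₂)} :=
    isOpen_lt (by fun_prop) (by fun_prop)
  exact h1.inter h2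

namespace Par
variable (P : Par) {p : Spc} {R₁ R₂ : ℝ}

def SS (R₁ t0 : ℝ) : Set Spc := {p | t0 ≤ p.1 ∧ P.k1 ≤ P.F p ∧ rr p - p.1 ≤ R₁}

lemma F_le_a (H : ParOK P.σ P.d P.ε P.γ R₁ R₂) (hT : 0 < P.T p) : P.F p ≤ P.a p := by
  unfold F
  have := H.ε0
  have := H.γ0
  have : 0 < P.ε / P.γ * P.T p ^ (-P.γ) := by positivity
  linarith

lemma Tpos (H : ParOK P.σ P.d P.ε P.γ R₁ R₂) (ht : 0 < p.1) : 0 < P.T p := by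
  unfold T; linarith [H.σ0]

lemma q_eq (H : ParOK P.σ P.d P.ε P.γ R₁ R₂) (hT : 0 < P.T p) :
    rr p ^ 2 - p.1 ^ 2 - 2 * p.1 * R₂ - R₁ ^ 2 = 2 * P.T p * (P.a p - R₂) + 2 * P.σ * p.1 := by
  have h := P.rho_eq' hT
  rw [rho_eq, H.dv] at h
  rw [h]; unfold T; ring

lemma mem_DD (H : ParOK P.σ P.d P.ε P.γ R₁ R₂) (hk : R₂ < P.k1) (ht : 0 < p.1) (hF : P.k1 ≤ P.F p) :
    p ∈ DD R₁ R₂ := by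
  have hT := P.Tpos H ht
  have h1 := P.F_le_a H hT
  have := H.σ0
  refine DD_iff.2 ⟨ht, ?_⟩
  rw [P.q_eq H hT]
  have : 0 < P.a p - R₂ := by linarith
  positivity

lemma a_ub (H : ParOK P.σ P.d P.ε P.γ R₁ R₂) (ht : 0 < p.1) (hr : rr p - p.1 ≤ R₁) :
    P.σ * (R₁ - P.σ - R₂) ≤ P.T p * (R₁ - P.σ - P.a p) := by
  have hT := P.Tpos H ht
  have h := P.rho_eq' hT
  rw [rho_eq, H.dv] at h
  have h0 : 0 ≤ rr p := norm_nonneg _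
  have h1 : rr p ^ 2 ≤ (p.1 + R₁) ^ 2 := by
    have : rr p ≤ p.1 + R₁ := by linarith
    gcongr
  have h2 : p.1 = P.T p - P.σ := by unfold T; ring
  rw [h, h2] at h1
  nlinarith

lemma a_le (H : ParOK P.σ P.d P.ε P.γ R₁ R₂) (ht : 0 < p.1) (hr : rr p - p.1 ≤ R₁) :
    P.a p ≤ R₁ - P.σ := by
  have hT := P.Tpos H ht
  have h := P.a_ub H ht hr
  have h1 : 0 < P.σ * (R₁ - P.σ - R₂) := mul_pos H.σ0 (by linarith [H.Rσ])
  have := pos_of_mul_pos_right (h1.trans_le h) hT.le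
  linarith

lemma t_lb (H : ParOK P.σ P.d P.ε P.γ R₁ R₂) (hk : R₂ < P.k1) (ht : 0 < p.1) (hr : rr p - p.1 ≤ R₁)
    (hF : P.k1 ≤ P.F p) : P.σ * (P.k1 - R₂) / (R₁ - P.σ - R₂) ≤ p.1 := by
  have hT := P.Tpos H ht
  have h := P.a_ub H ht hr
  have h1 := P.F_le_a H hT
  have h2 : 0 < R₁ - P.σ - R₂ := by linarith [H.Rσ]
  rw [div_le_iff₀ h2]
  have h3 : P.T p * (R₁ - P.σ - P.a p) ≤ P.T p * (R₁ - P.σ - P.k1) := by gcongr; linarith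
  have h4 : P.T p = p.1 + P.σ := rfl
  rw [h4] at h3 h
  have h5 : 0 < p.1 * (P.k1 - R₂) := mul_pos ht (by linarith)
  nlinarith

def t0 (R₁ R₂ : ℝ) : ℝ := P.σ * (P.k1 - R₂) / (R₁ - P.σ - R₂)

lemma t0_pos (H : ParOK P.σ P.d P.ε P.γ R₁ R₂) (hk : R₂ < P.k1) : 0 < P.t0 R₁ R₂ := by
  unfold t0
  have h2 : 0 < R₁ - P.σ - R₂ := by linarith [H.Rσ]
  have h3 : 0 < P.k1 - R₂ := by linarith
  have := H.σ0
  positivity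

lemma not_SS (H : ParOK P.σ P.d P.ε P.γ R₁ R₂) (hk : R₂ < P.k1) (ht : 0 < p.1)
    (h : p ∉ P.SS R₁ (P.t0 R₁ R₂)) : P.F p < P.k1 ∨ R₁ < rr p - p.1 := by
  by_contra hc
  push Not at hc
  exact h ⟨P.t_lb H hk ht hc.2 hc.1, hc.1, hc.2⟩

lemma Pt_of (H : ParOK P.σ P.d P.ε P.γ R₁ R₂) (hk : R₂ < P.k1) (hc0 : 0 < P.c) (hc1 : P.c ≤ 1)
    (ht : 0 < p.1) (hF : P.k1 ≤ P.F p) (hr : rr p - p.1 ≤ R₁) :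
    Pt P.σ P.d P.ε P.γ R₁ R₂ (P.T p) (rr p) (P.a p) (P.y p) P.c := by
  have hT := P.Tpos H ht
  have h1 := P.F_le_a H hT
  have h := P.rho_eq' hT
  rw [rho_eq] at h
  have hT2 : P.T p = p.1 + P.σ := rfl
  have h0 : 0 ≤ rr p := norm_nonneg _
  have hσ := H.σ0
  refine ⟨by linarith, by linarith, P.a_le H ht hr, h0, h, ?_, rfl, hc0, hc1⟩
  rw [abs_le]
  constructor
  · have : P.T p + R₂ ≤ rr p := by
      by_contra hh
      push Not at hh
      have e1 : rr p ^ 2 < (P.T p + R₂) ^ 2 := by gcongr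
      rw [h, H.dv] at e1
      have e2 : 0 ≤ P.T p * (P.a p - R₂) := mul_nonneg hT.le (by linarith)
      have e3 : 0 < (R₁ - (P.σ + R₂)) * (R₁ + (P.σ + R₂)) :=
        mul_pos (by linarith [H.Rσ]) (by linarith [H.R2])
      linarith
    linarith [H.R2]
  · linarith

lemma SS_pos (H : ParOK P.σ P.d P.ε P.γ R₁ R₂) (hk : R₂ < P.k1) (h : p ∈ P.SS R₁ (P.t0 R₁ R₂)) :
    0 < p.1 := (P.t0_pos H hk).trans_le h.1

lemma SS_sub (H : ParOK P.σ P.d P.ε P.γ R₁ R₂) (hk : R₂ < P.k1) :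
    P.SS R₁ (P.t0 R₁ R₂) ⊆ DD R₁ R₂ := fun _ h => P.mem_DD H hk (P.SS_pos H hk h) h.2.1

lemma SS_closed (H : ParOK P.σ P.d P.ε P.γ R₁ R₂) (hk : R₂ < P.k1) : IsClosed (P.SS R₁ (P.t0 R₁ R₂)) := by
  have hr := rr_cont
  have h1 : IsClosed {p : Spc | P.t0 R₁ R₂ ≤ p.1} := isClosed_le (by fun_prop) (by fun_prop)
  have h2 : ContinuousOn P.F {p : Spc | P.t0 R₁ R₂ ≤ p.1} := fun p hp =>
    (P.F_cd (P.Tpos H ((P.t0_pos H hk).trans_le hp))).continuousAt.continuousWithinAt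
  have h3 := h2.preimage_isClosed_of_isClosed h1 (isClosed_Ici (a := P.k1))
  have h4 : IsClosed {p : Spc | rr p - p.1 ≤ R₁} := isClosed_le (by fun_prop) (by fun_prop)
  convert h3.inter h4 using 1
  ext p; simp [SS, and_assoc]

lemma SS_compact (H : ParOK P.σ P.d P.ε P.γ R₁ R₂) (hk : R₂ < P.k1) (R : ℝ) :
    IsCompact (P.SS R₁ (P.t0 R₁ R₂) ∩ {p | p.1 ≤ R}) := by
  refine Metric.isCompact_of_isClosed_isBounded
    ((P.SS_closed H hk).inter (isClosed_le (by fun_prop) (by fun_prop))) ?_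
  refine (Metric.isBounded_Icc 0 R |>.prod (Metric.isBounded_closedBall (x := (0 : EuclideanSpace ℝ (Fin 3))) (r := R + R₁))).subset ?_
  rintro p ⟨h, hR⟩
  have := P.SS_pos H hk h
  simp only [mem_ofPred_eq] at hR
  refine ⟨⟨this.le, hR⟩, ?_⟩
  rw [mem_closedBall_zero_iff]
  have := h.2.2
  unfold rr at this
  linarith

end Par
end PartM

section PartN
lemma int_tube (b s : ℝ) (hs : 3 < s) :
    Integrable (fun p : Spc => (Set.indicator {p : Spc | |p.1 - rr p| ≤ b}
      (fun p => (1 + rr p) ^ (-s)) p)) := by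
  have hr := rr_cont
  have hms : MeasurableSet {p : Spc | |p.1 - rr p| ≤ b} :=
    (isClosed_le (by fun_prop) (by fun_prop)).measurableSet
  have hcont : Continuous fun p : Spc => (1 + rr p) ^ (-s) := by
    refine Continuous.rpow_const (by fun_prop) fun p => Or.inl ?_
    have : 0 ≤ rr p := norm_nonneg _
    positivity
  have hm : AEStronglyMeasurable (fun p : Spc => (Set.indicator {p : Spc | |p.1 - rr p| ≤ b}
      (fun p => (1 + rr p) ^ (-s)) p)) volume :=
    (hcont.stronglyMeasurable.indicator hms).aestronglyMeasurable
  have key : ∀ x : EuclideanSpace ℝ (Fin 3), (fun t : ℝ => Set.indicator {p : Spc | |p.1 - rr p| ≤ b}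
      (fun p => (1 + rr p) ^ (-s)) (t, x)) = (Icc (‖x‖ - b) (‖x‖ + b)).indicator
        (fun _ => (1 + ‖x‖) ^ (-s)) := by
    intro x
    ext t
    have : ((t, x) ∈ {p : Spc | |p.1 - rr p| ≤ b}) ↔ t ∈ Icc (‖x‖ - b) (‖x‖ + b) := by
      simp only [mem_ofPred_eq, rr, abs_le, mem_Icc]
      constructor <;> rintro ⟨h1, h2⟩ <;> constructor <;> linarith
    by_cases h : t ∈ Icc (‖x‖ - b) (‖x‖ + b)
    · rw [indicator_of_mem h, indicator_of_mem (this.2 h)]; rfl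
    · rw [indicator_of_notMem h, indicator_of_notMem (fun h' => h (this.1 h'))]
  rw [Measure.volume_eq_prod] at hm ⊢
  rw [integrable_prod_iff' hm]
  constructor
  · refine ae_of_all _ fun x => ?_
    rw [key x]
    exact (integrable_indicator_iff measurableSet_Icc).2 (integrableOn_const (by simp) (by simp))
  · have : (fun x : EuclideanSpace ℝ (Fin 3) => ∫ t : ℝ, ‖Set.indicator {p : Spc | |p.1 - rr p| ≤ b}
      (fun p => (1 + rr p) ^ (-s)) (t, x)‖) = fun x => (volume.real (Icc (-b) b)) * (1 + ‖x‖) ^ (-s) := by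
      ext x
      have h2 := key x
      have : (fun t : ℝ => ‖Set.indicator {p : Spc | |p.1 - rr p| ≤ b}
        (fun p => (1 + rr p) ^ (-s)) (t, x)‖) = (Icc (‖x‖ - b) (‖x‖ + b)).indicator
        (fun _ => (1 + ‖x‖) ^ (-s)) := by
        rw [← h2]
        ext t
        refine Real.norm_of_nonneg (indicator_nonneg (fun p _ => ?_) _)
        have : 0 ≤ rr p := norm_nonneg _
        positivity
      rw [this, integral_indicator measurableSet_Icc, setIntegral_const]
      simp [Measure.real]
    rw [this]
    refine Integrable.const_mul ?_ _
    exact integrable_one_add_norm (by simpa using hs)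

namespace Par
variable (P : Par) {R₁ R₂ : ℝ}

lemma int_wt (H : ParOK P.σ P.d P.ε P.γ R₁ R₂) (hk : R₂ < P.k1) (hc0 : 0 < P.c) (hc1 : P.c ≤ 1)
    (s : ℝ) (hs : 3 < s) :
    Integrable ((P.SS R₁ (P.t0 R₁ R₂)).indicator fun p => P.T p ^ (-s)) := by
  have hσ := H.σ0
  have hR := H.R0
  have hms := (P.SS_closed H hk).measurableSet
  have hTc : Continuous P.T := by unfold T; fun_prop
  refine ((int_tube (R₁ + P.σ) s hs).const_mul (((1 + (1 + R₁) / P.σ)) ^ s)).mono' ?_ (ae_of_all _ fun p => ?_)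
  · exact ((hTc.measurable.pow_const _).indicator hms).aestronglyMeasurable
  · have hr0 : 0 ≤ rr p := norm_nonneg _
    by_cases h : p ∈ P.SS R₁ (P.t0 R₁ R₂)
    · have ht := P.SS_pos H hk h
      have hT := P.Tpos H ht
      have hpt := P.Pt_of H hk hc0 hc1 ht h.2.1 h.2.2
      rw [indicator_of_mem h]
      have hm : p ∈ {p : Spc | |p.1 - rr p| ≤ R₁ + P.σ} := by
        have := abs_le.1 hpt.rT
        have hT2 : P.T p = p.1 + P.σ := rfl
        simp only [mem_ofPred_eq, abs_le]
        constructor <;> linarith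
      rw [indicator_of_mem hm, Real.norm_of_nonneg (by positivity)]
      have h1 : 1 + rr p ≤ (1 + (1 + R₁) / P.σ) * P.T p := by
        have e1 := (abs_le.1 hpt.rT).2
        have e2 : (1 + R₁) / P.σ * P.σ ≤ (1 + R₁) / P.σ * P.T p := by gcongr; exact hpt.σT
        rw [div_mul_cancel₀ _ hσ.ne'] at e2
        linarith
      have h2 : (1 + rr p) ^ s ≤ (1 + (1 + R₁) / P.σ) ^ s * P.T p ^ s := by
        rw [← Real.mul_rpow (by positivity) hT.le]
        gcongr
      rw [Real.rpow_neg hT.le, Real.rpow_neg (by positivity)]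
      have hp1 : 0 < P.T p ^ s := by positivity
      have hp2 : 0 < (1 + rr p) ^ s := by positivity
      rw [← div_eq_mul_inv, inv_eq_one_div, div_le_div_iff₀ hp1 hp2]
      linarith
    · rw [indicator_of_notMem h, norm_zero]
      refine mul_nonneg (by positivity) (indicator_nonneg (fun p _ => ?_) _)
      have : 0 ≤ rr p := norm_nonneg _
      positivity
end Par
end PartN

section PartO
def chi (R t : ℝ) : ℝ := Real.smoothTransition (2 - t / R)

lemma chi_cd (R : ℝ) : ContDiff ℝ 1 (chi R) := by
  unfold chi
  exact (Real.smoothTransition.contDiff (n := 1)).comp (by fun_prop)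

lemma chi_nonneg (R t : ℝ) : 0 ≤ chi R t := Real.smoothTransition.nonneg _
lemma chi_le_one (R t : ℝ) : chi R t ≤ 1 := Real.smoothTransition.le_one _
lemma chi_one {R t : ℝ} (hR : 0 < R) (h : t ≤ R) : chi R t = 1 := by
  unfold chi
  apply Real.smoothTransition.one_of_one_le
  have : t / R ≤ 1 := (div_le_one hR).2 h
  linarith
lemma chi_zero {R t : ℝ} (hR : 0 < R) (h : 2 * R ≤ t) : chi R t = 0 := by
  unfold chi
  apply Real.smoothTransition.zero_of_nonpos
  have : 2 ≤ t / R := (le_div_iff₀ hR).2 h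
  linarith

lemma chi_ex : ∃ C, 0 ≤ C ∧ ∀ R t : ℝ, 0 < R → 0 ≤ t →
    deriv (chi R) t ≤ 0 ∧ - deriv (chi R) t ≤ C / R ∧ (2 * R < t → deriv (chi R) t = 0) := by
  have hd : Differentiable ℝ Real.smoothTransition :=
    (Real.smoothTransition.contDiff (n := 1)).differentiable (by norm_num)
  have hc : Continuous (deriv Real.smoothTransition) :=
    (Real.smoothTransition.contDiff (n := 1)).continuous_deriv (by norm_num)
  have hnn : ∀ s, 0 ≤ deriv Real.smoothTransition s := fun s =>
    Real.smoothTransition.monotone.deriv_nonneg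
  obtain ⟨C, hC⟩ := (isCompact_Icc (a := (0:ℝ)) (b := 2)).exists_bound_of_continuousOn hc.continuousOn
  have hC0 : 0 ≤ C := (norm_nonneg _).trans (hC 0 (by simp))
  refine ⟨C, hC0, fun R t hR ht => ?_⟩
  have hder : deriv (chi R) t = - (deriv Real.smoothTransition (2 - t / R) / R) := by
    have h1 : HasDerivAt (fun t : ℝ => 2 - t / R) (-(1 / R)) t :=
      ((hasDerivAt_id t).div_const R).const_sub 2
    have h2 := (hd (2 - t / R)).hasDerivAt.comp t h1
    have h3 : deriv (chi R) t = _ := h2.deriv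
    rw [h3]; ring
  have hz : 2 * R < t → deriv (chi R) t = 0 := by
    intro h
    have : chi R =ᶠ[𝓝 t] fun _ => (0:ℝ) := by
      filter_upwards [lt_mem_nhds h] with s hs using chi_zero hR (le_of_lt hs)
    rw [this.deriv_eq]; simp
  refine ⟨?_, ?_, hz⟩
  · rw [hder]
    have := hnn (2 - t / R)
    have : 0 ≤ deriv Real.smoothTransition (2 - t / R) / R := by positivity
    linarith
  · by_cases h : 2 * R < t
    · rw [hz h, neg_zero]; positivity
    · rw [hder, neg_neg]
      gcongr
      have h1 : 0 ≤ t / R := by positivity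
      have h2 : t / R ≤ 2 := (div_le_iff₀ hR).2 (by linarith)
      exact (le_abs_self _).trans (hC _ ⟨by linarith, by linarith⟩)

/-- Abstract limiting argument. -/
lemma limit_arg {D B : Set Spc} (hB : MeasurableSet B) (hBD : B ⊆ D) (hBf : volume B ≠ ⊤) {κ A R0 : ℝ}
    (g : ℝ → Spc → ℝ) (Wt : Spc → ℝ) (δ : ℝ → ℝ) (hδ : Tendsto δ atTop (𝓝 0)) (hW : Integrable Wt)
    (hD : MeasurableSet D)
    (hg : ∀ R, R0 ≤ R → IntegrableOn (g R) D ∧ ∫ p in D, g R p = 0)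
    (hle : ∀ R, R0 ≤ R → ∀ p ∈ D, g R p ≤ -(B.indicator (fun _ => κ) p) + (A + δ R) * Wt p) :
    κ * volume.real B ≤ A * ∫ p in D, Wt p := by
  have key : ∀ R, R0 ≤ R → κ * volume.real B ≤ (A + δ R) * ∫ p in D, Wt p := by
    intro R hR
    have hi1 : IntegrableOn (B.indicator fun _ => κ) D :=
      ((integrable_indicator_iff hB).2 (integrableOn_const hBf (by simp))).integrableOn
    have hi2 : IntegrableOn (fun p => (A + δ R) * Wt p) D := hW.integrableOn.const_mul _
    have h := setIntegral_mono_on (hg R hR).1 (hi1.neg.add hi2) hD (hle R hR)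
    rw [(hg R hR).2] at h
    have h2 : ∫ p in D, (-(B.indicator (fun _ => κ)) + fun p => (A + δ R) * Wt p) p
        = -(κ * volume.real B) + (A + δ R) * ∫ p in D, Wt p := by
      rw [integral_add' hi1.neg hi2, integral_const_mul]
      congr 1
      have : ∀ p, (-(B.indicator (fun _ => κ))) p = - (B.indicator (fun _ => κ) p) := fun p => rfl
      simp only [this]
      rw [integral_neg, setIntegral_indicator hB, setIntegral_const, inter_eq_right.2 hBD]
      simp [mul_comm]
    rw [h2] at h
    linarith
  have ht : Tendsto (fun R => (A + δ R) * ∫ p in D, Wt p) atTop (𝓝 ((A + 0) * ∫ p in D, Wt p)) :=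
    (tendsto_const_nhds.add hδ).mul_const _
  rw [add_zero] at ht
  exact ge_of_tendsto ht (by filter_upwards [eventually_ge_atTop R0] with R hR using key R hR)

lemma delta_lim (C C' γ : ℝ) (hγ : 0 < γ) (h1 : γ < 1): Tendsto (fun R : ℝ => C / R * (C' * (2 * R + 1) ^ (1 - γ))) atTop (𝓝 0) := by
  have h : Tendsto (fun R : ℝ => |C| * |C'| * (3 ^ (1 - γ) * R ^ (-γ))) atTop (𝓝 0) := by
    have := ((tendsto_rpow_neg_atTop hγ).const_mul ((3:ℝ) ^ (1 - γ))).const_mul (|C| * |C'|)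
    simpa using this
  refine squeeze_zero_norm' ?_ h
  filter_upwards [eventually_ge_atTop 1] with R hR
  have hR0 : 0 < R := by linarith
  rw [norm_mul, norm_div, norm_mul]
  simp only [Real.norm_eq_abs]
  rw [abs_of_pos hR0, abs_of_nonneg (a := (2 * R + 1) ^ (1 - γ)) (by positivity)]
  have h2 : (2 * R + 1) ^ (1 - γ) ≤ (3 * R) ^ (1 - γ) := by
    have : 0 ≤ 1 - γ := by linarith
    gcongr
    linarith
  rw [Real.mul_rpow (by norm_num) hR0.le] at h2
  have h3 : R ^ (1 - γ) = R * R ^ (-γ) := by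
    rw [sub_eq_add_neg, Real.rpow_add hR0, Real.rpow_one]
  rw [h3] at h2
  calc |C| / R * (|C'| * (2 * R + 1) ^ (1 - γ)) ≤ |C| / R * (|C'| * (3 ^ (1 - γ) * (R * R ^ (-γ)))) := by
        gcongr
    _ = _ := by field_simp
end PartO

section PartP
lemma HP_sumN {N : ℕ} {α : Fin 4} {p : Spc} {u : Fin N → Spc → ℝ} {c : Fin N → ℝ}
    (h : ∀ i, HP α (u i) p (c i)) : HP α (fun p => ∑ i, u i p) p (∑ i, c i) := by
  refine ⟨DifferentiableAt.fun_sum fun i _ => (h i).1, ?_⟩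
  unfold pd
  rw [fderiv_fun_sum fun i _ => (h i).1, sum_apply]
  exact Finset.sum_congr rfl fun i _ => (h i).2

structure Sol {N : ℕ} (P : Par) (R₁ R₂ M Kc C2 g' : ℝ) (V : Fin N → Fin N → Fin 4 → Spc → ℝ)
    (W : Fin N → Fin N → Spc → ℝ) (φ : Fin N → Spc → ℝ) : Prop where
  H : ParOK P.σ P.d P.ε P.γ R₁ R₂
  hk0 : R₂ < P.k1
  hk : P.k1 < P.k2
  hc0 : 0 < P.c
  hc1 : P.c ≤ 1
  hcM : P.c * (16 * M ^ 4) ≤ 1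
  hM : 1 ≤ M
  hμ : M ≤ P.μ
  hg' : 0 < g'
  geo : ∀ p ∈ P.SS R₁ (P.t0 R₁ R₂), P.GeoP M p
  cd : ∀ I, ∀ p ∈ DD R₁ R₂, ContDiffAt ℝ 2 (φ I) p
  heq : ∀ I, ∀ p ∈ DD R₁ R₂, boxT V W φ I p = 0
  van : ∀ p ∈ DD R₁ R₂, R₁ ≤ rr p - p.1 → ∀ I, φ I p = 0
  hKc : 0 ≤ Kc
  hC2 : 0 ≤ C2
  hV : ∀ p ∈ DD R₁ R₂, ∀ I J α, |V I J α p| ≤ Kc * (P.T p)⁻¹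
  hVh : ∀ p ∈ DD R₁ R₂, ∀ I J, |∑ α, V I J α p * hatom p α| ≤ Kc * P.y p
  hW : ∀ p ∈ DD R₁ R₂, ∀ I J, |W I J p| ≤ Kc * P.y p
  h0 : ∀ p ∈ DD R₁ R₂, ∀ J, |φ J p| ≤ C2 * P.T p ^ (-(3:ℝ)/2 - g')
  hd : ∀ p ∈ DD R₁ R₂, ∀ J α, |pd α (φ J) p| ≤ C2 * P.T p ^ (-(3:ℝ)/2 - g')
  hL : ∀ p ∈ DD R₁ R₂, ∀ J, |dt (φ J) p + dr (φ J) p| ≤ (P.T p)⁻¹ * (C2 * P.T p ^ (-(3:ℝ)/2 - g'))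

namespace Sol
variable {N : ℕ} {P : Par} {R₁ R₂ M Kc C2 g' : ℝ} {V : Fin N → Fin N → Fin 4 → Spc → ℝ}
    {W : Fin N → Fin N → Spc → ℝ} {φ : Fin N → Spc → ℝ}

def DL (P : Par) (φ : Fin N → Spc → ℝ) (l : ℝ) (p : Spc) : ℝ :=
  ∑ I, (P.Err l (P.w l (φ I)) p * P.K (P.w l (φ I)) p - P.Bulk l (P.w l (φ I)) p)

def bf (P : Par) (φ : Fin N → Spc → ℝ) (p : Spc) : ℝ :=
  P.e p ^ 2 * P.y p ^ 2 * P.T p ^ 2 * ∑ I, φ I p ^ 2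

lemma S2 (s : Sol P R₁ R₂ M Kc C2 g' V W φ) {p : Spc} (hT : 0 < P.T p) :
    (C2 * P.T p ^ (-(3:ℝ)/2 - g')) ^ 2 = C2 ^ 2 * P.T p ^ (-(3 + 2 * g')) := by
  rw [mul_pow, ← Real.rpow_natCast (P.T p ^ _), ← Real.rpow_mul hT.le]
  congr 2
  push_cast; ring

lemma e_lb (s : Sol P R₁ R₂ M Kc C2 g' V W φ) {p : Spc} (h : p ∈ P.SS R₁ (P.t0 R₁ R₂)) :
    exp (P.μ * P.k1) ≤ P.e p := by
  have := s.hM.trans s.hμ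
  unfold Par.e
  gcongr
  exact h.2.1

/-- bulk bound -/
lemma bulk (s : Sol P R₁ R₂ M Kc C2 g' V W φ) : ∃ A l0, 0 ≤ A ∧ 0 < l0 ∧ ∀ l, l0 ≤ l →
    ∀ p ∈ P.SS R₁ (P.t0 R₁ R₂),
      (DL P φ l p ≤ P.G l P.k2 ^ 2 * (A * P.T p ^ (-(3 + 2 * g')))) ∧
      (P.k2 < P.F p → DL P φ l p ≤ - (1 / 8 * l ^ 2 * P.G l P.k2 ^ 2 * bf P φ p)) := by
  have hμ1 := s.hM.trans s.hμ
  have hM1 := s.hM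
  have hc0 := s.hc0
  have hμ0 : 0 < P.μ := by linarith
  have hγ0 := s.H.γ0
  obtain ⟨E1, hE1⟩ : ∃ E1, ∀ x ∈ Icc P.k1 P.k2, |deriv P.et x| ≤ E1 ∧ |deriv (deriv P.et) x| ≤ E1 := by
    have c1 : Continuous (deriv P.et) := P.et_contDiff.continuous_deriv (by norm_num)
    have c2 : Continuous (deriv (deriv P.et)) := by
      have : ContDiff ℝ 1 (deriv P.et) := by
        have := P.et_contDiff
        rw [show (2 : WithTop ℕ∞) = 1 + 1 from by norm_num, contDiff_succ_iff_deriv] at this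
        exact this.2.2
      exact this.continuous_deriv (by norm_num)
    obtain ⟨B1, h1⟩ := (isCompact_Icc (a := P.k1) (b := P.k2)).exists_bound_of_continuousOn c1.continuousOn
    obtain ⟨B2, h2⟩ := (isCompact_Icc (a := P.k1) (b := P.k2)).exists_bound_of_continuousOn c2.continuousOn
    exact ⟨max B1 B2, fun x hx => ⟨(h1 x hx).trans (le_max_left _ _), (h2 x hx).trans (le_max_right _ _)⟩⟩
  set Ce := N * Kc * (4 + M) + 2 * M + 2 * E1 * (M + 3 * M ^ 2) + E1 * (M ^ 2 + M) with hCe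
  set C5 := 2 * (N:ℝ) ^ 2 * (500 * Kc ^ 2 * M ^ 6) + 8 * M ^ 2 with hC5
  have hC50 : 0 < C5 := by positivity
  set Q := 200 * M ^ 4 * (1 + P.μ) ^ 2 + 32 * C5 + 2 * C5 / P.c with hQ
  have hQ0 : 0 < Q := by positivity
  refine ⟨N * (2 * Ce ^ 2 * C2 ^ 2), Q / exp (P.μ * P.k1), by positivity, by positivity, ?_⟩
  intro l hl p hp
  have hpos := P.SS_pos s.H s.hk0 hp
  have hT := P.Tpos s.H hpos
  have hD := P.SS_sub s.H s.hk0 hp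
  have g := s.geo p hp
  have hl0 : 0 < l := lt_of_lt_of_le (by positivity) hl
  have hle : Q ≤ l * P.e p := by
    have h1 := (div_le_iff₀ (exp_pos _)).1 hl
    exact h1.trans (by gcongr; exact s.e_lb hp)
  have q1 : 0 < 200 * M ^ 4 * (1 + P.μ) ^ 2 := by positivity
  have q3 : 0 < 2 * C5 / P.c := by positivity
  have hΛ : 200 * M ^ 4 * (1 + P.μ) ^ 2 ≤ l * P.e p := by linarith
  have hΛ1 : 32 * C5 ≤ l * P.e p := by linarith
  have hΛ2 : 2 * C5 ≤ P.c * (l * P.e p) := by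
    have : 2 * C5 / P.c ≤ l * P.e p := by linarith
    rw [div_le_iff₀ hc0] at this
    linarith
  have hΛone : 1 ≤ l * P.e p := by
    have : 1 ≤ 8 * M ^ 2 := by nlinarith
    have h3 : 0 ≤ 2 * (N:ℝ) ^ 2 * (500 * Kc ^ 2 * M ^ 6) := by positivity
    linarith
  have top : P.k2 < P.F p → DL P φ l p ≤ - (1 / 8 * l ^ 2 * P.G l P.k2 ^ 2 * bf P φ p) := by
    intro hF
    have h := P.lemTop g hγ0.ne' s.H.γ1 s.hc0 s.hcM s.hμ hΛ s.hk hF (fun I => s.cd I p hD)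
      (fun I => s.heq I p hD) s.hKc (s.hV p hD) (s.hVh p hD) (s.hW p hD) hΛ1 hΛ2
    refine h.trans (neg_le_neg ?_)
    have hw : ∑ I, P.w l (φ I) p ^ 2 = (P.T p * P.G l (P.F p)) ^ 2 * ∑ I, φ I p ^ 2 := by
      rw [Finset.mul_sum]
      refine Finset.sum_congr rfl fun I _ => ?_
      unfold Par.w Par.wgt Par.m
      rw [P.et_one s.hk hF.le]; ring
    rw [hw]
    unfold bf
    have hG := P.G_mono hl0.le hμ0 hF.le
    have hG0 := P.G_pos l P.k2
    have hs : 0 ≤ ∑ I, φ I p ^ 2 := Finset.sum_nonneg fun I _ => sq_nonneg _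
    calc 1 / 8 * l ^ 2 * P.G l P.k2 ^ 2 * (P.e p ^ 2 * P.y p ^ 2 * P.T p ^ 2 * ∑ I, φ I p ^ 2)
        ≤ 1 / 8 * l ^ 2 * P.G l (P.F p) ^ 2 * (P.e p ^ 2 * P.y p ^ 2 * P.T p ^ 2 * ∑ I, φ I p ^ 2) := by
          gcongr
      _ = _ := by ring
  refine ⟨?_, top⟩
  by_cases hF : P.k2 < P.F p
  · refine (top hF).trans ?_
    have hb : 0 ≤ bf P φ p := by
      unfold bf
      have hs : 0 ≤ ∑ I, φ I p ^ 2 := Finset.sum_nonneg fun I _ => sq_nonneg _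
      positivity
    have h1 : 0 ≤ 1 / 8 * l ^ 2 * P.G l P.k2 ^ 2 * bf P φ p := by positivity
    have h2 : 0 ≤ P.G l P.k2 ^ 2 * (N * (2 * Ce ^ 2 * C2 ^ 2) * P.T p ^ (-(3 + 2 * g'))) := by positivity
    linarith
  · push Not at hF
    have hx := hE1 (P.F p) ⟨hp.2.1, hF⟩
    have hI : ∀ I, P.Err l (P.w l (φ I)) p * P.K (P.w l (φ I)) p - P.Bulk l (P.w l (φ I)) p ≤
        2 * (P.G l P.k2 ^ 2 * (Ce ^ 2 * (C2 ^ 2 * P.T p ^ (-(3 + 2 * g'))))) := by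
      intro I
      have hB := P.lemBp g hγ0.ne' s.H.γ1 s.hc0 s.hcM s.hμ hΛ (s.cd I p hD)
      have hE := P.Em_bd g I (s.heq I p hD) s.hKc (s.hV p hD) (s.hW p hD) (s.h0 p hD) (s.hd p hD)
        (s.hL p hD I) hl0.le hμ0 hF hx.1 hx.2
      have hE2 : P.Em l (φ I) p ^ 2 ≤ (P.G l P.k2 * (Ce * (C2 * P.T p ^ (-(3:ℝ)/2 - g')))) ^ 2 := by
        rw [← sq_abs (P.Em l (φ I) p)]
        gcongr
      rw [mul_pow, mul_pow, s.S2 hT] at hE2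
      have h3 : 2 * P.Em l (φ I) p ^ 2 / (l * P.e p) ≤ 2 * P.Em l (φ I) p ^ 2 :=
        div_le_self (by positivity) hΛone
      have hs2 := s2_nonneg (P.w l (φ I)) p
      have hy := g.y0
      have hee : 0 < P.e p := exp_pos _
      have h4 : 0 ≤ (1 / 2) * (l * P.e p) * P.X (P.w l (φ I)) p ^ 2
        + (1 / 16) * (P.y p * (P.T p)⁻¹) * pd 0 (P.w l (φ I)) p ^ 2
        + P.c * (P.T p)⁻¹ ^ 2 * s2 (P.w l (φ I)) p
        + (1 / 4) * (l * P.e p) ^ 2 * P.y p ^ 2 * P.w l (φ I) p ^ 2 := by positivity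
      linarith
    unfold DL
    refine (Finset.sum_le_sum fun I _ => hI I).trans ?_
    rw [Finset.sum_const, Finset.card_univ, Fintype.card_fin, nsmul_eq_mul]
    exact le_of_eq (by ring)

/-- boundary-flux bound -/
lemma flux (s : Sol P R₁ R₂ M Kc C2 g' V W φ) (l : ℝ) : ∃ CJ, 0 ≤ CJ ∧
    ∀ p ∈ P.SS R₁ (P.t0 R₁ R₂),
      -(CJ * P.T p ^ (1 - P.γ) * P.T p ^ (-(3 + 2 * g'))) ≤ ∑ I, P.J l (P.w l (φ I)) 0 p := by
  have hμ1 := s.hM.trans s.hμ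
  have hM1 := s.hM
  have hμ0 : 0 < P.μ := by linarith
  have hγ0 := s.H.γ0
  obtain ⟨Cm, hCm⟩ : ∃ Cm, ∀ x ∈ Icc P.k1 R₁, |P.m l x| ≤ Cm ∧ |P.m1 l x| ≤ Cm := by
    have c1 : Continuous (P.m l) := (P.m_cd l).continuous
    have c2 : Continuous (P.m1 l) := by
      have h : Differentiable ℝ (P.m1 l) := fun x => (P.hasDeriv_m1 l x hμ0.ne').differentiableAt
      exact h.continuous
    obtain ⟨B1, h1⟩ := (isCompact_Icc (a := P.k1) (b := R₁)).exists_bound_of_continuousOn c1.continuousOn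
    obtain ⟨B2, h2⟩ := (isCompact_Icc (a := P.k1) (b := R₁)).exists_bound_of_continuousOn c2.continuousOn
    exact ⟨max B1 B2, fun x hx => ⟨(h1 x hx).trans (le_max_left _ _), (h2 x hx).trans (le_max_right _ _)⟩⟩
  set E := exp (P.μ * R₁) with hE
  set Cq := 2 * M + M ^ 2 + 1 / 2 * l ^ 2 * E ^ 2 * M ^ 2 with hCq
  have hCq0 : 0 ≤ Cq := by positivity
  have hε := s.H.ε0
  refine ⟨N * (Cq * P.ε * (Cm * (1 + 2 * M)) ^ 2 * C2 ^ 2), by positivity, fun p hp => ?_⟩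
  have hpos := P.SS_pos s.H s.hk0 hp
  have hT := P.Tpos s.H hpos
  have hD := P.SS_sub s.H s.hk0 hp
  have g := s.geo p hp
  have hF : P.F p ≤ R₁ := by
    have h1 := P.F_le_a s.H hT
    have h2 := P.a_le s.H hpos hp.2.2
    linarith [s.H.σ0]
  have hx := hCm (P.F p) ⟨hp.2.1, hF⟩
  have hI : ∀ I, -((Cq * P.ε * (Cm * (1 + 2 * M)) ^ 2 * C2 ^ 2) * P.T p ^ (1 - P.γ) * P.T p ^ (-(3 + 2 * g'))) ≤ P.J l (P.w l (φ I)) 0 p := by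
    intro I
    have hw := P.w_bd g hγ0.ne' hμ0.ne' ((s.cd I p hD).differentiableAt (by norm_num)) (s.h0 p hD I) (s.hd p hD I)
      hx.1 hx.2
    have hee : P.e p ≤ E := by
      unfold Par.e; rw [hE]; gcongr
    have hJ := P.J0_bd (l := l) g hw.1 hw.2 hee
    refine le_of_eq_of_le ?_ hJ
    have e0 : (Cm * (1 + 2 * M) * (P.T p * (C2 * P.T p ^ (-(3:ℝ)/2 - g')))) ^ 2 =
        (Cm * (1 + 2 * M)) ^ 2 * (P.T p ^ 2 * (C2 ^ 2 * P.T p ^ (-(3 + 2 * g')))) := by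
      rw [← s.S2 hT]; ring
    rw [e0, ← hCq]
    have e1 : P.y p * P.T p ^ 2 = P.ε * P.T p ^ (1 - P.γ) := by
      unfold Par.y
      rw [← Real.rpow_natCast, mul_assoc, ← Real.rpow_add hT]
      congr 2; push_cast; ring
    have e2 : Cq * P.y p * ((Cm * (1 + 2 * M)) ^ 2 * (P.T p ^ 2 * (C2 ^ 2 * P.T p ^ (-(3 + 2 * g')))))
      = Cq * (P.y p * P.T p ^ 2) * ((Cm * (1 + 2 * M)) ^ 2 * ((C2 ^ 2 * P.T p ^ (-(3 + 2 * g'))))) := by ring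
    rw [e2, e1]; ring
  refine le_trans (le_of_eq ?_) (Finset.sum_le_sum fun I _ => hI I)
  rw [Finset.sum_const, Finset.card_univ, Fintype.card_fin, nsmul_eq_mul]
  ring

lemma w_off (s : Sol P R₁ R₂ M Kc C2 g' V W φ) (l : ℝ) {p : Spc} (hD : p ∈ DD R₁ R₂)
    (hp : p ∉ P.SS R₁ (P.t0 R₁ R₂)) (I : Fin N) : P.w l (φ I) =ᶠ[𝓝 p] fun _ => 0 := by
  have hpos := hD.1
  have hT := P.Tpos s.H hpos
  rcases P.not_SS s.H s.hk0 hpos hp with h | h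
  · filter_upwards [(P.F_cd hT).continuousAt.eventually (gt_mem_nhds h)] with q hq
    unfold Par.w Par.wgt Par.m
    rw [P.et_zero s.hk (le_of_lt hq)]; ring
  · have hc : Continuous fun q : Spc => rr q - q.1 := by
      have := rr_cont
      fun_prop
    filter_upwards [hc.continuousAt.eventually (lt_mem_nhds h), (DD_open R₁ R₂).mem_nhds hD] with q hq hqD
    unfold Par.w Par.wgt
    rw [s.van q hqD (le_of_lt hq) I]; ring

lemma J_zero {w : Spc → ℝ} {p : Spc} (l : ℝ) (h : w =ᶠ[𝓝 p] fun _ => 0) (α : Fin 4) : P.J l w α p = 0 := by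
  have h0 : w p = 0 := h.eq_of_nhds
  have h1 : ∀ α, pd α w p = 0 := fun α => by
    unfold pd; rw [h.fderiv_eq]; simp
  unfold Par.J Jc
  refine Fin.cases ?_ (fun i => ?_) α <;> simp [h0, h1, Lag, Xop]

def JS (P : Par) (φ : Fin N → Spc → ℝ) (l : ℝ) (α : Fin 4) (p : Spc) : ℝ := ∑ I, P.J l (P.w l (φ I)) α p

lemma JS_off (s : Sol P R₁ R₂ M Kc C2 g' V W φ) (l : ℝ) {p : Spc} (hD : p ∈ DD R₁ R₂)
    (hp : p ∉ P.SS R₁ (P.t0 R₁ R₂)) (α : Fin 4) : JS P φ l α p = 0 := by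
  unfold JS
  exact Finset.sum_eq_zero fun I _ => J_zero l (s.w_off l hD hp I) α

lemma JS_cd (s : Sol P R₁ R₂ M Kc C2 g' V W φ) (l : ℝ) {p : Spc} (hD : p ∈ DD R₁ R₂) (α : Fin 4) :
    ContDiffAt ℝ 1 (JS P φ l α) p := by
  unfold JS
  have hT := P.Tpos s.H hD.1
  exact ContDiffAt.sum fun I _ => P.J_cd l hT (P.w_cd l hT (s.cd I p hD)) α

def gR (P : Par) (φ : Fin N → Spc → ℝ) (l R : ℝ) (p : Spc) : ℝ :=
  ∑ α, pd α (fun p => chi R p.1 * JS P φ l α p) p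

lemma gR_int (s : Sol P R₁ R₂ M Kc C2 g' V W φ) (l : ℝ) {R : ℝ} (hR : 0 < R) :
    IntegrableOn (gR P φ l R) (DD R₁ R₂) ∧ ∫ p in DD R₁ R₂, gR P φ l R p = 0 := by
  refine lemA (DD R₁ R₂) _ (DD_open _ _) (P.SS_compact s.H s.hk0 (2 * R))
    (inter_subset_left.trans (P.SS_sub s.H s.hk0)) (fun α p => chi R p.1 * JS P φ l α p) ?_ ?_
  · intro α p hp
    refine ContDiffAt.contDiffWithinAt (ContDiffAt.mul ?_ (s.JS_cd l hp α))
    exact ((chi_cd R).comp contDiff_fst).contDiffAt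
  · intro α p hD hp
    by_cases h : p ∈ P.SS R₁ (P.t0 R₁ R₂)
    · have : 2 * R ≤ p.1 := by
        by_contra hh
        push Not at hh
        exact hp ⟨h, hh.le⟩
      simp only [chi_zero hR this, zero_mul]
    · simp only [s.JS_off l hD h α, mul_zero]

lemma gR_eq (s : Sol P R₁ R₂ M Kc C2 g' V W φ) (l : ℝ) (R : ℝ) {p : Spc} (hD : p ∈ DD R₁ R₂) :
    gR P φ l R p = chi R p.1 * DL P φ l p + deriv (chi R) p.1 * JS P φ l 0 p := by
  have hT := P.Tpos s.H hD.1
  have hJ : ∀ α, HP α (JS P φ l α) p (∑ I, pd α (P.J l (P.w l (φ I)) α) p) := by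
    intro α
    unfold JS
    exact HP_sumN fun I => HP.of_diff
      ((P.J_cd l hT (P.w_cd l hT (s.cd I p hD)) α).differentiableAt (by norm_num))
  have hchi : ∀ α, HP α (fun p : Spc => chi R p.1) p (deriv (chi R) p.1 * (eVec α).1) := by
    intro α
    exact (HP_t α p).comp (((chi_cd R).differentiable (by norm_num) p.1).hasDerivAt)
  have h : ∀ α, pd α (fun p => chi R p.1 * JS P φ l α p) p =
      chi R p.1 * (∑ I, pd α (P.J l (P.w l (φ I)) α) p) + deriv (chi R) p.1 * (eVec α).1 * JS P φ l α p := by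
    intro α
    rw [((hchi α).mul (hJ α)).2]; ring
  unfold gR DL
  rw [Finset.sum_congr rfl fun α _ => h α, Finset.sum_add_distrib, ← Finset.mul_sum, Finset.sum_comm]
  congr 1
  · congr 1
    exact Finset.sum_congr rfl fun I _ => P.divJ l s.H.γ0.ne' hT (P.w_cd l hT (s.cd I p hD))
  · rw [Fin.sum_univ_succ]
    simp [eVec_zero_fst, eVec_succ_fst]

lemma gR_off (s : Sol P R₁ R₂ M Kc C2 g' V W φ) (l : ℝ) (R : ℝ) {p : Spc} (hD : p ∈ DD R₁ R₂)
    (hp : p ∉ P.SS R₁ (P.t0 R₁ R₂)) : gR P φ l R p = 0 := by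
  unfold gR
  refine Finset.sum_eq_zero fun α _ => ?_
  have : (fun p : Spc => chi R p.1 * JS P φ l α p) =ᶠ[𝓝 p] fun _ => 0 := by
    filter_upwards [(DD_open R₁ R₂).mem_nhds hD, (P.SS_closed s.H s.hk0).isOpen_compl.mem_nhds hp] with q h1 h2
    rw [s.JS_off l h1 h2 α, mul_zero]
  unfold pd
  rw [this.fderiv_eq]; simp

end Sol
end PartP

section PartQ
namespace Sol
variable {N : ℕ} {P : Par} {R₁ R₂ M Kc C2 g' : ℝ} {V : Fin N → Fin N → Fin 4 → Spc → ℝ}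
    {W : Fin N → Fin N → Spc → ℝ} {φ : Fin N → Spc → ℝ}

lemma gR_le (s : Sol P R₁ R₂ M Kc C2 g' V W φ) {Cχ CJ A l R κ b0 : ℝ} {B : Set Spc}
    (hχ : ∀ R t : ℝ, 0 < R → 0 ≤ t →
      deriv (chi R) t ≤ 0 ∧ - deriv (chi R) t ≤ Cχ / R ∧ (2 * R < t → deriv (chi R) t = 0))
    (hCχ : 0 ≤ Cχ) (hCJ : 0 ≤ CJ) (hA : 0 ≤ A)
    (hJ : ∀ p ∈ P.SS R₁ (P.t0 R₁ R₂),
      -(CJ * P.T p ^ (1 - P.γ) * P.T p ^ (-(3 + 2 * g'))) ≤ ∑ I, P.J l (P.w l (φ I)) 0 p)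
    (hb : ∀ p ∈ P.SS R₁ (P.t0 R₁ R₂),
      (DL P φ l p ≤ P.G l P.k2 ^ 2 * (A * P.T p ^ (-(3 + 2 * g')))) ∧
      (P.k2 < P.F p → DL P φ l p ≤ - (1 / 8 * l ^ 2 * P.G l P.k2 ^ 2 * bf P φ p)))
    (hR : 0 < R) (hκ : κ = 1 / 8 * l ^ 2 * P.G l P.k2 ^ 2 * b0)
    (hB : ∀ p ∈ B, p ∈ P.SS R₁ (P.t0 R₁ R₂) ∧ P.k2 < P.F p ∧ b0 ≤ bf P φ p ∧ p.1 ≤ R)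
    {p : Spc} (hp : p ∈ DD R₁ R₂) :
    gR P φ l R p ≤ -(B.indicator (fun _ => κ) p) + (P.G l P.k2 ^ 2 * A +
      Cχ / R * (CJ * (2 * R + 1) ^ (1 - P.γ))) *
        (P.SS R₁ (P.t0 R₁ R₂)).indicator (fun p => P.T p ^ (-(3 + 2 * g'))) p := by
  by_cases hS : p ∈ P.SS R₁ (P.t0 R₁ R₂)
  · rw [s.gR_eq l R hp, indicator_of_mem hS]
    have hpos := P.SS_pos s.H s.hk0 hS
    have hT := P.Tpos s.H hpos
    obtain ⟨c1, c2, c3⟩ := hχ R p.1 hR hpos.le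
    have hJp := hJ p hS
    obtain ⟨b1, b2⟩ := hb p hS
    have hTs : 0 < P.T p ^ (-(3 + 2 * g')) := by positivity
    have hA0 : 0 ≤ P.G l P.k2 ^ 2 * (A * P.T p ^ (-(3 + 2 * g'))) := by positivity
    have hflux : deriv (chi R) p.1 * JS P φ l 0 p ≤
        Cχ / R * (CJ * (2 * R + 1) ^ (1 - P.γ)) * P.T p ^ (-(3 + 2 * g')) := by
      by_cases ht : 2 * R < p.1
      · rw [c3 ht, zero_mul]; positivity
      · push Not at ht
        have hTR : P.T p ≤ 2 * R + 1 := by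
          have := s.H.σ1
          unfold Par.T; linarith
        have hγ : 0 ≤ 1 - P.γ := by linarith [s.H.γ1]
        have h1 : (-deriv (chi R) p.1) * (-(JS P φ l 0 p)) ≤
            (-deriv (chi R) p.1) * (CJ * P.T p ^ (1 - P.γ) * P.T p ^ (-(3 + 2 * g'))) := by
          apply mul_le_mul_of_nonneg_left _ (by linarith)
          unfold JS; linarith
        have h2 : (-deriv (chi R) p.1) * (CJ * P.T p ^ (1 - P.γ) * P.T p ^ (-(3 + 2 * g'))) ≤
            Cχ / R * (CJ * (2 * R + 1) ^ (1 - P.γ) * P.T p ^ (-(3 + 2 * g'))) := by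
          gcongr
        linarith
    have hbulk : chi R p.1 * DL P φ l p ≤ -(B.indicator (fun _ => κ) p)
        + P.G l P.k2 ^ 2 * (A * P.T p ^ (-(3 + 2 * g'))) := by
      by_cases hpB : p ∈ B
      · obtain ⟨_, d2, d3, d4⟩ := hB p hpB
        rw [indicator_of_mem hpB, chi_one hR d4, one_mul]
        have h3 := b2 d2
        have h4 : κ ≤ 1 / 8 * l ^ 2 * P.G l P.k2 ^ 2 * bf P φ p := by
          rw [hκ]; gcongr
        linarith
      · rw [indicator_of_notMem hpB, neg_zero, zero_add]
        calc chi R p.1 * DL P φ l p ≤ chi R p.1 * (P.G l P.k2 ^ 2 * (A * P.T p ^ (-(3 + 2 * g')))) :=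
              mul_le_mul_of_nonneg_left b1 (chi_nonneg _ _)
          _ ≤ 1 * (P.G l P.k2 ^ 2 * (A * P.T p ^ (-(3 + 2 * g')))) :=
              mul_le_mul_of_nonneg_right (chi_le_one _ _) hA0
          _ = _ := one_mul _
    linarith
  · have hpB : p ∉ B := fun h => hS (hB p h).1
    rw [s.gR_off l R hp hS, indicator_of_notMem hS, indicator_of_notMem hpB]
    simp

lemma contra (s : Sol P R₁ R₂ M Kc C2 g' V W φ) {p0 : Spc} (hp0 : p0 ∈ DD R₁ R₂) (hF0 : P.k2 < P.F p0)
    {I0 : Fin N} (hφ0 : φ I0 p0 ≠ 0) : False := by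
  have hT0 := P.Tpos s.H hp0.1
  have hr0 : rr p0 - p0.1 < R₁ := by
    by_contra hh
    push Not at hh
    exact hφ0 (s.van p0 hp0 hh I0)
  have hbpos : 0 < bf P φ p0 := by
    unfold bf
    have h1 : 0 < ∑ I, φ I p0 ^ 2 :=
      Finset.sum_pos' (fun I _ => sq_nonneg _) ⟨I0, Finset.mem_univ _, by positivity⟩
    have h2 : 0 < P.e p0 := exp_pos _
    have h3 : 0 < P.y p0 := by
      unfold Par.y
      have := s.H.ε0
      positivity
    positivity
  have hbc : ContinuousAt (bf P φ) p0 := by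
    unfold bf
    refine ((((P.e_cd hT0).continuousAt.pow 2).mul ((P.y_cd hT0).continuousAt.pow 2)).mul
      (P.T_cd.continuousAt.pow 2)).mul (tendsto_finsetSum _ fun I _ => ((s.cd I p0 hp0).continuousAt.pow 2))
  set b0 := bf P φ p0 / 2 with hb0
  have hb00 : 0 < b0 := by positivity
  have hrc : Continuous fun q : Spc => rr q - q.1 := by
    have := rr_cont
    fun_prop
  have hU : {p : Spc | p ∈ DD R₁ R₂ ∧ P.k2 < P.F p ∧ rr p - p.1 < R₁ ∧ b0 < bf P φ p} ∈ 𝓝 p0 := by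
    filter_upwards [(DD_open R₁ R₂).mem_nhds hp0, (P.F_cd hT0).continuousAt.eventually (lt_mem_nhds hF0),
      hrc.continuousAt.eventually (gt_mem_nhds hr0),
      hbc.eventually (lt_mem_nhds (show b0 < bf P φ p0 by rw [hb0]; linarith))] with q h1 h2 h3 h4
    exact ⟨h1, h2, h3, h4⟩
  obtain ⟨ρ, hρ, hBU⟩ := Metric.nhds_basis_closedBall.mem_iff.1 hU
  set B := Metric.closedBall p0 ρ with hBdef
  have hBS : ∀ p ∈ B, p ∈ P.SS R₁ (P.t0 R₁ R₂) := fun p hp => by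
    obtain ⟨h1, h2, h3, h4⟩ := hBU hp
    have h5 : P.k1 ≤ P.F p := by linarith [s.hk]
    exact ⟨P.t_lb s.H s.hk0 h1.1 h3.le h5, h5, h3.le⟩
  have hBc : IsCompact B := isCompact_closedBall _ _
  haveI : (volume : Measure Spc).IsAddHaarMeasure := by
    rw [Measure.volume_eq_prod]; infer_instance
  have hBf : volume B ≠ ⊤ := hBc.measure_lt_top.ne
  have hBv : 0 < volume.real B := ENNReal.toReal_pos (Metric.measure_closedBall_pos _ _ hρ).ne' hBf
  obtain ⟨Cχ, hCχ, hχ⟩ := chi_ex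
  obtain ⟨A, l0, hA, hl0, hb⟩ := s.bulk
  have hγ0 := s.H.γ0
  have hγ1 : P.γ < 1 := by linarith [s.H.γ1]
  have hWi := P.int_wt s.H s.hk0 s.hc0 s.hc1 (3 + 2 * g') (by linarith [s.hg'])
  set Iw := ∫ p in DD R₁ R₂, (P.SS R₁ (P.t0 R₁ R₂)).indicator (fun p => P.T p ^ (-(3 + 2 * g'))) p with hIw
  have key : ∀ l, l0 ≤ l → 1 / 8 * l ^ 2 * b0 * volume.real B ≤ A * Iw := by
    intro l hl
    obtain ⟨CJ, hCJ, hJ⟩ := s.flux l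
    have h := limit_arg (D := DD R₁ R₂) (B := B) (κ := 1 / 8 * l ^ 2 * P.G l P.k2 ^ 2 * b0)
      (A := P.G l P.k2 ^ 2 * A) (R0 := max 1 (p0.1 + ρ)) hBc.measurableSet
      (fun p hp => (hBU hp).1) hBf (gR P φ l) _ _ (delta_lim Cχ CJ P.γ hγ0 hγ1) hWi
      (DD_open _ _).measurableSet
      (fun R hR => s.gR_int l (by linarith [(le_max_left _ _).trans hR]))
      (fun R hR p hp => s.gR_le hχ hCχ hCJ hA hJ (hb l hl)
        (by linarith [(le_max_left _ _).trans hR]) rfl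
        (fun q hq => ⟨hBS q hq, (hBU hq).2.1, (hBU hq).2.2.2.le, by
          have h1 := (le_max_right _ _).trans hR
          have h2 : dist q p0 ≤ ρ := hq
          have h3 : |q.1 - p0.1| ≤ dist q p0 := by
            rw [← Real.dist_eq]; exact le_max_left _ _
          linarith [(abs_le.1 (h3.trans h2)).2]⟩) hp)
    have hG : 0 < P.G l P.k2 ^ 2 := pow_pos (P.G_pos _ _) 2
    have h' : P.G l P.k2 ^ 2 * (1 / 8 * l ^ 2 * b0 * volume.real B) ≤ P.G l P.k2 ^ 2 * (A * Iw) := by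
      rw [hIw]; linarith
    exact le_of_mul_le_mul_left h' hG
  have hv : 0 < b0 * volume.real B := by positivity
  set l := max l0 (max 1 (8 * (A * Iw) / (b0 * volume.real B) + 1)) with hl
  have h1 := key l (le_max_left _ _)
  have h2 : 1 ≤ l := (le_max_left _ _).trans (le_max_right _ _)
  have h3 : 8 * (A * Iw) / (b0 * volume.real B) + 1 ≤ l := (le_max_right _ _).trans (le_max_right _ _)
  have h4 : 8 * (A * Iw) / (b0 * volume.real B) < l := by linarith
  rw [div_lt_iff₀ hv] at h4
  have h5 : l * (b0 * volume.real B) ≤ l ^ 2 * (b0 * volume.real B) := by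
    gcongr
    nlinarith
  linarith
end Sol
end PartQ

section PartR
lemma le_sum1 {n : ℕ} (f : Fin n → ℝ) (hf : ∀ i, 0 ≤ f i) (i : Fin n) : f i ≤ ∑ i, f i :=
  Finset.single_le_sum (f := f) (fun i _ => hf i) (Finset.mem_univ i)

lemma le_sum2 {n k : ℕ} (f : Fin n → Fin k → ℝ) (hf : ∀ i j, 0 ≤ f i j) (i : Fin n) (j : Fin k) :
    f i j ≤ ∑ i, ∑ j, f i j :=
  (le_sum1 (f i) (hf i) j).trans
    (le_sum1 (fun i => ∑ j, f i j) (fun i => Finset.sum_nonneg fun j _ => hf i j) i)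

lemma rpow_le_T {z T s s' : ℝ} (hT : 0 < T) (hz1 : 1 ≤ z) (hTz : T ≤ z) (hss : s ≤ s') (hs : s' ≤ 0) :
    z ^ s ≤ T ^ s' :=
  (Real.rpow_le_rpow_of_exponent_le hz1 hss).trans (Real.rpow_le_rpow_of_nonpos hT hTz hs)

lemma exists_par {R₁ R₂ γ : ℝ} (hR₁ : 0 < R₁) (hR₂ : |R₂| < R₁) (hγ0 : 0 < γ) (hγ1 : γ ≤ 1 / 2)
    {p0 : Spc} (hp0 : p0 ∈ DD R₁ R₂) : ∃ σ d ε k1 k2 : ℝ, ParOK σ d ε γ R₁ R₂ ∧ R₂ < k1 ∧ k1 < k2 ∧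
      ∀ c μ, k2 < (Par.mk σ d ε γ c μ k1 k2).F p0 := by
  obtain ⟨ht, hq⟩ := DD_iff.1 hp0
  obtain ⟨hl, hu⟩ := abs_lt.1 hR₂
  set q := rr p0 ^ 2 - p0.1 ^ 2 - 2 * p0.1 * R₂ - R₁ ^ 2 with hqd
  obtain ⟨σ, hσ0, hσ1, hσq, hσR⟩ : ∃ σ : ℝ, 0 < σ ∧ σ ≤ 1 ∧ σ ≤ q / (4 * p0.1) ∧ σ ≤ (R₁ - R₂) / 2 := by
    refine ⟨min 1 (min (q / (4 * p0.1)) ((R₁ - R₂) / 2)), ?_, min_le_left _ _,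
      (min_le_right _ _).trans (min_le_left _ _), (min_le_right _ _).trans (min_le_right _ _)⟩
    have : 0 < (R₁ - R₂) / 2 := by linarith
    exact lt_min one_pos (lt_min (by positivity) this)
  have hσq' : 4 * p0.1 * σ ≤ q := by
    rw [le_div_iff₀ (by positivity)] at hσq
    linarith
  set d := R₁ ^ 2 - σ ^ 2 - 2 * σ * R₂ with hd
  set T := p0.1 + σ with hT
  have hT0 : 0 < T := by positivity
  set a0 := (rho p0 - T ^ 2 - d) * (2 * T)⁻¹ with ha0
  have ha : 2 * T * (a0 - R₂) = q - 2 * σ * p0.1 := by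
    have : 2 * T * a0 = rho p0 - T ^ 2 - d := by rw [ha0]; field_simp
    rw [mul_sub, this, rho_eq, hqd, hd, hT]; ring
  have ha1 : 0 < a0 - R₂ := by
    have h1 : 0 < 2 * T * (a0 - R₂) := by
      rw [ha]
      have : 0 < σ * p0.1 := by positivity
      linarith
    exact pos_of_mul_pos_right h1 (by positivity)
  set m := min (2 * σ * (R₁ - σ - R₂)) (R₁ ^ 2 - (σ + R₂) ^ 2) with hm
  have hm0 : 0 < m := by
    refine lt_min ?_ ?_
    · have : 0 < R₁ - σ - R₂ := by linarith
      positivity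
    · have : 0 < (R₁ - (σ + R₂)) * (R₁ + (σ + R₂)) := mul_pos (by linarith) (by linarith)
      linarith
  obtain ⟨ε, hε0, hε1, hε2, hε3⟩ : ∃ ε : ℝ, 0 < ε ∧ ε ≤ σ ^ (1 + γ) ∧ ε ≤ m / (2 * R₁ * σ ^ (-γ)) ∧
      ε ≤ ((a0 - R₂) / 2) * γ / T ^ (-γ) := by
    refine ⟨min (σ ^ (1 + γ)) (min (m / (2 * R₁ * σ ^ (-γ))) (((a0 - R₂) / 2) * γ / T ^ (-γ))), ?_,
      min_le_left _ _,
      (min_le_right _ _).trans (min_le_left _ _), (min_le_right _ _).trans (min_le_right _ _)⟩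
    exact lt_min (by positivity) (lt_min (by positivity) (by positivity))
  refine ⟨σ, d, ε, R₂ + (a0 - R₂) / 6, R₂ + (a0 - R₂) / 3, ?_, by linarith, by linarith, ?_⟩
  · refine ⟨hσ0, hσ1, rfl, hR₁, hl, by linarith, hγ0, hγ1, hε0, hε1, ?_⟩
    rw [le_div_iff₀ (by positivity)] at hε2
    linarith
  · intro c μ
    show R₂ + (a0 - R₂) / 3 < a0 - ε / γ * T ^ (-γ)
    rw [le_div_iff₀ (by positivity)] at hε3
    have : ε / γ * T ^ (-γ) ≤ (a0 - R₂) / 2 := by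
      rw [div_mul_eq_mul_div, div_le_iff₀ hγ0]
      exact hε3
    linarith
end PartR

/-- Theorem 1.2 of the paper: unique continuation from the exterior
of a hyperboloid for the linear operator `□̃`. -/
theorem stmt2 {N : ℕ} (R₁ R₂ γ γ' C₁ C₂ : ℝ)
    (hR₁ : 0 < R₁) (hR₂ : |R₂| < R₁)
    (hγ0 : 0 < γ) (hγ1 : γ ≤ 1) (hγ' : 0 < γ') (hC₁ : 0 < C₁) (hC₂ : 0 < C₂)
    (V : Fin N → Fin N → Fin 4 → Spc → ℝ) (W : Fin N → Fin N → Spc → ℝ)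
    (hVcont : ∀ I J α, ContinuousOn (V I J α) (DD R₁ R₂))
    (hWcont : ∀ I J, ContinuousOn (W I J) (DD R₁ R₂))
    (hV1 : ∀ p ∈ DD R₁ R₂,
      (∑ I : Fin N, ∑ J : Fin N, ∑ α : Fin 4, |V I J α p|)
        ≤ C₁ * (1 + p.1 + rr p) ^ (-1 : ℝ))
    (hVW2 : ∀ p ∈ DD R₁ R₂,
      (∑ I : Fin N, ∑ J : Fin N, |∑ α : Fin 4, V I J α p * hatom p α|)
        + (∑ I : Fin N, ∑ J : Fin N, |W I J p|)
        ≤ C₁ * (1 + p.1 + rr p) ^ (-1 - γ))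
    (φ : Fin N → Spc → ℝ)
    (hφ : ∀ I, ContDiffOn ℝ 2 (φ I) (DD R₁ R₂))
    (heq : ∀ p ∈ DD R₁ R₂, ∀ I, boxT V W φ I p = 0)
    (hvan : ∀ p ∈ DD R₁ R₂, R₁ ≤ rr p - p.1 → ∀ I, φ I p = 0)
    (hdec1 : ∀ p ∈ DD R₁ R₂,
      (∑ I : Fin N, |φ I p|) + (∑ I : Fin N, ∑ α : Fin 4, |pd α (φ I) p|)
        ≤ C₂ * (1 + p.1 + rr p) ^ (-(3 : ℝ) / 2 - γ'))
    (hdec2 : ∀ p ∈ DD R₁ R₂,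
      (∑ I : Fin N, |dt (φ I) p + dr (φ I) p|)
        ≤ C₂ * (1 + p.1 + rr p) ^ (-(5 : ℝ) / 2 - γ')) :
    ∀ p ∈ DD R₁ R₂, ∀ I, φ I p = 0 := by
  intro p0 hp0 I0
  by_contra hφ0
  have hG0 : 0 < min γ (1 / 2) := lt_min hγ0 (by norm_num)
  obtain ⟨σ, d, ε, k1, k2, H, hk0, hk, hF⟩ :=
    exists_par hR₁ hR₂ hG0 (min_le_right _ _) hp0
  obtain ⟨M, hM⟩ := exists_geo H
  have hr0 : rr p0 - p0.1 < R₁ := by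
    by_contra hh
    push Not at hh
    exact hφ0 (hvan p0 hp0 hh I0)
  have hM1 : 1 ≤ M := by
    have hpt := (Par.mk σ d ε (min γ (1 / 2)) 1 1 k1 k2).Pt_of H hk0 one_pos le_rfl hp0.1
      (hk.le.trans (hF 1 1).le) hr0.le
    exact (hM _ _ _ _ _ hpt).M1
  set P := Par.mk σ d ε (min γ (1 / 2)) (1 / (16 * M ^ 4)) M k1 k2 with hP
  have hM4 : 1 ≤ M ^ 4 := one_le_pow₀ hM1
  have hc0 : 0 < P.c := by show 0 < 1 / (16 * M ^ 4); positivity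
  have hc1 : P.c ≤ 1 := by
    show 1 / (16 * M ^ 4) ≤ 1
    rw [div_le_one (by positivity)]; linarith
  have hε : 0 < ε := H.ε0
  have hσ1 : σ ≤ 1 := H.σ1
  have hTb : ∀ p ∈ DD R₁ R₂, 0 < P.T p ∧ 1 ≤ 1 + p.1 + rr p ∧ P.T p ≤ 1 + p.1 + rr p := by
    intro p hp
    have h1 : 0 ≤ rr p := norm_nonneg _
    have h2 : 0 < p.1 := hp.1
    refine ⟨P.Tpos H h2, by linarith, ?_⟩
    show p.1 + σ ≤ _
    linarith
  have hy : ∀ p ∈ DD R₁ R₂, C₁ * (1 + p.1 + rr p) ^ (-1 - γ) ≤ (C₁ + C₁ / ε) * P.y p := by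
    intro p hp
    obtain ⟨h1, h2, h3⟩ := hTb p hp
    have h4 : (1 + p.1 + rr p) ^ (-1 - γ) ≤ P.T p ^ (-1 - min γ (1 / 2)) :=
      rpow_le_T h1 h2 h3 (by linarith [min_le_left γ (1 / 2)]) (by linarith)
    have h5 : P.y p = ε * P.T p ^ (-1 - min γ (1 / 2)) := rfl
    have h6 : 0 < P.T p ^ (-1 - min γ (1 / 2)) := by positivity
    rw [h5]
    calc C₁ * (1 + p.1 + rr p) ^ (-1 - γ) ≤ C₁ * P.T p ^ (-1 - min γ (1 / 2)) := by gcongr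
      _ = (C₁ / ε) * (ε * P.T p ^ (-1 - min γ (1 / 2))) := by field_simp
      _ ≤ _ := by gcongr; linarith
  have hS : ∀ p ∈ DD R₁ R₂, C₂ * (1 + p.1 + rr p) ^ (-(3 : ℝ) / 2 - γ') ≤
      C₂ * P.T p ^ (-(3 : ℝ) / 2 - γ') := by
    intro p hp
    obtain ⟨h1, h2, h3⟩ := hTb p hp
    have := rpow_le_T h1 h2 h3 (le_refl (-(3 : ℝ) / 2 - γ')) (by linarith)
    gcongr
  have s : Sol P R₁ R₂ M (C₁ + C₁ / ε) C₂ γ' V W φ := by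
    refine ⟨H, hk0, hk, hc0, hc1, ?_, hM1, le_rfl, hγ', ?_, ?_, fun I p hp => heq p hp I, hvan,
      by positivity, hC₂.le, ?_, ?_, ?_, ?_, ?_, ?_⟩
    · show 1 / (16 * M ^ 4) * (16 * M ^ 4) ≤ 1
      rw [one_div_mul_cancel (by positivity)]
    · intro p hp
      exact P.geoP_of hM (P.Pt_of H hk0 hc0 hc1 (P.SS_pos H hk0 hp) hp.2.1 hp.2.2)
    · intro I p hp
      exact (hφ I).contDiffAt ((DD_open R₁ R₂).mem_nhds hp)
    · intro p hp I J α
      obtain ⟨h1, h2, h3⟩ := hTb p hp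
      have e1 : |V I J α p| ≤ ∑ I, ∑ J, ∑ α, |V I J α p| :=
        (le_sum1 (fun α => |V I J α p|) (fun _ => abs_nonneg _) α).trans
          (le_sum2 (fun I J => ∑ α, |V I J α p|)
            (fun _ _ => Finset.sum_nonneg fun _ _ => abs_nonneg _) I J)
      refine e1.trans ((hV1 p hp).trans ?_)
      rw [Real.rpow_neg_one]
      have : C₁ ≤ C₁ + C₁ / ε := by
        have : 0 < C₁ / ε := by positivity
        linarith
      gcongr
    · intro p hp I J
      have e1 := le_sum2 (fun I J => |∑ α : Fin 4, V I J α p * hatom p α|) (fun _ _ => abs_nonneg _) I J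
      have e2 : 0 ≤ ∑ I : Fin N, ∑ J : Fin N, |W I J p| :=
        Finset.sum_nonneg fun _ _ => Finset.sum_nonneg fun _ _ => abs_nonneg _
      exact le_trans (by linarith) ((hVW2 p hp).trans (hy p hp))
    · intro p hp I J
      have e1 := le_sum2 (fun I J => |W I J p|) (fun _ _ => abs_nonneg _) I J
      have e2 : 0 ≤ ∑ I : Fin N, ∑ J : Fin N, |∑ α : Fin 4, V I J α p * hatom p α| :=
        Finset.sum_nonneg fun _ _ => Finset.sum_nonneg fun _ _ => abs_nonneg _
      exact le_trans (by linarith) ((hVW2 p hp).trans (hy p hp))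
    · intro p hp J
      have e1 := le_sum1 (fun I => |φ I p|) (fun _ => abs_nonneg _) J
      have e2 : 0 ≤ ∑ I : Fin N, ∑ α : Fin 4, |pd α (φ I) p| :=
        Finset.sum_nonneg fun _ _ => Finset.sum_nonneg fun _ _ => abs_nonneg _
      exact le_trans (by linarith) ((hdec1 p hp).trans (hS p hp))
    · intro p hp J α
      have e1 := le_sum2 (fun I α => |pd α (φ I) p|) (fun _ _ => abs_nonneg _) J α
      have e2 : 0 ≤ ∑ I : Fin N, |φ I p| := Finset.sum_nonneg fun _ _ => abs_nonneg _
      exact le_trans (by linarith) ((hdec1 p hp).trans (hS p hp))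
    · intro p hp J
      obtain ⟨h1, h2, h3⟩ := hTb p hp
      have e1 := le_sum1 (fun I => |dt (φ I) p + dr (φ I) p|) (fun _ => abs_nonneg _) J
      refine e1.trans ((hdec2 p hp).trans ?_)
      have e3 : (P.T p)⁻¹ * (C₂ * P.T p ^ (-(3 : ℝ) / 2 - γ')) = C₂ * P.T p ^ (-(5 : ℝ) / 2 - γ') := by
        rw [← Real.rpow_neg_one, mul_left_comm, ← Real.rpow_add h1]
        congr 2; ring
      rw [e3]
      have := rpow_le_T h1 h2 h3 (le_refl (-(5 : ℝ) / 2 - γ')) (by linarith)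
      gcongr
  exact s.contra hp0 (hF _ _) hφ0

end UCP
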